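/- arXiv:2604.13967 — 4 statements merged into one kernel-verified Lean document; each statement's English description precedes it below -/
import Mathlib

section
/- Let q = 2^m where m ≥ 4 is an even integer, let F(x) = x^{3q-2} be the power function over F_{q^2}, and for b ∈ F_{q^2} let δ(1, b) denote the number of x ∈ F_{q^2} with F(x + 1) + F(x) = b. Let τ_m be the rational sequence defined by τ_1 = 1/2, τ_2 = -7/4, and τ_m = (1/2)τ_{m-1} - τ_{m-2} for m ≥ 3, and for each nonnegative integer i let ω_i denote the number of b ∈ F_{q^2} with δ(1, b) = i. Then ω_0 = (5q^2 + (4 - τ_m)q - 7)/8, ω_2 = (q^2 + (τ_m - 2)q - 1)/4, ω_4 = (q^2 - τ_m·q + 1)/8, ω_q = 1, and ω_i = 0 for every other i. -/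
/-!
Write `x̄ = x ^ q` and `D(x) = (x + 1) ^ (3q - 2) + x ^ (3q - 2)`, let `F ⊆ K` be the subfield of
order `q` and `U` the group of elements of `K` of norm one.

On `F` the power map is the identity, so `D = 1` there. A point `x` outside `F` is determined by
`a = x̄ / x` and `b = (x̄ + 1) / (x + 1)`, which can be any two distinct elements of `U \ {1}`, and
`D(x) = 1 + (1 + a)(1 + b)(1 + a + b)`. As `m` is even, the primitive cube roots of unity lie in `F`
and hence not in `U`, so no three elements of `U` add up to `0`. It follows that `D(x) = 1` exactly
on `F`. If `(a, b)` and `(c, d)` have the same value and differ by more than the order of their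
entries, then `a + b + c + d ∈ U`. A third such pair would give three elements of `U` with sum `0`,
so every fibre of `D` other than that of `1` has `0`, `2` or `4` elements.

Dividing by `a + b + c + d` turns such collisions into the quadruples in `U ^ 4` with sum `1`. Hence
`8 ω₄` is the number of these quadruples, which a character sum computation shows to be
`(q + 1)² - Kl(w)²`, where `w` is a primitive cube root of unity and `Kl(w) = ∑ χ(x + w / x)` is a
Kloosterman sum. Together with `ω₀ + ω₂ + ω₄ + 1 = q²` and `2 ω₂ + 4 ω₄ = q² - q` this determines
the spectrum in terms of `Kl(w)`.

Finally `w` lies in the field with four elements, over which the `L`-function of the Kloosterman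
sum is `1 - T + 4 T²`. So for `q = 4 ^ n`, `-Kl(w)` is the sum of the `n`-th powers of the
reciprocal roots, a Dickson polynomial value equal to `2 ^ n τ_n`, and `τ_{2n} = τ_n² - 2` gives
`Kl(w)² = q (τ_m + 2)`.
-/

namespace Niho

open Finset Polynomial

/-! ### Kloosterman sums -/

section Kloosterman

theorem sum_eq_add_sum_units {G M : Type*} [GroupWithZero G] [Fintype G] [DecidableEq G]
    [AddCommMonoid M] (f : G → M) : ∑ x, f x = f 0 + ∑ x : Gˣ, f x := by
  rw [Fintype.sum_eq_add_sum_subtype_ne f 0]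
  exact congrArg _ (unitsEquivNeZero.sum_comp fun x : {x : G // x ≠ 0} ↦ f x).symm

variable {F R : Type*} [Field F] [Fintype F] [DecidableEq F] [CommRing R]

/-- The Kloosterman sum `∑ ψ(x + a / x)` over the nonzero elements `x` of a finite field. -/
def kloostermanSum (ψ : AddChar F R) (a : F) : R :=
  ∑ x : Fˣ, ψ (x + a * (x : F)⁻¹)

theorem sum_units_add_mul_inv (ψ : AddChar F R) {a b : F} (h : a ≠ 0 ∨ b ≠ 0) :
    ∑ x : Fˣ, ψ (a * x + b * (x : F)⁻¹) = kloostermanSum ψ (a * b) := by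
  have of_left_ne_zero : ∀ {a b : F}, a ≠ 0 →
      ∑ x : Fˣ, ψ (a * x + b * (x : F)⁻¹) = kloostermanSum ψ (a * b) := by
    intro a b ha
    refine Fintype.sum_equiv (Equiv.mulLeft (Units.mk0 a ha)) _ _ fun x ↦ congrArg ψ ?_
    rw [Equiv.coe_mulLeft, Units.val_mul, Units.val_mk0]
    field_simp
  rcases h with ha | hb
  · exact of_left_ne_zero ha
  · rw [mul_comm, ← of_left_ne_zero hb, ← Equiv.sum_comp (Equiv.inv Fˣ)]
    exact sum_congr rfl fun x _ ↦ congrArg ψ (by simp [add_comm])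

variable [IsDomain R] {ψ : AddChar F R}

omit [DecidableEq F] in
theorem sum_addChar_mul_right (hψ : ψ ≠ 1) {a : F} (ha : a ≠ 0) : ∑ x, ψ (x * a) = 0 := by
  classical
  rw [AddChar.sum_mulShift a (AddChar.IsPrimitive.of_ne_one hψ), if_neg ha, Nat.cast_zero]

theorem sum_units_addChar_mul_right (hψ : ψ ≠ 1) {a : F} (ha : a ≠ 0) :
    ∑ x : Fˣ, ψ (x * a) = -1 := by
  have := sum_addChar_mul_right hψ ha
  rw [sum_eq_add_sum_units, zero_mul, AddChar.map_zero_eq_one] at this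
  linear_combination this

theorem sum_kloostermanSum (hψ : ψ ≠ 1) : ∑ a, kloostermanSum ψ a = 0 := by
  simp_rw [kloostermanSum, AddChar.map_add_eq_mul]
  rw [sum_comm]
  refine sum_eq_zero fun x _ ↦ ?_
  rw [← mul_sum, sum_addChar_mul_right hψ (inv_ne_zero x.ne_zero), mul_zero]

end Kloosterman

/-! ### Multiplicative functions on monic polynomials over a finite field -/

section LFunction

variable {k : Type*} [Field k]

open UniqueFactorizationMonoid in
theorem pow_dvd_iff_le_count_normalizedFactors [DecidableEq k] {f P : k[X]} (hf : f ≠ 0)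
    (hP : P.Monic) (hPi : Irreducible P) {i : ℕ} :
    P ^ i ∣ f ↔ i ≤ (normalizedFactors f).count P := by
  rw [pow_dvd_iff_le_emultiplicity, emultiplicity_eq_count_normalizedFactors hPi hf,
    hP.normalize_eq_self, Nat.cast_le]

open UniqueFactorizationMonoid in
theorem monic_of_mem_normalizedFactors [DecidableEq k] {f P : k[X]}
    (hP : P ∈ normalizedFactors f) : P.Monic :=
  normalize_normalized_factor P hP ▸ monic_normalize (irreducible_of_normalized_factor P hP).ne_zero

open Classical UniqueFactorizationMonoid in
/-- The prime powers `P ^ i` dividing `f`, encoded as the pairs `(P, i)` with `P` monic irreducible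
and `i ≠ 0`. -/
noncomputable def primePowDivisors (f : k[X]) : Finset (Σ _ : k[X], ℕ) :=
  (normalizedFactors f).toFinset.sigma fun P ↦ Icc 1 ((normalizedFactors f).count P)

open UniqueFactorizationMonoid in
theorem mem_primePowDivisors {f P : k[X]} (hf : f ≠ 0) {i : ℕ} :
    ⟨P, i⟩ ∈ primePowDivisors f ↔ P.Monic ∧ Irreducible P ∧ i ≠ 0 ∧ P ^ i ∣ f := by
  classical
  simp only [primePowDivisors, mem_sigma, Multiset.mem_toFinset, mem_Icc, Nat.one_le_iff_ne_zero]
  refine ⟨fun ⟨hP, hi, hle⟩ ↦ ?_, fun ⟨hPm, hPi, hi, hdvd⟩ ↦ ?_⟩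
  · have hPm := monic_of_mem_normalizedFactors hP
    have hPi := irreducible_of_normalized_factor P hP
    exact ⟨hPm, hPi, hi, (pow_dvd_iff_le_count_normalizedFactors hf hPm hPi).2 hle⟩
  · have hle := (pow_dvd_iff_le_count_normalizedFactors hf hPm hPi).1 hdvd
    exact ⟨Multiset.count_pos.1 ((Nat.pos_of_ne_zero hi).trans_le hle), hi, hle⟩

open UniqueFactorizationMonoid in
theorem sum_natDegree_primePowDivisors {f : k[X]} (hf : f.Monic) :
    ∑ x ∈ primePowDivisors f, x.1.natDegree = f.natDegree := by
  classical
  conv_rhs => rw [← hf.normalize_eq_self, ← prod_normalizedFactors_eq hf.ne_zero,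
    natDegree_multiset_prod_of_monic _ fun P ↦ monic_of_mem_normalizedFactors,
    sum_multiset_map_count]
  simp [primePowDivisors, sum_sigma]

variable (k) [Fintype k]

/-- The monic polynomials of degree `d`, the analogues of the positive integers of a given size. -/
noncomputable def monics (d : ℕ) : Finset k[X] :=
  univ.map (((monicEquivDegreeLT d).trans (degreeLTEquiv k d).toEquiv).symm.toEmbedding.trans
    (.subtype _))

open Classical in
/-- The monic irreducible polynomials of degree `d`, the analogues of the prime numbers. -/
noncomputable def monicIrreducibles (d : ℕ) : Finset k[X] :=
  {P ∈ monics k d | Irreducible P}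

variable {k} {d : ℕ}

theorem mem_monics {f : k[X]} : f ∈ monics k d ↔ f.Monic ∧ f.natDegree = d := by
  simp only [monics, mem_map, mem_univ, true_and, Function.Embedding.trans_apply,
    Equiv.coe_toEmbedding, Function.Embedding.subtype_apply]
  exact ⟨fun ⟨v, hv⟩ ↦ hv ▸ (((monicEquivDegreeLT d).trans _).symm v).2,
    fun h ↦ ⟨(monicEquivDegreeLT d).trans (degreeLTEquiv k d).toEquiv ⟨f, h⟩, by simp⟩⟩

theorem mem_monicIrreducibles {P : k[X]} :
    P ∈ monicIrreducibles k d ↔ (P.Monic ∧ P.natDegree = d) ∧ Irreducible P := by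
  simp only [monicIrreducibles, mem_filter, mem_monics]

theorem sum_monics {M : Type*} [AddCommMonoid M] (g : k[X] → M) :
    ∑ f ∈ monics k d, g f = ∑ v : Fin d → k, g (X ^ d + ∑ i : Fin d, monomial i (v i)) := by
  simp [monics, monicEquivDegreeLT, degreeLTEquiv]

theorem sum_monics_one {M : Type*} [AddCommMonoid M] (g : k[X] → M) :
    ∑ f ∈ monics k 1, g f = ∑ a, g (X + C a) := by
  rw [sum_monics, ← (Equiv.funUnique (Fin 1) k).symm.sum_comp]
  simp

theorem sum_monics_two {M : Type*} [AddCommMonoid M] (g : k[X] → M) :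
    ∑ f ∈ monics k 2, g f = ∑ b, ∑ a, g (X ^ 2 + C a * X + C b) := by
  rw [sum_monics, ← (finTwoArrowEquiv k).symm.sum_comp, Fintype.sum_prod_type]
  simp [C_mul_X_eq_monomial, add_comm, add_left_comm]

open Classical in
/-- The polynomial analogue of `log = Λ * 1`. -/
theorem sum_natDegree_of_pow_dvd {n : ℕ} {f : k[X]} (hf : f ∈ monics k n) :
    ∑ p ∈ antidiagonal n, ∑ x ∈ p.1.divisorsAntidiagonal, ∑ P ∈ monicIrreducibles k x.1,
      (if P ^ x.2 ∣ f then x.1 else 0) = n := by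
  obtain ⟨hm, hd⟩ := mem_monics.1 hf
  refine Eq.trans ?_ ((sum_natDegree_primePowDivisors hm).trans hd)
  simp_rw [sum_sigma', ← sum_filter]
  have mem_source : ∀ {a b d i : ℕ} {P : k[X]}, (⟨(a, b), (d, i), P⟩ : Σ _ : ℕ × ℕ, Σ _, _) ∈
      {y ∈ (antidiagonal n).sigma fun p ↦ p.1.divisorsAntidiagonal.sigma fun x ↦
        monicIrreducibles k x.1 | y.2.2 ^ y.2.1.2 ∣ f} ↔
      (a + b = n ∧ (d * i = a ∧ a ≠ 0) ∧ (P.Monic ∧ P.natDegree = d) ∧ Irreducible P) ∧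
        P ^ i ∣ f := by
    simp [mem_monicIrreducibles]
  refine sum_bij' (fun x _ ↦ ⟨x.2.2, x.2.1.2⟩)
    (fun y _ ↦ ⟨(y.1.natDegree * y.2, n - y.1.natDegree * y.2), (y.1.natDegree, y.2), y.1⟩)
    ?_ ?_ ?_ (fun _ _ ↦ rfl) ?_
  · rintro ⟨⟨a, b⟩, ⟨d, i⟩, P⟩ h
    obtain ⟨⟨-, ⟨hdi, ha⟩, ⟨hPm, -⟩, hPi⟩, hdvd⟩ := mem_source.1 h
    exact (mem_primePowDivisors hm.ne_zero).2 ⟨hPm, hPi, right_ne_zero_of_mul (hdi ▸ ha), hdvd⟩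
  · rintro ⟨P, i⟩ h
    obtain ⟨hPm, hPi, hi, hdvd⟩ := (mem_primePowDivisors hm.ne_zero).1 h
    have hle : P.natDegree * i ≤ n := by
      rw [← hd, mul_comm, ← natDegree_pow]
      exact natDegree_le_of_dvd hdvd hm.ne_zero
    exact mem_source.2 ⟨⟨Nat.add_sub_of_le hle,
      ⟨rfl, mul_ne_zero hPi.natDegree_pos.ne' hi⟩, ⟨hPm, rfl⟩, hPi⟩, hdvd⟩
  · rintro ⟨⟨a, b⟩, ⟨d, i⟩, P⟩ h
    obtain ⟨⟨rfl, ⟨rfl, -⟩, ⟨-, rfl⟩, -⟩, -⟩ := mem_source.1 h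
    simp
  · rintro ⟨⟨a, b⟩, ⟨d, i⟩, P⟩ h
    exact (mem_source.1 h).1.2.2.1.2.symm

theorem sum_dvd_monics {R : Type*} [CommSemiring R] (lam : k[X] →* R) {G : k[X]} (hG : G.Monic)
    (n : ℕ) [DecidablePred (G ∣ ·)] :
    ∑ f ∈ monics k (G.natDegree + n), (if G ∣ f then lam f else 0) =
      lam G * ∑ f ∈ monics k n, lam f := by
  rw [← sum_filter, mul_sum]
  refine (sum_bij (fun g _ ↦ G * g) ?_ (fun g _ g' _ ↦ mul_left_cancel₀ hG.ne_zero) ?_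
    fun g _ ↦ (map_mul lam G g).symm).symm
  · intro g hg
    obtain ⟨hgm, rfl⟩ := mem_monics.1 hg
    exact mem_filter.2 ⟨mem_monics.2 ⟨hG.mul hgm, hG.natDegree_mul hgm⟩, dvd_mul_right _ _⟩
  · intro f hf
    obtain ⟨hf, g, rfl⟩ := mem_filter.1 hf
    obtain ⟨hfm, hfd⟩ := mem_monics.1 hf
    have hgm := hG.of_mul_monic_left hfm
    rw [hG.natDegree_mul hgm, add_right_inj] at hfd
    exact ⟨g, mem_monics.2 ⟨hgm, hfd⟩, rfl⟩

variable {R : Type*} [CommRing R] (lam : k[X] →* R)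

/-- The coefficient of `T ^ n` in the Dirichlet series `∑ lam f * T ^ deg f` of a completely
multiplicative function `lam`, the sum running over the monic polynomials `f`. -/
noncomputable def dirichletCoeff (n : ℕ) : R := ∑ f ∈ monics k n, lam f

/-- The coefficient of `T ^ n` in the logarithmic derivative `T L' / L` of the Dirichlet series `L`
of `lam`: the sum of `deg P * lam P ^ i` over the prime powers `P ^ i` of degree `n`. -/
noncomputable def logDerivCoeff (n : ℕ) : R :=
  ∑ x ∈ n.divisorsAntidiagonal, ∑ P ∈ monicIrreducibles k x.1, x.1 * lam P ^ x.2

theorem natCast_mul_dirichletCoeff (n : ℕ) :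
    n * dirichletCoeff lam n =
      ∑ p ∈ antidiagonal n, logDerivCoeff lam p.1 * dirichletCoeff lam p.2 := by
  classical
  have sum_multiples : ∀ p ∈ antidiagonal n, ∀ x ∈ p.1.divisorsAntidiagonal,
      ∀ P ∈ monicIrreducibles k x.1,
      ∑ f ∈ monics k n, ((if P ^ x.2 ∣ f then x.1 else 0 : ℕ) : R) * lam f =
        x.1 * lam P ^ x.2 * dirichletCoeff lam p.2 := by
    intro p hp x hx P hP
    obtain ⟨⟨hPm, hPd⟩, -⟩ := mem_monicIrreducibles.1 hP
    have hn : n = (P ^ x.2).natDegree + p.2 := by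
      rw [natDegree_pow, hPd, mul_comm, (Nat.mem_divisorsAntidiagonal.1 hx).1,
        HasAntidiagonal.mem_antidiagonal.1 hp]
    rw [dirichletCoeff, mul_assoc, ← map_pow, ← sum_dvd_monics lam (hPm.pow x.2), ← hn, mul_sum]
    exact sum_congr rfl fun f _ ↦ by split_ifs <;> simp
  calc n * dirichletCoeff lam n
      = ∑ f ∈ monics k n, ∑ p ∈ antidiagonal n, ∑ x ∈ p.1.divisorsAntidiagonal,
          ∑ P ∈ monicIrreducibles k x.1,
            ((if P ^ x.2 ∣ f then x.1 else 0 : ℕ) : R) * lam f := by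
        rw [dirichletCoeff, mul_sum]
        refine sum_congr rfl fun f hf ↦ ?_
        conv_lhs => rw [← sum_natDegree_of_pow_dvd hf]
        simp_rw [Nat.cast_sum, sum_mul]
    _ = _ := by
        rw [sum_comm]
        refine sum_congr rfl fun p hp ↦ ?_
        rw [sum_comm, logDerivCoeff, sum_mul]
        refine sum_congr rfl fun x hx ↦ ?_
        rw [sum_comm, sum_mul]
        exact sum_congr rfl fun P hP ↦ sum_multiples p hp x hx P hP

end LFunction

section Recurrence

variable {R : Type*} [CommRing R] {L Λ : ℕ → R}

/-- If `L = 1 + L₁ T + L₂ T² = (1 - αT)(1 - βT)`, the coefficients of `T L' / L` are the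
negative power sums `-(α ^ n + β ^ n)`, which are values of Dickson polynomials. -/
theorem eq_neg_eval_dickson (L_zero : L 0 = 1) (L_eq_zero : ∀ n, L (n + 3) = 0) (Λ_zero : Λ 0 = 0)
    (hL : ∀ n : ℕ, n * L n = ∑ p ∈ antidiagonal n, Λ p.1 * L p.2) :
    ∀ n, Λ (n + 1) = -(dickson 1 (L 2) (n + 1)).eval (-L 1)
  | 0 => by
    simpa [Nat.antidiagonal_succ, L_zero, Λ_zero, eq_comm] using hL 1
  | 1 => by
    have h1 : L 1 = Λ 1 := by simpa [Nat.antidiagonal_succ, L_zero, Λ_zero] using hL 1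
    have h2 : 2 * L 2 = Λ 1 * L 1 + Λ 2 := by
      simpa [Nat.antidiagonal_succ, L_zero, Λ_zero] using hL 2
    simp only [dickson_add_two, zero_add, dickson_one, dickson_zero, Nat.cast_one, eval_sub,
      eval_mul, eval_X, eval_C, eval_ofNat, eval_one]
    linear_combination -h2 + L 1 * h1
  | n + 2 => by
    have sum_eq_zero : ∑ i ∈ range (n + 1), Λ i * L (n + 3 - i) = 0 :=
      sum_eq_zero fun i hi ↦ by
        rw [show n + 3 - i = n - i + 3 by have := mem_range.1 hi; omega, L_eq_zero, mul_zero]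
    have recurrence : 0 = Λ (n + 1) * L 2 + Λ (n + 2) * L 1 + Λ (n + 3) := by
      simpa [L_eq_zero, L_zero, Nat.sum_antidiagonal_eq_sum_range_succ_mk, sum_range_succ _ (n + 3),
        sum_range_succ _ (n + 2), sum_range_succ _ (n + 1), sum_eq_zero,
        show n + 3 - (n + 1) = 2 by omega, show n + 3 - (n + 2) = 1 by omega] using hL (n + 3)
    rw [dickson_add_two, eval_sub, eval_mul, eval_X, eval_mul, eval_C]
    linear_combination -recurrence - L 2 * eq_neg_eval_dickson L_zero L_eq_zero Λ_zero hL n -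
      L 1 * eq_neg_eval_dickson L_zero L_eq_zero Λ_zero hL (n + 1)

end Recurrence

/-! ### The Kloosterman sum as a coefficient of an L-function -/

section KloostermanHom

variable {k : Type*} [Field k]

theorem coeff_one_div_coeff_zero_mul {f g : k[X]} (hf : f.coeff 0 ≠ 0) (hg : g.coeff 0 ≠ 0) :
    (f * g).coeff 1 / (f * g).coeff 0 = f.coeff 1 / f.coeff 0 + g.coeff 1 / g.coeff 0 := by
  rw [mul_coeff_zero, mul_coeff_one]
  field_simp
  ring

theorem nextCoeff_div_leadingCoeff_mul {f g : k[X]} (hf : f ≠ 0) (hg : g ≠ 0) :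
    (f * g).nextCoeff / (f * g).leadingCoeff =
      f.nextCoeff / f.leadingCoeff + g.nextCoeff / g.leadingCoeff := by
  simp_rw [← coeff_one_reverse, ← coeff_zero_reverse, reverse_mul_of_domain]
  apply coeff_one_div_coeff_zero_mul <;> simpa [coeff_zero_reverse]

variable {R : Type*} [CommRing R] (ψ : AddChar k R) (w : k)

open Classical in
/-- The completely multiplicative function on polynomials with value `ψ(s + w s')` at `f`, where `s`
is the sum of the roots of `f` and `s'` the sum of their inverses, and value `0` at `f` if `0` is a
root. Its Dirichlet series is the `L`-function of the Kloosterman sum of `ψ` at `w`. -/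
noncomputable def kloostermanHom : k[X] →* R where
  toFun f := if f.coeff 0 = 0 then 0 else
    ψ (-(f.nextCoeff / f.leadingCoeff + w * (f.coeff 1 / f.coeff 0)))
  map_one' := by simp [nextCoeff, coeff_one]
  map_mul' f g := by
    by_cases hf : f.coeff 0 = 0
    · simp [hf, mul_coeff_zero]
    by_cases hg : g.coeff 0 = 0
    · simp [hg, mul_coeff_zero]
    have ne_zero : ∀ {h : k[X]}, h.coeff 0 ≠ 0 → h ≠ 0 := by rintro _ h rfl; simp at h
    rw [if_neg hf, if_neg hg, if_neg (mul_coeff_zero f g ▸ mul_ne_zero hf hg),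
      nextCoeff_div_leadingCoeff_mul (ne_zero hf) (ne_zero hg), coeff_one_div_coeff_zero_mul hf hg,
      ← AddChar.map_add_eq_mul]
    congr 1
    ring

variable {ψ w}

theorem kloostermanHom_of_coeff_zero_eq_zero {f : k[X]} (hf : f.coeff 0 = 0) :
    kloostermanHom ψ w f = 0 :=
  if_pos hf

theorem kloostermanHom_of_monic {f : k[X]} (hf : f.Monic) (h0 : f.coeff 0 ≠ 0) :
    kloostermanHom ψ w f = ψ (-(f.nextCoeff + w * (f.coeff 1 / f.coeff 0))) := by
  rw [← div_one f.nextCoeff, ← hf.leadingCoeff]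
  exact if_neg h0

theorem kloostermanHom_X_sq_add {a b : k} (hb : b ≠ 0) :
    kloostermanHom ψ w (X ^ 2 + C a * X + C b) = ψ (a * -(1 + w / b)) := by
  have hd : (X ^ 2 + C a * X + C b).natDegree = 2 := by compute_degree!
  have hm : (X ^ 2 + C a * X + C b).Monic := by monicity!
  rw [kloostermanHom_of_monic hm (by simpa), nextCoeff_of_natDegree_pos (by simp [hd]), hd]
  congr 1
  simp [coeff_X_pow, coeff_C]
  ring

variable [Fintype k]

theorem dirichletCoeff_kloostermanHom_zero : dirichletCoeff (kloostermanHom ψ w) 0 = 1 := by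
  simp [dirichletCoeff, sum_monics]

theorem dirichletCoeff_kloostermanHom_one [DecidableEq k] :
    dirichletCoeff (kloostermanHom ψ w) 1 = kloostermanSum ψ w := by
  rw [dirichletCoeff, sum_monics_one, sum_eq_add_sum_units,
    kloostermanHom_of_coeff_zero_eq_zero (by simp), zero_add]
  refine Fintype.sum_equiv (Equiv.neg kˣ) _ _ fun a ↦ ?_
  rw [kloostermanHom_of_monic (monic_X_add_C _) (by simp)]
  simp [nextCoeff_X_add_C, coeff_C, inv_neg, add_comm]

theorem add_C_mul_X_pow_mem_monics (c : k) {f : k[X]} {n : ℕ} (hf : f ∈ monics k (n + 1)) :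
    f + C c * X ^ n ∈ monics k (n + 1) := by
  obtain ⟨hm, hd⟩ := mem_monics.1 hf
  have : (C c * X ^ n).degree < f.degree := by
    rw [degree_eq_natDegree hm.ne_zero, hd]
    exact (degree_C_mul_X_pow_le _ _).trans_lt (by exact_mod_cast Nat.lt_succ_self _)
  exact mem_monics.2 ⟨hm.add_of_left this, by rw [natDegree_add_eq_left_of_degree_lt this, hd]⟩

theorem kloostermanHom_add_C_mul_X_pow {c : k} {f : k[X]} {n : ℕ} (hf : f ∈ monics k (n + 3)) :
    kloostermanHom ψ w (f + C (-c) * X ^ (n + 2)) = ψ c * kloostermanHom ψ w f := by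
  obtain ⟨hm, hd⟩ := mem_monics.1 hf
  obtain ⟨hm', hd'⟩ := mem_monics.1 (add_C_mul_X_pow_mem_monics (-c) hf)
  have coeff_zero : (f + C (-c) * X ^ (n + 2)).coeff 0 = f.coeff 0 := by simp [coeff_X_pow]
  have coeff_one : (f + C (-c) * X ^ (n + 2)).coeff 1 = f.coeff 1 := by simp [coeff_X_pow]
  have nextCoeff_eq : (f + C (-c) * X ^ (n + 2)).nextCoeff = f.nextCoeff - c := by
    rw [nextCoeff_of_natDegree_pos (by omega), nextCoeff_of_natDegree_pos (by omega), hd, hd']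
    simp [coeff_X_pow, sub_eq_add_neg]
  by_cases h0 : f.coeff 0 = 0
  · simp [kloostermanHom_of_coeff_zero_eq_zero, h0]
  · rw [kloostermanHom_of_monic hm h0, kloostermanHom_of_monic hm' (by rwa [coeff_zero]),
      coeff_zero, coeff_one, nextCoeff_eq, ← AddChar.map_add_eq_mul]
    congr 1
    ring

variable [IsDomain R]

theorem dirichletCoeff_kloostermanHom_two (hψ : ψ ≠ 1) (hw : w ≠ 0) :
    dirichletCoeff (kloostermanHom ψ w) 2 = Fintype.card k := by
  classical
  have inner_sum : ∀ b : k, ∑ a, kloostermanHom ψ w (X ^ 2 + C a * X + C b) =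
      if b = -w then (Fintype.card k : R) else 0 := by
    intro b
    by_cases hb : b = 0
    · subst hb
      rw [if_neg (by simpa [eq_comm] using hw)]
      exact sum_eq_zero fun a _ ↦ kloostermanHom_of_coeff_zero_eq_zero (by simp)
    · have : -(1 + w / b) = 0 ↔ b = -w := by
        rw [neg_eq_zero, add_comm, add_eq_zero_iff_eq_neg, div_eq_iff hb, neg_one_mul,
          eq_neg_iff_add_eq_zero, eq_neg_iff_add_eq_zero, add_comm]
      simp_rw [kloostermanHom_X_sq_add hb]
      rw [AddChar.sum_mulShift _ (AddChar.IsPrimitive.of_ne_one hψ)]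
      simp only [this, Nat.cast_ite, Nat.cast_zero]
  rw [dirichletCoeff, sum_monics_two, sum_congr rfl fun b _ ↦ inner_sum b]
  simp

/-- In degree at least three, the second highest coefficient can be changed without affecting the
two lowest ones, so the sum cancels. -/
theorem dirichletCoeff_kloostermanHom_add_three (hψ : ψ ≠ 1) (n : ℕ) :
    dirichletCoeff (kloostermanHom ψ w) (n + 3) = 0 := by
  obtain ⟨c, hc⟩ := AddChar.ne_one_iff.1 hψ
  have invariant : ψ c * dirichletCoeff (kloostermanHom ψ w) (n + 3) =
      dirichletCoeff (kloostermanHom ψ w) (n + 3) := by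
    rw [dirichletCoeff, mul_sum]
    refine sum_bij' (fun f _ ↦ f + C (-c) * X ^ (n + 2)) (fun f _ ↦ f + C c * X ^ (n + 2))
      (fun _ ↦ add_C_mul_X_pow_mem_monics _) (fun _ ↦ add_C_mul_X_pow_mem_monics _) ?_ ?_
      fun f hf ↦ (kloostermanHom_add_C_mul_X_pow hf).symm <;> simp
  exact (mul_left_eq_self₀.1 invariant).resolve_left hc

theorem logDerivCoeff_kloostermanHom [DecidableEq k] (hψ : ψ ≠ 1) (hw : w ≠ 0) {n : ℕ}
    (hn : n ≠ 0) : logDerivCoeff (kloostermanHom ψ w) n =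
      -(dickson 1 (Fintype.card k : R) n).eval (-kloostermanSum ψ w) := by
  obtain ⟨n, rfl⟩ := Nat.exists_eq_succ_of_ne_zero hn
  rw [← dirichletCoeff_kloostermanHom_two hψ hw, ← dirichletCoeff_kloostermanHom_one]
  exact eq_neg_eval_dickson dirichletCoeff_kloostermanHom_zero
    (dirichletCoeff_kloostermanHom_add_three hψ) (by simp [logDerivCoeff])
    (natCast_mul_dirichletCoeff _) n

end KloostermanHom

section FieldExtension

open IntermediateField

variable {k F : Type*} [Field k] [Field F] [Algebra k F]

theorem adjoin_simple_inv (x : F) : k⟮x⁻¹⟯ = k⟮x⟯ := by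
  apply le_antisymm <;> rw [adjoin_simple_le_iff]
  · exact inv_mem (mem_adjoin_simple_self k x)
  · simpa using inv_mem (mem_adjoin_simple_self k x⁻¹)

theorem minpoly_inv {x : F} (hx : x ≠ 0) (hxi : IsIntegral k x) :
    minpoly k x⁻¹ = C ((minpoly k x).coeff 0)⁻¹ * (minpoly k x).reverse := by
  set p := minpoly k x
  have hc0 : p.coeff 0 ≠ 0 := minpoly.coeff_zero_ne_zero hxi hx
  have trailing : p.natTrailingDegree = 0 := natTrailingDegree_eq_zero.2 (.inr hc0)
  have monic : (C (p.coeff 0)⁻¹ * p.reverse).Monic := by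
    rw [Monic, leadingCoeff_mul, leadingCoeff_C, reverse_leadingCoeff, trailingCoeff, trailing,
      inv_mul_cancel₀ hc0]
  have root : aeval x⁻¹ (C (p.coeff 0)⁻¹ * p.reverse) = 0 := by
    let _ : Invertible x := invertibleOfNonzero hx
    have h := (eval₂_reverse_eq_zero_iff (algebraMap k F) x p).2 (minpoly.aeval k x)
    rw [invOf_eq_inv] at h
    rw [map_mul, aeval_def _ p.reverse, h, mul_zero]
  have natDegree_le : (C (p.coeff 0)⁻¹ * p.reverse).natDegree ≤ (minpoly k x⁻¹).natDegree := by
    rw [natDegree_C_mul (inv_ne_zero hc0), reverse_natDegree, trailing, Nat.sub_zero,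
      ← adjoin.finrank hxi.inv, adjoin_simple_inv, adjoin.finrank hxi]
  exact (eq_of_monic_of_dvd_of_natDegree_le (minpoly.monic hxi.inv) monic
    (minpoly.dvd k _ root) natDegree_le).symm

theorem nextCoeff_minpoly_inv {x : F} (hx : x ≠ 0) (hxi : IsIntegral k x) :
    (minpoly k x⁻¹).nextCoeff = (minpoly k x).coeff 1 / (minpoly k x).coeff 0 := by
  have natDegree_eq : (minpoly k x⁻¹).natDegree = (minpoly k x).natDegree := by
    rw [← adjoin.finrank hxi.inv, adjoin_simple_inv, adjoin.finrank hxi]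
  have natDegree_pos := minpoly.natDegree_pos hxi
  rw [nextCoeff_of_natDegree_pos (natDegree_eq ▸ natDegree_pos), natDegree_eq, minpoly_inv hx hxi,
    coeff_C_mul, coeff_reverse, revAt_le (by omega), Nat.sub_sub_self natDegree_pos,
    div_eq_inv_mul]

theorem trace_add_smul_inv [FiniteDimensional k F] {x : F} (hx : x ≠ 0) (w : k) :
    Algebra.trace k F (x + w • x⁻¹) = Module.finrank k⟮x⟯ F •
      -((minpoly k x).nextCoeff + w * ((minpoly k x).coeff 1 / (minpoly k x).coeff 0)) := by
  rw [map_add, map_smul, trace_eq_finrank_mul_minpoly_nextCoeff,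
    trace_eq_finrank_mul_minpoly_nextCoeff, adjoin_simple_inv,
    nextCoeff_minpoly_inv hx (.of_finite k x), smul_eq_mul, nsmul_eq_mul]
  ring

theorem kloostermanHom_minpoly_pow [FiniteDimensional k F] {R : Type*} [CommRing R]
    {ψ : AddChar k R} {w : k} {x : F} (hx : x ≠ 0) :
    kloostermanHom ψ w (minpoly k x) ^ Module.finrank k⟮x⟯ F =
      ψ (Algebra.trace k F (x + w • x⁻¹)) := by
  have hxi : IsIntegral k x := .of_finite k x
  rw [kloostermanHom_of_monic (minpoly.monic hxi) (minpoly.coeff_zero_ne_zero hxi hx),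
    ← AddChar.map_nsmul_eq_pow, trace_add_smul_inv hx]

variable [Fintype F]

theorem card_minpoly_eq [Finite k] [DecidableEq k[X]] {P : k[X]} (hm : P.Monic)
    (hi : Irreducible P) (hd : P.natDegree ∣ Module.finrank k F) :
    #{x : F | minpoly k x = P} = P.natDegree := by
  classical
  have dvd : P ∣ X ^ Nat.card F - X := by
    rw [Module.natCard_eq_pow_finrank (K := k)]
    exact hi.natDegree_dvd_iff_dvd_X_pow_card_pow_sub_X.1 hd
  have splits : (P.map (algebraMap k F)).Splits :=
    splits_X_pow_nat_card_sub_X.of_dvd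
      (FiniteField.X_pow_card_sub_X_ne_zero F Finite.one_lt_card) <| by
      simpa using Polynomial.map_dvd (algebraMap k F) dvd
  rw [← card_rootSet_eq_natDegree (PerfectField.separable_of_irreducible hi) splits,
    ← Set.toFinset_card]
  congr 1
  ext x
  rw [mem_filter_univ, Set.mem_toFinset, mem_rootSet]
  constructor
  · rintro rfl
    exact ⟨hm.ne_zero, minpoly.aeval k x⟩
  · rintro ⟨-, hx⟩
    exact (minpoly.eq_of_irreducible_of_monic hi hx hm).symm

theorem sum_minpoly_pow_finrank [Fintype k] {R : Type*} [CommRing R] (lam : k[X] →* R) :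
    ∑ x : F, lam (minpoly k x) ^ Module.finrank k⟮x⟯ F =
      logDerivCoeff lam (Module.finrank k F) := by
  classical
  set n := Module.finrank k F
  have mul_eq (x : F) : (minpoly k x).natDegree * Module.finrank k⟮x⟯ F = n := by
    rw [← adjoin.finrank (.of_finite k x), Module.finrank_mul_finrank]
  rw [logDerivCoeff, sum_sigma', ← sum_fiberwise_of_maps_to (t := _)
    (g := fun x : F ↦ (⟨((minpoly k x).natDegree, Module.finrank k⟮x⟯ F), minpoly k x⟩ :
      Σ _ : ℕ × ℕ, k[X]))]
  · refine sum_congr rfl ?_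
    rintro ⟨⟨d, i⟩, P⟩ h
    simp only [mem_sigma, Nat.mem_divisorsAntidiagonal, mem_monicIrreducibles] at h
    obtain ⟨⟨hdi, -⟩, ⟨hm, rfl⟩, hi⟩ := h
    have filter_eq : (univ.filter fun x : F ↦ (⟨((minpoly k x).natDegree, Module.finrank k⟮x⟯ F),
        minpoly k x⟩ : Σ _ : ℕ × ℕ, k[X]) = ⟨(P.natDegree, i), P⟩) =
        univ.filter fun x ↦ minpoly k x = P := by
      refine filter_congr fun x _ ↦ ⟨fun h ↦ congrArg Sigma.snd h, ?_⟩
      rintro rfl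
      rw [Nat.eq_of_mul_eq_mul_left hi.natDegree_pos ((mul_eq x).trans hdi.symm)]
    rw [filter_eq, sum_congr rfl (g := fun _ ↦ lam P ^ i), sum_const,
      card_minpoly_eq hm hi (Dvd.intro _ hdi), nsmul_eq_mul]
    intro x hx
    rw [← filter_eq, mem_filter_univ] at hx
    obtain ⟨h₁, h₂⟩ := Sigma.mk.inj hx
    rw [(Prod.mk.inj h₁).2, eq_of_heq h₂]
  · intro x _
    simp [mem_monicIrreducibles, mul_eq, n, Module.finrank_pos.ne', minpoly.monic,
      minpoly.irreducible, Algebra.IsIntegral.isIntegral]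

variable [Fintype k] [DecidableEq k] [DecidableEq F] {R : Type*} [CommRing R] [IsDomain R]

theorem kloostermanSum_compTrace {ψ : AddChar k R} (hψ : ψ ≠ 1) {w : k} (hw : w ≠ 0) :
    kloostermanSum (ψ.compAddMonoidHom (Algebra.trace k F).toAddMonoidHom) (algebraMap k F w) =
      -(dickson 1 (Fintype.card k : R) (Module.finrank k F)).eval (-kloostermanSum ψ w) := by
  rw [← logDerivCoeff_kloostermanHom hψ hw Module.finrank_pos.ne', ← sum_minpoly_pow_finrank,
    sum_eq_add_sum_units, minpoly.zero, kloostermanHom_of_coeff_zero_eq_zero (by simp),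
    zero_pow Module.finrank_pos.ne', zero_add, kloostermanSum]
  refine sum_congr rfl fun x _ ↦ ?_
  rw [kloostermanHom_minpoly_pow x.ne_zero, Algebra.smul_def]
  rfl

end FieldExtension

/-! ### Kloosterman sums in characteristic two -/

section ArtinSchreier

variable {F : Type*} [Field F] [CharP F 2]

variable (F) in
/-- The Artin–Schreier map `y ↦ y ^ 2 + y` of a field of characteristic two. -/
def artinSchreier : F →+ F where
  toFun y := y ^ 2 + y
  map_zero' := by simp
  map_add' x y := by rw [CharTwo.add_sq]; ring

theorem artinSchreier_apply (y : F) : artinSchreier F y = y ^ 2 + y := rfl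

theorem artinSchreier_eq_iff {y z : F} :
    artinSchreier F y = artinSchreier F z ↔ y = z ∨ y = z + 1 := by
  rw [← CharTwo.add_eq_zero, ← map_add, artinSchreier_apply, sq, ← mul_add_one, mul_eq_zero,
    add_assoc, CharTwo.add_eq_zero, CharTwo.add_eq_zero]

variable [Finite F]

theorem index_range_artinSchreier : (artinSchreier F).range.index = 2 := by
  have card_ker : Nat.card (artinSchreier F).ker = 2 := by
    have : ((artinSchreier F).ker : Set F) = {0, 1} := by
      ext y
      simpa [AddMonoidHom.mem_ker] using artinSchreier_eq_iff (y := y) (z := 0)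
    exact (Nat.card_coe_set_eq _).trans (this ▸ Set.ncard_pair zero_ne_one)
  have h := AddSubgroup.card_mul_index (artinSchreier F).range
  rw [← AddSubgroup.card_mul_index (artinSchreier F).ker, AddSubgroup.index_ker, card_ker,
    mul_comm] at h
  exact Nat.eq_of_mul_eq_mul_right Nat.card_pos h

variable (F) in
open Classical in
/-- The additive character `c ↦ (-1) ^ Tr c` of a finite field of characteristic two, where `Tr` is
the absolute trace. By Hilbert 90, `Tr c = 0` exactly when `c` is of the form `y ^ 2 + y`. -/
noncomputable def artinSchreierChar : AddChar F ℤ where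
  toFun c := if c ∈ (artinSchreier F).range then 1 else -1
  map_zero_eq_one' := if_pos (zero_mem _)
  map_add_eq_mul' a b := by
    rw [AddSubgroup.add_mem_iff_of_index_two index_range_artinSchreier]
    split_ifs <;> simp_all

local notation "χ" => artinSchreierChar _

theorem artinSchreierChar_eq_one_iff {c : F} : χ c = 1 ↔ ∃ y, y ^ 2 + y = c := by
  classical
  change ite (c ∈ (artinSchreier F).range) (1 : ℤ) (-1) = 1 ↔ c ∈ (artinSchreier F).range
  rw [ite_eq_left_iff]
  tauto

theorem artinSchreierChar_eq_one_or (c : F) : χ c = 1 ∨ χ c = -1 :=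
  (em (c ∈ (artinSchreier F).range)).imp (if_pos ·) (if_neg ·)

theorem artinSchreierChar_mul_self (c : F) : χ c * χ c = 1 := by
  rcases artinSchreierChar_eq_one_or c with h | h <;> simp [h]

theorem artinSchreierChar_sq_add_self (y : F) : χ (y ^ 2 + y) = 1 :=
  artinSchreierChar_eq_one_iff.2 ⟨y, rfl⟩

theorem artinSchreierChar_sq (c : F) : χ (c ^ 2) = χ c := by
  have h := artinSchreierChar_sq_add_self c
  rw [AddChar.map_add_eq_mul] at h
  linear_combination χ c * h - χ (c ^ 2) * artinSchreierChar_mul_self c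

theorem artinSchreierChar_ne_one : artinSchreierChar F ≠ 1 := by
  intro h
  have range_eq_top : (artinSchreier F).range = ⊤ :=
    (AddSubgroup.eq_top_iff' _).2 fun c ↦
      artinSchreierChar_eq_one_iff.1 (by rw [h, AddChar.one_apply])
  have := index_range_artinSchreier (F := F)
  rw [range_eq_top, AddSubgroup.index_top] at this
  omega

theorem card_sq_add_self_eq [Fintype F] [DecidableEq F] (c : F) :
    (#{y : F | y ^ 2 + y = c} : ℤ) = 1 + χ c := by
  rcases artinSchreierChar_eq_one_or c with h | h
  · obtain ⟨z, rfl⟩ := artinSchreierChar_eq_one_iff.1 h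
    have : ({y | y ^ 2 + y = z ^ 2 + z} : Finset F) = {z, z + 1} := by
      ext y
      rw [mem_filter_univ, mem_insert, mem_singleton, ← artinSchreier_eq_iff]
      rfl
    rw [this, card_pair (by simp), h]
    rfl
  · have : ∀ y, y ^ 2 + y ≠ c := by
      rw [← not_exists, ← artinSchreierChar_eq_one_iff, h]
      decide
    simp [h, this]

end ArtinSchreier

local notation "χ" => artinSchreierChar _

local notation "Kl" => kloostermanSum (artinSchreierChar _)

theorem ne_zero_of_sq_add_self_add_one_eq_zero {R : Type*} [Semiring R] [Nontrivial R] {w : R}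
    (hw : w ^ 2 + w + 1 = 0) : w ≠ 0 := by
  rintro rfl
  simp at hw

section KloostermanCharTwo

variable {F : Type*} [Field F] [Fintype F] [CharP F 2] [DecidableEq F]

theorem kloostermanSum_artinSchreierChar_sq (a : F) : Kl (a ^ 2) = Kl a := by
  have bijective : Function.Bijective fun x : Fˣ ↦ x ^ 2 :=
    Finite.injective_iff_bijective.1 fun x y h ↦ Units.ext <|
      CharTwo.sq_injective <| by simpa using congrArg Units.val h
  rw [kloostermanSum, ← bijective.sum_comp]
  refine sum_congr rfl fun x _ ↦ ?_
  rw [Units.val_pow_eq_pow_val, ← inv_pow, ← mul_pow, ← CharTwo.add_sq, artinSchreierChar_sq]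

theorem card_units_add_inv_eq {c : F} (hc : c ≠ 0) :
    (#{v : Fˣ | v + (v : F)⁻¹ = c} : ℤ) = 1 + χ c⁻¹ := by
  have two_eq_zero := CharTwo.two_eq_zero (R := F)
  rw [← artinSchreierChar_sq, ← card_sq_add_self_eq, Nat.cast_inj]
  refine card_bij (fun v _ ↦ c⁻¹ * v) ?_ ?_ ?_
  · intro v hv
    rw [mem_filter_univ] at hv ⊢
    field_simp at hv ⊢
    linear_combination hv + (v * c - 1) * two_eq_zero
  · intro v _ v' _ h
    exact Units.ext (mul_left_cancel₀ (inv_ne_zero hc) h)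
  · intro y hy
    rw [mem_filter_univ] at hy
    have hy0 : y ≠ 0 := by
      rintro rfl
      field_simp at hy
      simp at hy
    refine ⟨Units.mk0 (c * y) (mul_ne_zero hc hy0), ?_, by simp [hc]⟩
    rw [mem_filter_univ, Units.val_mk0]
    field_simp at hy ⊢
    linear_combination hy - (c ^ 2 * y - 1) * two_eq_zero

omit [Fintype F] [DecidableEq F] in
theorem units_add_inv_eq_zero_iff {v : Fˣ} : v + (v : F)⁻¹ = 0 ↔ v = 1 := by
  rw [CharTwo.add_eq_zero, ← mul_eq_one_iff_eq_inv₀ v.ne_zero, ← sq, ← one_pow 2,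
    CharTwo.sq_injective.eq_iff, Units.val_eq_one]

theorem sum_units_add_inv (f : F → ℤ) :
    ∑ v : Fˣ, f (v + (v : F)⁻¹) = f 0 + ∑ c : Fˣ, (1 + χ (c : F)⁻¹) * f c := by
  rw [← sum_fiberwise univ fun v : Fˣ ↦ v + (v : F)⁻¹, sum_eq_add_sum_units]
  congr 1
  · have : ({v | v + (v : F)⁻¹ = 0} : Finset Fˣ) = {1} := by
      ext v
      rw [mem_filter_univ, units_add_inv_eq_zero_iff, mem_singleton]
    rw [this, sum_singleton, units_add_inv_eq_zero_iff.2 rfl]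
  · refine sum_congr rfl fun c _ ↦ ?_
    rw [← card_units_add_inv_eq c.ne_zero, ← nsmul_eq_mul, ← sum_const]
    exact sum_congr rfl fun v hv ↦ congrArg f (mem_filter.1 hv).2

theorem sum_kloostermanSum_one_add_add_inv :
    ∑ s : Fˣ, Kl (1 + (s + (s : F)⁻¹)) = ∑ c : Fˣ, χ (c : F)⁻¹ * Kl (1 + (c : F)) := by
  have sum_eq_zero : ∑ c : F, Kl (1 + c) = 0 := by
    rw [← sum_kloostermanSum (artinSchreierChar_ne_one (F := F))]
    exact Equiv.sum_comp (Equiv.addLeft (1 : F)) _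
  rw [sum_eq_add_sum_units] at sum_eq_zero
  rw [sum_units_add_inv fun c ↦ Kl (1 + c)]
  simp_rw [add_mul, one_mul]
  rw [sum_add_distrib, ← add_assoc, sum_eq_zero, zero_add]

theorem sum_artinSchreierChar_inv_mul_kloostermanSum :
    ∑ c : Fˣ, χ (c : F)⁻¹ * (χ (c : F) * Kl (c : F)) =
      ∑ c : Fˣ, χ (c : F)⁻¹ * Kl (1 + (c : F)) := by
  have kloostermanSum_one_add_inv (x : Fˣ) :
      Kl (1 + (x : F)⁻¹) = ∑ c : Fˣ, χ ((1 + (x : F)⁻¹) * c + 1 * (c : F)⁻¹) := by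
    rw [sum_units_add_mul_inv _ (.inr one_ne_zero), mul_one]
  rw [← Equiv.sum_comp (Equiv.inv Fˣ) fun c : Fˣ ↦ χ (c : F)⁻¹ * Kl (1 + (c : F))]
  simp_rw [Equiv.inv_apply, Units.val_inv_eq_inv_val, inv_inv, kloostermanSum_one_add_inv,
    kloostermanSum, mul_sum, ← AddChar.map_add_eq_mul]
  rw [sum_comm]
  exact sum_congr rfl fun x _ ↦ sum_congr rfl fun c _ ↦ congrArg _ (by ring)

variable {w : F}

/-- Since `Kl(w) = Kl(w ^ 2)`, the square is a double sum over `x` and `y = s x`, in which the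
product of the coefficients of `x` and `x⁻¹` is `1 + t + t⁻¹` with `t = w s`. -/
theorem sq_kloostermanSum_eq_sum_one_add_add_inv (hw : w ^ 2 + w + 1 = 0) :
    Kl w ^ 2 = ∑ s : Fˣ, Kl (1 + (s + (s : F)⁻¹)) := by
  have two_eq_zero := CharTwo.two_eq_zero (R := F)
  have hw0 := ne_zero_of_sq_add_self_add_one_eq_zero hw
  have coeff_ne_zero (s : Fˣ) : 1 + (s : F) ≠ 0 ∨ w + w ^ 2 * (s : F)⁻¹ ≠ 0 := by
    by_contra! h
    have hs : (s : F) = 1 := (CharTwo.add_eq_zero.1 h.1).symm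
    have := h.2
    rw [hs, inv_one, mul_one] at this
    exact one_ne_zero (α := F) (by linear_combination hw - this)
  calc
    Kl w ^ 2 = Kl w * Kl (w ^ 2) := by rw [kloostermanSum_artinSchreierChar_sq, sq]
    _ = ∑ x : Fˣ, ∑ y : Fˣ, χ (x + w * (x : F)⁻¹) * χ (y + w ^ 2 * (y : F)⁻¹) := by
      rw [kloostermanSum, kloostermanSum, sum_mul_sum]
    _ = ∑ x : Fˣ, ∑ s : Fˣ, χ ((1 + (s : F)) * x + (w + w ^ 2 * (s : F)⁻¹) * (x : F)⁻¹) := by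
      refine sum_congr rfl fun x _ ↦ ?_
      rw [← Equiv.sum_comp (Equiv.mulLeft x)]
      refine sum_congr rfl fun s _ ↦ ?_
      rw [← AddChar.map_add_eq_mul, Equiv.coe_mulLeft, Units.val_mul, mul_inv]
      exact congrArg _ (by ring)
    _ = ∑ s : Fˣ, Kl ((1 + (s : F)) * (w + w ^ 2 * (s : F)⁻¹)) := by
      rw [sum_comm]
      exact sum_congr rfl fun s _ ↦ sum_units_add_mul_inv _ (coeff_ne_zero s)
    _ = ∑ s : Fˣ, Kl (1 + (s + (s : F)⁻¹)) := by
      refine Fintype.sum_equiv (Equiv.mulLeft (Units.mk0 w hw0)) _ _ fun s ↦ congrArg _ ?_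
      rw [Equiv.coe_mulLeft, Units.val_mul, Units.val_mk0]
      field_simp
      linear_combination ((w - 1) * (1 + s) + s) * hw - (w * s) * two_eq_zero

theorem sum_artinSchreierChar_inv_mul_kloostermanSum_eq_sq (hw : w ^ 2 + w + 1 = 0) :
    ∑ c : Fˣ, χ (c : F)⁻¹ * (χ (c : F) * Kl (c : F)) = Kl w ^ 2 := by
  rw [sum_artinSchreierChar_inv_mul_kloostermanSum, ← sum_kloostermanSum_one_add_add_inv,
    sq_kloostermanSum_eq_sum_one_add_add_inv hw]

theorem sum_artinSchreierChar_mul_kloostermanSum :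
    ∑ c : Fˣ, χ (c : F) * Kl (c : F) = χ (1 : F) * Fintype.card F + 1 := by
  have inner_sum (x : Fˣ) : ∑ c : Fˣ, χ (c : F) * χ (x + c * (x : F)⁻¹) =
      (if x = 1 then χ (1 : F) * Fintype.card F else 0) - χ (x * 1 : F) := by
    have (c : F) : χ c * χ (x + c * (x : F)⁻¹) = χ (x : F) * χ (c * (1 + (x : F)⁻¹)) := by
      simp_rw [← AddChar.map_add_eq_mul]
      exact congrArg _ (by ring)
    simp_rw [this]
    rw [← mul_sum, mul_one]
    split_ifs with hx
    · have card_units : (Fintype.card Fˣ : ℤ) = Fintype.card F - 1 := by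
        rw [Fintype.card_units, Nat.cast_pred Fintype.card_pos]
      rw [hx, Units.val_one, inv_one, CharTwo.add_self_eq_zero]
      simp only [mul_zero, AddChar.map_zero_eq_one, sum_const, card_univ, nsmul_eq_mul, card_units]
      ring
    · have : 1 + (x : F)⁻¹ ≠ 0 := by
        rw [Ne, CharTwo.add_eq_zero, eq_comm, inv_eq_one, Units.val_eq_one]
        exact hx
      rw [sum_units_addChar_mul_right artinSchreierChar_ne_one this]
      ring
  simp_rw [kloostermanSum, mul_sum]
  rw [sum_comm, sum_congr rfl fun x _ ↦ inner_sum x, sum_sub_distrib, sum_ite_eq',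
    sum_units_addChar_mul_right artinSchreierChar_ne_one one_ne_zero]
  simp

end KloostermanCharTwo

section Trace

variable {k F : Type*} [Field k] [Field F] [Algebra k F] [CharP F 2] [Finite F]

theorem trace_sq (y : F) :
    Algebra.trace k F (y ^ 2) = Algebra.trace k F y ^ 2 := by
  apply (algebraMap k F).injective
  rw [map_pow (algebraMap k F), FiniteField.algebraMap_trace_eq_sum_pow,
    FiniteField.algebraMap_trace_eq_sum_pow, sum_pow_char]
  exact sum_congr rfl fun i _ ↦ by rw [← pow_mul, ← pow_mul, mul_comm]

variable [CharP k 2] [Finite k]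

theorem artinSchreierChar_compTrace :
    (artinSchreierChar k).compAddMonoidHom (Algebra.trace k F).toAddMonoidHom =
      artinSchreierChar F := by
  set ψ := (artinSchreierChar k).compAddMonoidHom (Algebra.trace k F).toAddMonoidHom
  have of_eq_one {x : F} (hx : artinSchreierChar F x = 1) : ψ x = 1 := by
    obtain ⟨y, rfl⟩ := artinSchreierChar_eq_one_iff.1 hx
    change artinSchreierChar k (Algebra.trace k F (y ^ 2 + y)) = 1
    rw [map_add, trace_sq, artinSchreierChar_sq_add_self]
  obtain ⟨c, hc⟩ := AddChar.ne_one_iff.1 (artinSchreierChar_ne_one (F := k))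
  obtain ⟨z, rfl⟩ := Algebra.trace_surjective k F c
  have hψz : ψ z = -1 := (artinSchreierChar_eq_one_or _).resolve_left hc
  have hz : artinSchreierChar F z = -1 :=
    (artinSchreierChar_eq_one_or z).resolve_left fun h ↦ hc (of_eq_one h)
  ext x
  rcases artinSchreierChar_eq_one_or x with hx | hx
  · rw [of_eq_one hx, hx]
  · have := of_eq_one (x := x + z) (by rw [AddChar.map_add_eq_mul, hx, hz]; rfl)
    rw [AddChar.map_add_eq_mul, hψz] at this
    linear_combination -this - hx

end Trace

section QuadraticExtension

variable {F K : Type*} [Field F] [Field K] [Algebra F K]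

section Norm

variable [Algebra.IsQuadraticExtension F K]

theorem norm_algebraMap_eq_sq (c : F) : Algebra.norm F (algebraMap F K c) = c ^ 2 := by
  rw [Algebra.norm_algebraMap, Algebra.IsQuadraticExtension.finrank_eq_two]

theorem norm_smul_eq_sq_mul (c : F) (x : K) :
    Algebra.norm F (c • x) = c ^ 2 * Algebra.norm F x := by
  rw [Algebra.smul_def, map_mul, norm_algebraMap_eq_sq]

theorem trace_algebraMap_eq_zero [CharP F 2] (c : F) :
    Algebra.trace F K (algebraMap F K c) = 0 := by
  rw [Algebra.trace_algebraMap, Algebra.IsQuadraticExtension.finrank_eq_two, two_nsmul,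
    CharTwo.add_self_eq_zero]

end Norm

variable [Finite F]

variable (F K) in
open Classical in
/-- The conjugation `x ↦ x ^ q` of an extension `K` of a field `F` with `q` elements; in the
quadratic case it is the nontrivial automorphism of `K` over `F`. -/
noncomputable def conj : K →ₐ[F] K :=
  letI := Fintype.ofFinite F
  FiniteField.frobeniusAlgHom F K

theorem conj_apply (x : K) : conj F K x = x ^ Nat.card F := by
  rw [@Nat.card_eq_fintype_card F (Fintype.ofFinite F)]
  rfl

variable [Algebra.IsQuadraticExtension F K] [Finite K]

theorem conj_conj (x : K) : conj F K (conj F K x) = x := by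
  rw [conj_apply, conj_apply, ← pow_mul, ← sq,
    ← Algebra.IsQuadraticExtension.finrank_eq_two F K, ← Module.natCard_eq_pow_finrank]
  have := Fintype.ofFinite K
  rw [Nat.card_eq_fintype_card, FiniteField.pow_card]

theorem algebraMap_norm_eq_mul_conj (x : K) :
    algebraMap F K (Algebra.norm F x) = x * conj F K x := by
  rw [FiniteField.algebraMap_norm_eq_prod_pow, Algebra.IsQuadraticExtension.finrank_eq_two,
    prod_range_succ, prod_range_one, pow_zero, pow_one, pow_one, conj_apply]

theorem algebraMap_trace_eq_add_conj (x : K) :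
    algebraMap F K (Algebra.trace F K x) = x + conj F K x := by
  rw [FiniteField.algebraMap_trace_eq_sum_pow, Algebra.IsQuadraticExtension.finrank_eq_two,
    sum_range_succ, sum_range_one, pow_zero, pow_one, pow_one, conj_apply]

theorem conj_eq_self_iff {x : K} : conj F K x = x ↔ x ∈ Set.range (algebraMap F K) := by
  refine ⟨fun h ↦ ?_, fun ⟨c, hc⟩ ↦ hc ▸ AlgHom.commutes _ c⟩
  obtain ⟨θ, hθ⟩ := Algebra.trace_surjective F K 1
  refine ⟨Algebra.trace F K (θ * x), ?_⟩
  rw [algebraMap_trace_eq_add_conj, map_mul, h, ← add_mul, ← algebraMap_trace_eq_add_conj, hθ,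
    map_one, one_mul]

theorem norm_add_eq (x : K) {y : K} (hy : y ≠ 0) : Algebra.norm F (x + y) =
    Algebra.norm F x + Algebra.norm F y * (1 + Algebra.trace F K (x / y)) := by
  have hy' : conj F K y ≠ 0 := by simpa
  apply (algebraMap F K).injective
  simp only [map_add, map_mul, map_one, map_div₀, algebraMap_norm_eq_mul_conj,
    algebraMap_trace_eq_add_conj]
  field_simp
  ring

theorem norm_add_one (x : K) :
    Algebra.norm F (x + 1) = Algebra.norm F x + (1 + Algebra.trace F K x) := by
  rw [norm_add_eq x one_ne_zero, map_one, one_mul, div_one]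

variable [CharP K 2]

theorem trace_eq_one_iff {v : K} : Algebra.trace F K v = 1 ↔ conj F K v = v + 1 := by
  rw [← (algebraMap F K).injective.eq_iff, algebraMap_trace_eq_add_conj, map_one,
    ← sub_eq_iff_eq_add', CharTwo.sub_eq_add, add_comm]

theorem trace_eq_one_and_norm_eq_iff {v : K} {e : F} :
    Algebra.trace F K v = 1 ∧ Algebra.norm F v = e ↔
      v ^ 2 + v = algebraMap F K e ∧ v ∉ Set.range (algebraMap F K) := by
  rw [trace_eq_one_iff, ← (algebraMap F K).injective.eq_iff, algebraMap_norm_eq_mul_conj,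
    ← conj_eq_self_iff]
  constructor
  · rintro ⟨conj_eq, norm_eq⟩
    rw [conj_eq] at norm_eq ⊢
    exact ⟨by rw [← norm_eq]; ring, by simp⟩
  · rintro ⟨hv, conj_ne⟩
    have conj_eq : conj F K v = v + 1 := by
      refine (artinSchreier_eq_iff.1 ?_).resolve_left conj_ne
      rw [artinSchreier_apply, artinSchreier_apply, ← map_pow, ← map_add, hv, AlgHom.commutes]
    exact ⟨conj_eq, by rw [conj_eq, ← hv]; ring⟩

variable [CharP F 2]

theorem artinSchreierChar_algebraMap (c : F) : χ (algebraMap F K c) = 1 := by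
  rw [← artinSchreierChar_compTrace (k := F)]
  change artinSchreierChar F (Algebra.trace F K (algebraMap F K c)) = 1
  rw [trace_algebraMap_eq_zero, AddChar.map_zero_eq_one]

theorem card_trace_eq_one_and_norm_eq [Fintype K] [DecidableEq F] (e : F) :
    (#{v : K | Algebra.trace F K v = 1 ∧ Algebra.norm F v = e} : ℤ) = 1 - χ e := by
  classical
  have := Fintype.ofFinite F
  have card_eq := card_filter_add_card_filter_not
    (s := ({v : K | v ^ 2 + v = algebraMap F K e} : Finset K)) (· ∈ Set.range (algebraMap F K))
  have roots_in_F : ({v : K | v ^ 2 + v = algebraMap F K e} : Finset K).filter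
      (· ∈ Set.range (algebraMap F K)) =
        ({c : F | c ^ 2 + c = e} : Finset F).map ⟨_, (algebraMap F K).injective⟩ := by
    ext v
    simp only [mem_filter, mem_univ, true_and, mem_map, Function.Embedding.coeFn_mk]
    constructor
    · rintro ⟨hv, c, rfl⟩
      exact ⟨c, (algebraMap F K).injective (by simpa using hv), rfl⟩
    · rintro ⟨c, rfl, rfl⟩
      simp
  rw [roots_in_F, card_map, filter_filter] at card_eq
  simp_rw [trace_eq_one_and_norm_eq_iff]
  have card_K := card_sq_add_self_eq (algebraMap F K e)
  have card_F := card_sq_add_self_eq e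
  rw [artinSchreierChar_algebraMap] at card_K
  lia

end QuadraticExtension

/-! ### The group of norm one elements -/

section NormOne

variable {F K : Type*} [Field F] [DecidableEq F] [Field K] [Fintype K] [Algebra F K]

variable (F K) in
/-- The elements of `K` whose norm to `F` is one: the unit circle of the extension. -/
noncomputable def normOne : Finset K := {u | Algebra.norm F u = 1}

theorem mem_normOne {u : K} : u ∈ normOne F K ↔ Algebra.norm F u = 1 := mem_filter_univ u

theorem one_mem_normOne : (1 : K) ∈ normOne F K := mem_normOne.2 (map_one _)

theorem mul_mem_normOne {u v : K} (hu : u ∈ normOne F K) (hv : v ∈ normOne F K) :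
    u * v ∈ normOne F K := by
  rw [mem_normOne] at *
  rw [map_mul, hu, hv, one_mul]

variable [Algebra.IsQuadraticExtension F K]

theorem inv_mem_normOne {u : K} (hu : u ∈ normOne F K) : u⁻¹ ∈ normOne F K := by
  rw [mem_normOne] at *
  rw [Algebra.norm_inv, hu, inv_one]

variable [Finite F]

theorem mem_normOne_iff_mul_conj_eq_one {u : K} : u ∈ normOne F K ↔ u * conj F K u = 1 := by
  rw [mem_normOne, ← algebraMap_norm_eq_mul_conj, ← map_one (algebraMap F K),
    (algebraMap F K).injective.eq_iff]

theorem ne_zero_of_mem_normOne {u : K} (hu : u ∈ normOne F K) : u ≠ 0 :=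
  left_ne_zero_of_mul_eq_one (mem_normOne_iff_mul_conj_eq_one.1 hu)

theorem conj_eq_inv_of_mem_normOne {u : K} (hu : u ∈ normOne F K) : conj F K u = u⁻¹ :=
  eq_inv_of_mul_eq_one_right (mem_normOne_iff_mul_conj_eq_one.1 hu)

theorem trace_inv_of_mem_normOne {u : K} (hu : u ∈ normOne F K) :
    Algebra.trace F K u⁻¹ = Algebra.trace F K u := by
  apply (algebraMap F K).injective
  rw [algebraMap_trace_eq_add_conj, algebraMap_trace_eq_add_conj, ← conj_eq_inv_of_mem_normOne hu,
    conj_conj, add_comm]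

variable [CharP K 2]

theorem mem_normOne_and_trace_eq_zero_iff {u : K} :
    u ∈ normOne F K ∧ Algebra.trace F K u = 0 ↔ u = 1 := by
  rw [mem_normOne_iff_mul_conj_eq_one, ← (algebraMap F K).injective.eq_iff,
    algebraMap_trace_eq_add_conj, map_zero, CharTwo.add_eq_zero]
  refine ⟨fun ⟨norm_eq, conj_eq⟩ ↦ ?_, by rintro rfl; simp⟩
  rw [← conj_eq, ← sq, ← one_pow 2] at norm_eq
  exact CharTwo.sq_injective norm_eq

theorem eq_one_of_mem_normOne_of_mem_range {u : K} (hu : u ∈ normOne F K)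
    (h : u ∈ Set.range (algebraMap F K)) : u = 1 := by
  rw [mem_normOne_iff_mul_conj_eq_one, conj_eq_self_iff.2 h, ← sq, ← one_pow 2] at hu
  exact CharTwo.sq_injective hu

variable [CharP F 2]

theorem card_normOne_trace_eq {s : F} (hs : s ≠ 0) :
    (#{u ∈ normOne F K | Algebra.trace F K u = s} : ℤ) = 1 - χ s⁻¹ := by
  rw [← artinSchreierChar_sq, ← card_trace_eq_one_and_norm_eq (K := K), Nat.cast_inj]
  refine card_bij' (fun u _ ↦ s⁻¹ • u) (fun v _ ↦ s • v) ?_ ?_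
    (fun u _ ↦ smul_inv_smul₀ hs u) (fun v _ ↦ inv_smul_smul₀ hs v)
  · simp only [mem_filter, mem_univ, true_and, mem_normOne, norm_smul_eq_sq_mul, map_smul,
      smul_eq_mul]
    rintro u ⟨norm_eq, rfl⟩
    exact ⟨inv_mul_cancel₀ hs, by rw [norm_eq, mul_one]⟩
  · simp only [mem_filter, mem_univ, true_and, mem_normOne, norm_smul_eq_sq_mul, map_smul,
      smul_eq_mul]
    rintro v ⟨trace_eq, norm_eq⟩
    rw [trace_eq, norm_eq, ← mul_pow, mul_inv_cancel₀ hs, one_pow, mul_one]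
    exact ⟨rfl, rfl⟩

theorem sum_normOne_trace [Fintype F] (f : F → ℤ) : ∑ u ∈ normOne F K, f (Algebra.trace F K u) =
    f 0 + ∑ s : Fˣ, (1 - χ (s : F)⁻¹) * f s := by
  rw [← sum_fiberwise (normOne F K) fun u ↦ Algebra.trace F K u, sum_eq_add_sum_units]
  have sum_fiber (s : F) : ∑ u ∈ normOne F K with Algebra.trace F K u = s,
      f (Algebra.trace F K u) = #{u ∈ normOne F K | Algebra.trace F K u = s} * f s := by
    rw [← nsmul_eq_mul, ← sum_const]
    exact sum_congr rfl fun u hu ↦ by rw [(mem_filter.1 hu).2]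
  have trace_eq_zero : {u ∈ normOne F K | Algebra.trace F K u = 0} = {1} := by
    ext u
    rw [mem_filter, mem_normOne_and_trace_eq_zero_iff, mem_singleton]
  simp_rw [sum_fiber, trace_eq_zero, card_normOne_trace_eq (Units.ne_zero (_ : Fˣ)), card_singleton,
    Nat.cast_one, one_mul]

theorem sum_normOne_artinSchreierChar_mul_trace [Fintype F] {c : F} (hc : c ≠ 0) :
    ∑ u ∈ normOne F K, χ (c * Algebra.trace F K u) = -Kl c := by
  rw [sum_normOne_trace fun s ↦ χ (c * s)]
  simp_rw [sub_mul, one_mul, ← AddChar.map_add_eq_mul, add_comm _ (c * _), mul_comm c]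
  have := sum_units_add_mul_inv (artinSchreierChar F) (a := c) (b := 1) (.inl hc)
  simp_rw [one_mul, mul_one, mul_comm c] at this
  rw [sum_sub_distrib, sum_units_addChar_mul_right artinSchreierChar_ne_one hc, this, zero_mul,
    AddChar.map_zero_eq_one]
  ring

theorem card_normOne [Fintype F] : (#(normOne F K) : ℤ) = Fintype.card F + 1 := by
  have sum_inv : ∑ s : Fˣ, χ (s : F)⁻¹ = -1 := by
    rw [← sum_units_addChar_mul_right (artinSchreierChar_ne_one (F := F)) one_ne_zero,
      ← Equiv.sum_comp (Equiv.inv Fˣ)]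
    simp
  have card_eq := sum_normOne_trace (K := K) fun _ : F ↦ (1 : ℤ)
  rw [sum_const, nsmul_eq_mul, mul_one] at card_eq
  simp_rw [mul_one] at card_eq
  rw [card_eq, sum_sub_distrib, sum_inv, sum_const, card_univ, Fintype.card_units, nsmul_eq_mul,
    Nat.cast_sub Fintype.card_pos]
  push_cast
  ring

theorem card_normOne_add_mem_normOne [DecidableEq K] {p : K} (hp : p ≠ 0) :
    (#{u ∈ normOne F K | u + p ∈ normOne F K} : ℤ) = 1 - χ (Algebra.norm F p⁻¹) := by
  have norm_ne_zero : Algebra.norm F p ≠ 0 := Algebra.norm_eq_zero_iff.not.2 hp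
  rw [← card_trace_eq_one_and_norm_eq (K := K), Nat.cast_inj]
  refine card_bij' (fun u _ ↦ u / p) (fun v _ ↦ v * p) ?_ ?_
    (fun u _ ↦ div_mul_cancel₀ u hp) (fun v _ ↦ mul_div_cancel_right₀ v hp)
  all_goals
    simp only [mem_filter, mem_univ, true_and, mem_normOne, norm_add_eq _ hp, div_eq_mul_inv,
      map_mul, Algebra.norm_inv, mul_inv_cancel_right₀ hp]
  · rintro u ⟨norm_eq, norm_add⟩
    rw [norm_eq, add_eq_left, mul_eq_zero, or_iff_right norm_ne_zero, CharTwo.add_eq_zero]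
      at norm_add
    exact ⟨norm_add.symm, by rw [norm_eq, one_mul]⟩
  · rintro v ⟨trace_eq, norm_eq⟩
    rw [trace_eq, norm_eq, inv_mul_cancel₀ norm_ne_zero, CharTwo.add_self_eq_zero, mul_zero,
      add_zero]
    exact ⟨rfl, rfl⟩

end NormOne

section PolarCoordinates

variable {F K : Type*} [Field F] [DecidableEq F] [CharP F 2] [Field K] [Fintype K] [Algebra F K]
  [Algebra.IsQuadraticExtension F K]

theorem smul_normOne_injective {v v' : Fˣ} {u u' : K} (hu : u ∈ normOne F K)
    (hu' : u' ∈ normOne F K) (h : (v : F) • u = (v' : F) • u') : v = v' ∧ u = u' := by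
  have norm_eq := congrArg (Algebra.norm F) h
  rw [norm_smul_eq_sq_mul, norm_smul_eq_sq_mul, mem_normOne.1 hu, mem_normOne.1 hu', mul_one,
    mul_one, CharTwo.sq_injective.eq_iff] at norm_eq
  obtain rfl := Units.ext norm_eq
  exact ⟨rfl, (smul_right_injective K v.ne_zero) h⟩

variable [Finite F]

theorem exists_smul_eq_of_ne_zero {y : K} (hy : y ≠ 0) :
    ∃ v : Fˣ, ∃ u ∈ normOne F K, (v : F) • u = y := by
  obtain ⟨v, norm_eq⟩ := FiniteField.isSquare_of_char_two (ringChar.eq F 2) (Algebra.norm F y)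
  have hv : v ≠ 0 := by
    rintro rfl
    exact hy (Algebra.norm_eq_zero_iff.1 (norm_eq.trans (mul_zero 0)))
  refine ⟨Units.mk0 v hv, v⁻¹ • y, ?_, smul_inv_smul₀ hv y⟩
  rw [mem_normOne, norm_smul_eq_sq_mul, norm_eq, inv_pow, sq,
    inv_mul_cancel₀ (mul_ne_zero hv hv)]

/-- Polar coordinates: each nonzero element of `K` is uniquely a nonzero element of `F` times an
element of norm one. -/
theorem sum_units_eq_sum_sum_normOne [Fintype F] [DecidableEq K] (f : K → ℤ) :
    ∑ y : Kˣ, f y = ∑ v : Fˣ, ∑ u ∈ normOne F K, f ((v : F) • u) := by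
  rw [← sum_product', eq_comm]
  refine sum_bij (fun z hz ↦ Units.mk0 ((z.1 : F) • z.2) ?_) ?_ ?_ ?_ ?_
  · exact smul_ne_zero z.1.ne_zero (ne_zero_of_mem_normOne (mem_product.1 hz).2)
  · simp
  · intro z hz z' hz' h
    obtain ⟨hv, hu⟩ := smul_normOne_injective (mem_product.1 hz).2 (mem_product.1 hz').2
      (congrArg Units.val h)
    exact Prod.ext hv hu
  · intro y _
    obtain ⟨v, u, hu, hvu⟩ := exists_smul_eq_of_ne_zero (F := F) y.ne_zero
    exact ⟨(v, u), mem_product.2 ⟨mem_univ _, hu⟩, Units.ext hvu⟩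
  · exact fun _ _ ↦ rfl

/-- In polar coordinates `y = v u` the summand is `χ c * χ (c * Tr u)` with `c = v + 1 / v`. -/
theorem artinSchreierChar_norm_smul_add_one_mul (v : Fˣ) {u : K} (hu : u ∈ normOne F K) :
    χ (Algebra.norm F ((v : F) • u + 1)) * χ (Algebra.norm F (((v : F) • u)⁻¹ + 1)) =
      χ (v + (v : F)⁻¹) * χ ((v + (v : F)⁻¹) * Algebra.trace F K u) := by
  rw [smul_inv₀, norm_add_one, norm_add_one, norm_smul_eq_sq_mul, norm_smul_eq_sq_mul,
    mem_normOne.1 hu, mem_normOne.1 (inv_mem_normOne hu), map_smul, map_smul,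
    trace_inv_of_mem_normOne hu, ← artinSchreierChar_sq (v + (v : F)⁻¹), ← AddChar.map_add_eq_mul,
    ← AddChar.map_add_eq_mul, smul_eq_mul, smul_eq_mul, CharTwo.add_sq]
  congr 1
  linear_combination CharTwo.two_eq_zero (R := F)

end PolarCoordinates

section NormOneQuads

variable {F K : Type*} [Field F] [DecidableEq F] [Field K] [Fintype K] [DecidableEq K]
  [Algebra F K]

/-- The sum of the four entries of a quadruple. -/
def quadSum {K : Type*} [Add K] (v : (K × K) × (K × K)) : K := v.1.1 + v.1.2 + (v.2.1 + v.2.2)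

variable (F K) in
/-- The ordered quadruples of norm one elements with sum `1`, grouped as two pairs. -/
noncomputable def normOneQuads : Finset ((K × K) × (K × K)) :=
  {v ∈ (normOne F K ×ˢ normOne F K) ×ˢ (normOne F K ×ˢ normOne F K) | quadSum v = 1}

theorem mem_normOneQuads {a b c d : K} : ((a, b), (c, d)) ∈ normOneQuads F K ↔
    ((a ∈ normOne F K ∧ b ∈ normOne F K) ∧ c ∈ normOne F K ∧ d ∈ normOne F K) ∧
      a + b + (c + d) = 1 := by
  rw [normOneQuads, mem_filter, mem_product, mem_product, mem_product, quadSum]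

variable [CharP K 2]

theorem card_normOneQuads_eq_sum : #(normOneQuads F K) =
    ∑ p : K, #{v ∈ normOne F K ×ˢ normOne F K | v.1 + v.2 = p} *
      #{v ∈ normOne F K ×ˢ normOne F K | v.1 + v.2 = 1 + p} := by
  rw [card_eq_sum_card_fiberwise (f := fun v ↦ v.1.1 + v.1.2) (t := univ) (by simp)]
  refine sum_congr rfl fun p _ ↦ ?_
  rw [← card_product]
  congr 1
  ext ⟨⟨a, b⟩, c, d⟩
  have add_eq_iff : p + (c + d) = 1 ↔ c + d = 1 + p := by
    rw [← CharTwo.sub_eq_add 1, eq_sub_iff_add_eq']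
  simp only [mem_filter, mem_normOneQuads, mem_product, ← add_eq_iff]
  constructor
  · rintro ⟨⟨⟨hab, hcd⟩, h⟩, rfl⟩
    exact ⟨⟨hab, rfl⟩, hcd, h⟩
  · rintro ⟨⟨hab, rfl⟩, hcd, h⟩
    exact ⟨⟨⟨hab, hcd⟩, h⟩, rfl⟩

variable [Finite F] [CharP F 2] [Algebra.IsQuadraticExtension F K]

theorem card_normOne_pairs_add_eq {p : K} (hp : p ≠ 0) :
    (#{v ∈ normOne F K ×ˢ normOne F K | v.1 + v.2 = p} : ℤ) = 1 - χ (Algebra.norm F p⁻¹) := by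
  rw [← card_normOne_add_mem_normOne hp, Nat.cast_inj]
  refine card_nbij' (fun v ↦ v.1) (fun u ↦ (u, u + p)) ?_ ?_ ?_ ?_
  · rintro ⟨u, v⟩ huv
    obtain ⟨⟨hu, hv⟩, rfl⟩ := by simpa using huv
    simpa [← add_assoc, CharTwo.add_self_eq_zero] using ⟨hu, hv⟩
  · intro u hu
    obtain ⟨hu, hup⟩ := by simpa using hu
    simpa [← add_assoc, CharTwo.add_self_eq_zero] using ⟨hu, hup⟩
  · rintro ⟨u, v⟩ huv
    obtain ⟨-, rfl⟩ := by simpa using huv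
    simp [← add_assoc, CharTwo.add_self_eq_zero]
  · exact fun _ _ ↦ rfl

variable (hχ : χ (1 : F) = 1)
include hχ

theorem card_normOneQuads_eq_sum_norm : (#(normOneQuads F K) : ℤ) =
    ∑ p : K, (1 - χ (Algebra.norm F p⁻¹)) * (1 - χ (Algebra.norm F (1 + p)⁻¹)) := by
  have card_pairs_one :
      (#{v ∈ normOne F K ×ˢ normOne F K | v.1 + v.2 = (1 : K)} : ℤ) = 0 := by
    rw [card_normOne_pairs_add_eq one_ne_zero, inv_one, map_one, hχ, sub_self]
  rw [card_normOneQuads_eq_sum]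
  push_cast
  refine sum_congr rfl fun p _ ↦ ?_
  rcases eq_or_ne p 0 with rfl | hp
  · rw [add_zero, card_pairs_one, inv_one, map_one, hχ, sub_self, mul_zero, mul_zero]
  rcases eq_or_ne p 1 with rfl | hp1
  · rw [card_pairs_one, inv_one, map_one, hχ, sub_self, zero_mul, zero_mul]
  · rw [card_normOne_pairs_add_eq hp,
      card_normOne_pairs_add_eq (CharTwo.add_eq_zero.not.2 hp1.symm)]

/-- The substitution `p = 1 / (y + 1)` makes the two factors symmetric under `y ↦ 1 / y`. -/
theorem card_normOneQuads_eq_sum_units : (#(normOneQuads F K) : ℤ) =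
    ∑ y : Kˣ, (1 - χ (Algebra.norm F (y + 1 : K))) * (1 - χ (Algebra.norm F ((y : K)⁻¹ + 1))) := by
  rw [card_normOneQuads_eq_sum_norm hχ, ← Equiv.sum_comp ((Equiv.addRight 1).trans (Equiv.inv K)),
    sum_eq_add_sum_units]
  simp only [Equiv.trans_apply, Equiv.coe_addRight, Equiv.inv_apply, inv_inv, zero_add, map_one, hχ,
    sub_self, zero_mul]
  refine sum_congr rfl fun y _ ↦ ?_
  rcases eq_or_ne (y : K) 1 with hy | hy
  · simp [hy, CharTwo.add_self_eq_zero]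
  · have hy' : (y : K) + 1 ≠ 0 := CharTwo.add_eq_zero.not.2 hy
    have : 1 + ((y : K) + 1)⁻¹ = y * (y + 1 : K)⁻¹ := by
      field_simp
      rw [add_assoc, CharTwo.add_self_eq_zero, add_zero]
    rw [this, mul_inv, inv_inv, mul_add, inv_mul_cancel₀ y.ne_zero, mul_one, add_comm 1]

omit hχ

variable [Fintype F]

omit [DecidableEq F] in
theorem sum_units_artinSchreierChar_norm :
    ∑ y : Kˣ, χ (Algebra.norm F (y : K)) = -(Fintype.card F + 1 : ℤ) := by
  classical
  rw [sum_units_eq_sum_sum_normOne (F := F) fun y : K ↦ χ (Algebra.norm F y)]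
  have inner_sum (v : Fˣ) : ∑ u ∈ normOne F K, χ (Algebra.norm F ((v : F) • u)) =
      (Fintype.card F + 1) * χ (v : F) := by
    rw [← card_normOne (K := K), ← nsmul_eq_mul, ← sum_const]
    refine sum_congr rfl fun u hu ↦ ?_
    rw [norm_smul_eq_sq_mul, mem_normOne.1 hu, mul_one, artinSchreierChar_sq]
  have sum_char := sum_units_addChar_mul_right (artinSchreierChar_ne_one (F := F)) one_ne_zero
  simp_rw [mul_one] at sum_char
  simp_rw [inner_sum]
  rw [← mul_sum, sum_char, mul_neg_one]

omit [DecidableEq F] in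
theorem sum_units_artinSchreierChar_norm_add_one :
    ∑ y : Kˣ, χ (Algebra.norm F (y + 1 : K)) = -(Fintype.card F : ℤ) - χ (1 : F) := by
  have translate := Equiv.sum_comp (Equiv.addRight (1 : K)) fun y ↦ χ (Algebra.norm F y)
  simp_rw [sum_eq_add_sum_units, Equiv.coe_addRight, sum_units_artinSchreierChar_norm, zero_add,
    map_one, Algebra.norm_zero, AddChar.map_zero_eq_one] at translate
  linear_combination translate

theorem sum_units_artinSchreierChar_norm_mul {w : F} (hw : w ^ 2 + w + 1 = 0) :
    ∑ y : Kˣ, χ (Algebra.norm F (y + 1 : K)) * χ (Algebra.norm F ((y : K)⁻¹ + 1)) =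
      (Fintype.card F : ℤ) * (1 - χ (1 : F)) - Kl w ^ 2 := by
  rw [sum_units_eq_sum_sum_normOne (F := F)
    fun y : K ↦ χ (Algebra.norm F (y + 1)) * χ (Algebra.norm F (y⁻¹ + 1))]
  have inner_sum (v : Fˣ) : ∑ u ∈ normOne F K,
      χ (Algebra.norm F ((v : F) • u + 1)) * χ (Algebra.norm F (((v : F) • u)⁻¹ + 1)) =
        χ (v + (v : F)⁻¹) * ∑ u ∈ normOne F K, χ ((v + (v : F)⁻¹) * Algebra.trace F K u) := by
    rw [mul_sum]
    exact sum_congr rfl fun u hu ↦ artinSchreierChar_norm_smul_add_one_mul v hu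
  simp_rw [inner_sum]
  rw [sum_units_add_inv fun c ↦ χ c * ∑ u ∈ normOne F K, χ (c * Algebra.trace F K u)]
  simp_rw [sum_normOne_artinSchreierChar_mul_trace (Units.ne_zero (_ : Fˣ)), zero_mul,
    AddChar.map_zero_eq_one, one_mul, sum_const, nsmul_eq_mul, mul_one, card_normOne,
    mul_neg, sum_neg_distrib, add_mul, one_mul, sum_add_distrib,
    sum_artinSchreierChar_inv_mul_kloostermanSum_eq_sq hw,
    sum_artinSchreierChar_mul_kloostermanSum]
  ring

theorem card_normOneQuads {w : F} (hw : w ^ 2 + w + 1 = 0) :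
    (#(normOneQuads F K) : ℤ) = ((Fintype.card F : ℤ) + 1) ^ 2 - Kl w ^ 2 := by
  have hχ : χ (1 : F) = 1 :=
    artinSchreierChar_eq_one_iff.2 ⟨w, CharTwo.add_eq_zero.1 hw⟩
  have sum_norm_inv_add_one :
      ∑ y : Kˣ, χ (Algebra.norm F ((y : K)⁻¹ + 1)) = -(Fintype.card F : ℤ) - χ (1 : F) := by
    rw [← sum_units_artinSchreierChar_norm_add_one (K := K), ← Equiv.sum_comp (Equiv.inv Kˣ)]
    simp
  have card_units : (Fintype.card Kˣ : ℤ) = Fintype.card F ^ 2 - 1 := by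
    rw [Fintype.card_units, Nat.cast_sub Fintype.card_pos,
      Module.card_eq_pow_finrank (K := F) (V := K), Algebra.IsQuadraticExtension.finrank_eq_two]
    push_cast
    rfl
  simp_rw [card_normOneQuads_eq_sum_units hχ, sub_mul, mul_sub, one_mul, mul_one, sum_sub_distrib]
  rw [sum_const, card_univ, nsmul_eq_mul, sum_norm_inv_add_one,
    sum_units_artinSchreierChar_norm_add_one, sum_units_artinSchreierChar_norm_mul hw, hχ,
    card_units]
  ring

end NormOneQuads

/-! ### Collisions of values at pairs of norm one elements -/

section Involution

variable {α β : Type*} [DecidableEq α] {s : Finset α} {ι : α → α}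

theorem card_eq_of_involution_of_orbits_le_two (ι_mem : ∀ x ∈ s, ι x ∈ s)
    (ι_ι : ∀ x ∈ s, ι (ι x) = x) (ι_ne : ∀ x ∈ s, ι x ≠ x)
    (orbits : ∀ x ∈ s, ∀ y ∈ s, ∀ z ∈ s, y ∉ ({x, ι x} : Finset α) → z ∉ ({x, ι x} : Finset α) →
      z ∈ ({y, ι y} : Finset α)) :
    #s = 0 ∨ #s = 2 ∨ #s = 4 := by
  have card_orbit {x} (hx : x ∈ s) : #{x, ι x} = 2 := card_pair (ι_ne x hx).symm
  have orbit_subset {x} (hx : x ∈ s) : {x, ι x} ⊆ s :=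
    insert_subset hx (singleton_subset_iff.2 (ι_mem x hx))
  rcases s.eq_empty_or_nonempty with rfl | ⟨x, hx⟩
  · exact .inl card_empty
  by_cases h : s = {x, ι x}
  · exact .inr (.inl (by rw [h, card_orbit hx]))
  obtain ⟨y, hy, hyx⟩ := exists_of_ssubset ((orbit_subset hx).ssubset_of_ne (Ne.symm h))
  have eq_union : s = {x, ι x} ∪ {y, ι y} := by
    refine subset_antisymm (fun z hz ↦ ?_) (union_subset (orbit_subset hx) (orbit_subset hy))
    exact mem_union.2 (or_iff_not_imp_left.2 (orbits x hx y hy z hz hyx))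
  have disjoint : Disjoint {x, ι x} ({y, ι y} : Finset α) := by
    simp only [mem_insert, mem_singleton, not_or] at hyx
    refine disjoint_insert_right.2 ⟨by simpa using hyx, disjoint_singleton_right.2 ?_⟩
    simp only [mem_insert, mem_singleton, not_or]
    exact ⟨fun e ↦ hyx.2 (by rw [← e, ι_ι y hy]), fun e ↦ hyx.1 (by rw [← ι_ι y hy, e, ι_ι x hx])⟩
  rw [eq_union, card_union_of_disjoint disjoint, card_orbit hx, card_orbit hy]
  exact .inr (.inr rfl)

theorem card_eq_outside_orbit [DecidableEq β] (ι_mem : ∀ x ∈ s, ι x ∈ s) (ι_ne : ∀ x ∈ s, ι x ≠ x)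
    {f : α → β} (f_ι : ∀ x ∈ s, f (ι x) = f x) {t : Finset β} (ht : ∀ x ∈ s, f x ∈ t) :
    (#{v ∈ s ×ˢ s | f v.1 = f v.2 ∧ v.2 ∉ ({v.1, ι v.1} : Finset α)} : ℤ) =
      ∑ b ∈ t, (#{x ∈ s | f x = b} : ℤ) * (#{x ∈ s | f x = b} - 2) := by
  have card_row (x) (hx : x ∈ s) :
      (#{y ∈ s | f x = f y ∧ y ∉ ({x, ι x} : Finset α)} : ℤ) = #{y ∈ s | f y = f x} - 2 := by
    have orbit_subset : {x, ι x} ⊆ s.filter (f · = f x) :=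
      insert_subset (mem_filter.2 ⟨hx, rfl⟩)
        (singleton_subset_iff.2 (mem_filter.2 ⟨ι_mem x hx, f_ι x hx⟩))
    rw [← filter_filter, filter_notMem_eq_sdiff]
    simp_rw [eq_comm (a := f x)]
    rw [cast_card_sdiff orbit_subset, card_pair (ι_ne x hx).symm, Nat.cast_ofNat]
  rw [card_filter, sum_product, ← sum_fiberwise_of_maps_to ht]
  push_cast
  refine sum_congr rfl fun b _ ↦ ?_
  rw [← nsmul_eq_mul, ← sum_const]
  refine sum_congr rfl fun x hxb ↦ ?_
  obtain ⟨hx, rfl⟩ := mem_filter.1 hxb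
  rw [← card_row x hx, card_filter]
  push_cast
  rfl

end Involution

section PairValue

variable {K : Type*} [Field K]

/-- The value of `D - 1` at a point `x` outside the subfield, where `D` is the derivative of
`x ^ (3 * q - 2)` in direction `1`, as a function of the pair `(x̄ / x, (x̄ + 1) / (x + 1))`. -/
def pairValue (p : K × K) : K := (1 + p.1) * (1 + p.2) * (1 + p.1 + p.2)

theorem pairValue_swap (p : K × K) : pairValue p.swap = pairValue p := by
  simp only [pairValue, Prod.fst_swap, Prod.snd_swap]
  ring

variable [CharP K 2]

theorem pairValue_add_pairValue (a b c d : K) : pairValue (a, b) + pairValue (c, d) =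
    (a + b + (c + d)) ^ 2 + (a * b + c * d) + (a + b + (c + d)) * (a * b + c * d) +
      ((a + b) * (c * d) + (c + d) * (a * b)) := by
  simp only [pairValue]
  grind [CharTwo.two_eq_zero (R := K)]

/-- With `X = a + b + c + d`, `Z = a b + c d`, `Y = (a + b) c d + (c + d) a b` and `Q = a b c d`,
the first hypothesis reads `X² + Z + X Z + Y = 0` and, since inversion replaces `X`, `Z`, `Y` by
`Y / Q`, `Z / Q`, `X / Q`, the second one reads `Y (Y + Z) + Q (X + Z) = 0`. Eliminating gives
`(X + Z) (X Y + Q) = 0`, and `X = Z` would force the resultant `Z² + X Y` of the two pairs to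
vanish. -/
theorem quadSum_mul_quadSum_inv_eq_one {a b c d : K} (ha : a ≠ 0) (hb : b ≠ 0) (hc : c ≠ 0)
    (hd : d ≠ 0) (h : pairValue (a, b) = pairValue (c, d))
    (h_inv : pairValue (a⁻¹, b⁻¹) = pairValue (c⁻¹, d⁻¹))
    (hac : a ≠ c) (had : a ≠ d) (hbc : b ≠ c) (hbd : b ≠ d) :
    quadSum ((a, b), (c, d)) * quadSum ((a⁻¹, b⁻¹), (c⁻¹, d⁻¹)) = 1 := by
  have two := CharTwo.two_eq_zero (R := K)
  obtain ⟨X, hX⟩ : ∃ X, X = a + b + (c + d) := ⟨_, rfl⟩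
  obtain ⟨Z, hZ⟩ : ∃ Z, Z = a * b + c * d := ⟨_, rfl⟩
  obtain ⟨Y, hY⟩ : ∃ Y, Y = (a + b) * (c * d) + (c + d) * (a * b) := ⟨_, rfl⟩
  obtain ⟨Q, hQ⟩ : ∃ Q, Q = a * b * (c * d) := ⟨_, rfl⟩
  have Q_ne_zero : Q ≠ 0 := hQ ▸ mul_ne_zero (mul_ne_zero ha hb) (mul_ne_zero hc hd)
  have X_inv : a⁻¹ + b⁻¹ + (c⁻¹ + d⁻¹) = Y / Q := by rw [hY, hQ]; field_simp; ring
  have Z_inv : a⁻¹ * b⁻¹ + c⁻¹ * d⁻¹ = Z / Q := by rw [hZ, hQ]; field_simp; ring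
  have Y_inv : (a⁻¹ + b⁻¹) * (c⁻¹ * d⁻¹) + (c⁻¹ + d⁻¹) * (a⁻¹ * b⁻¹) = X / Q := by
    rw [hX, hQ]; field_simp; ring
  rw [← CharTwo.add_eq_zero, pairValue_add_pairValue, ← hX, ← hZ, ← hY] at h
  rw [← CharTwo.add_eq_zero, pairValue_add_pairValue, X_inv, Z_inv, Y_inv] at h_inv
  field_simp at h_inv
  have eliminated : (X + Z) * (X * Y + Q) = 0 := by
    linear_combination Y * h + h_inv - (Y * Z + Y ^ 2) * two
  have resultant : Z ^ 2 + X * Y = (a + c) * (a + d) * ((b + c) * (b + d)) := by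
    rw [hX, hY, hZ]
    linear_combination 2 * (a * b * c * d) * two
  have X_add_Z_ne_zero : X + Z ≠ 0 := by
    intro X_add_Z
    have resultant_eq_zero : Z ^ 2 + X * Y = 0 := by
      rw [← CharTwo.add_eq_zero.1 X_add_Z] at h ⊢
      linear_combination X * h - X ^ 3 * two
    simp only [resultant, mul_eq_zero, CharTwo.add_eq_zero] at resultant_eq_zero
    tauto
  have X_mul_Y : X * Y = Q :=
    CharTwo.add_eq_zero.1 ((mul_eq_zero.1 eliminated).resolve_left X_add_Z_ne_zero)
  rw [quadSum, quadSum, X_inv, ← hX, mul_div_assoc', X_mul_Y, div_self Q_ne_zero]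

end PairValue

section CollisionScale

variable {K : Type*} [Field K]

/-- For `v` with sum `1`, the only scalar `s ≠ 0` for which the two halves of `s • v` can have the
same `pairValue`. -/
def collisionScale (v : (K × K) × (K × K)) : K :=
  (1 + v.1.1 * v.1.2 + v.2.1 * v.2.2) /
    (v.1.1 * v.1.2 * (v.1.1 + v.1.2) + v.2.1 * v.2.2 * (v.2.1 + v.2.2))

theorem quadSum_smul (s : K) (v : (K × K) × (K × K)) : quadSum (s • v) = s * quadSum v := by
  simp only [quadSum, Prod.smul_fst, Prod.smul_snd, smul_eq_mul]
  ring

theorem pairValue_smul_eq_pairValue_smul_iff [CharP K 2] {s : K} {v : (K × K) × (K × K)}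
    (hs : s ≠ 0) (hv : quadSum v = 1) : pairValue (s • v.1) = pairValue (s • v.2) ↔
      1 + v.1.1 * v.1.2 + v.2.1 * v.2.2 =
        s * (v.1.1 * v.1.2 * (v.1.1 + v.1.2) + v.2.1 * v.2.2 * (v.2.1 + v.2.2)) := by
  obtain ⟨⟨a, b⟩, c, d⟩ := v
  simp only [quadSum] at hv
  have factored : pairValue (s • (a, b)) + pairValue (s • (c, d)) = s ^ 2 * (1 + a * b + c * d +
      s * (a * b * (a + b) + c * d * (c + d))) := by
    simp only [Prod.smul_mk, smul_eq_mul]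
    rw [pairValue_add_pairValue]
    linear_combination s ^ 2 * (a + b + (c + d) + 1) * hv +
      s ^ 3 * (a * b * (c + d) + c * d * (a + b)) * CharTwo.two_eq_zero (R := K)
  rw [← CharTwo.add_eq_zero, factored, mul_eq_zero, or_iff_right (pow_ne_zero 2 hs),
    CharTwo.add_eq_zero]

end CollisionScale

section Collisions

variable {F K : Type*} [Field F] [DecidableEq F] [Field K] [Fintype K] [Algebra F K]

section NormOne

variable [CharP K 2] [Finite F] [Algebra.IsQuadraticExtension F K] {w : F}
  (hw : w ^ 2 + w + 1 = 0)
include hw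

/-- The quotients of three norm one elements with sum `0` would be roots of `X ^ 2 + X + 1`; these
lie in `F`, where `1` is the only norm one element. -/
theorem add_add_ne_zero_of_mem_normOne {u v t : K} (hu : u ∈ normOne F K) (hv : v ∈ normOne F K)
    (ht : t ∈ normOne F K) : u + v + t ≠ 0 := by
  intro sum_eq_zero
  have hv0 := ne_zero_of_mem_normOne hv
  have sum_inv : u⁻¹ + v⁻¹ + t⁻¹ = 0 := by
    rw [← conj_eq_inv_of_mem_normOne hu, ← conj_eq_inv_of_mem_normOne hv,
      ← conj_eq_inv_of_mem_normOne ht, ← map_add, ← map_add, sum_eq_zero, map_zero]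
  have hu0 := ne_zero_of_mem_normOne hu
  have ht0 := ne_zero_of_mem_normOne ht
  field_simp at sum_inv
  have ratio_root : (u / v) ^ 2 + u / v + 1 = 0 := by
    field_simp
    linear_combination (u + v) * sum_eq_zero - sum_inv
  have hw' : algebraMap F K w ^ 2 + algebraMap F K w + 1 = 0 := by
    rw [← map_one (algebraMap F K), ← map_pow, ← map_add, ← map_add, hw, map_zero]
  have ratio_mem_range : u / v ∈ Set.range (algebraMap F K) := by
    have factored : (u / v - algebraMap F K w) * (u / v + algebraMap F K (w + 1)) = 0 := by
      rw [map_add, map_one]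
      linear_combination ratio_root - hw'
    rcases mul_eq_zero.1 factored with h | h
    · exact ⟨w, (sub_eq_zero.1 h).symm⟩
    · exact ⟨w + 1, (CharTwo.add_eq_zero.1 h).symm⟩
  have ratio_eq_one : u / v = 1 := eq_one_of_mem_normOne_of_mem_range
    (div_eq_mul_inv u v ▸ mul_mem_normOne hu (inv_mem_normOne hv)) ratio_mem_range
  rw [ratio_eq_one, one_pow, CharTwo.add_self_eq_zero, zero_add] at ratio_root
  exact one_ne_zero ratio_root

theorem add_ne_one_of_mem_normOne {u v : K} (hu : u ∈ normOne F K) (hv : v ∈ normOne F K) :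
    u + v ≠ 1 := fun h ↦
  add_add_ne_zero_of_mem_normOne hw hu hv one_mem_normOne
    (by rw [h, CharTwo.add_self_eq_zero])

theorem pairValue_eq_zero_iff {a b : K} (ha : a ∈ normOne F K) (hb : b ∈ normOne F K) :
    pairValue (a, b) = 0 ↔ a = 1 ∨ b = 1 := by
  rw [pairValue, mul_eq_zero, mul_eq_zero,
    or_iff_left (add_add_ne_zero_of_mem_normOne hw one_mem_normOne ha hb), CharTwo.add_eq_zero,
    CharTwo.add_eq_zero, eq_comm, eq_comm (b := b)]

theorem eq_of_pairValue_eq {a b d : K} (ha : a ∈ normOne F K) (hb : b ∈ normOne F K)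
    (hd : d ∈ normOne F K) (ha1 : a ≠ 1) (h : pairValue (a, b) = pairValue (a, d)) : b = d := by
  have factored : (1 + a) * ((b + d) * (a + b + d)) = 0 := by
    rw [← CharTwo.add_eq_zero, pairValue_add_pairValue] at h
    grind [CharTwo.two_eq_zero (R := K)]
  rw [mul_eq_zero, mul_eq_zero, or_iff_left (add_add_ne_zero_of_mem_normOne hw ha hb hd),
    CharTwo.add_eq_zero, CharTwo.add_eq_zero] at factored
  exact factored.resolve_left ha1.symm

theorem ne_of_mem_normOneQuads [DecidableEq K] {a b c d : K}
    (h : ((a, b), (c, d)) ∈ normOneQuads F K) :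
    (a ≠ b ∧ c ≠ d) ∧ (a ≠ c ∧ a ≠ d) ∧ b ≠ c ∧ b ≠ d := by
  obtain ⟨⟨⟨ha, hb⟩, hc, hd⟩, sum_eq_one⟩ := mem_normOneQuads.1 h
  have ne_one {x y : K} (hx : x ∈ normOne F K) (hy : y ∈ normOne F K) :=
    add_ne_one_of_mem_normOne hw hx hy
  have two := CharTwo.two_eq_zero (R := K)
  refine ⟨⟨?_, ?_⟩, ⟨?_, ?_⟩, ?_, ?_⟩ <;> rintro rfl
  · exact ne_one hc hd (by linear_combination sum_eq_one - a * two)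
  · exact ne_one ha hb (by linear_combination sum_eq_one - c * two)
  · exact ne_one hb hd (by linear_combination sum_eq_one - a * two)
  · exact ne_one hb hc (by linear_combination sum_eq_one - a * two)
  · exact ne_one ha hd (by linear_combination sum_eq_one - b * two)
  · exact ne_one ha hc (by linear_combination sum_eq_one - b * two)

omit hw in
theorem collisionScale_denom_eq [DecidableEq K] {a b c d : K}
    (h : ((a, b), (c, d)) ∈ normOneQuads F K) :
    a * b * (a + b) + c * d * (c + d) =
      a * b * (c * d) * conj F K (1 + a * b + c * d) := by
  obtain ⟨⟨⟨ha, hb⟩, hc, hd⟩, sum_eq_one⟩ := mem_normOneQuads.1 h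
  have sum_inv_eq_one := congrArg (conj F K) sum_eq_one
  simp only [map_add, map_mul, map_one, conj_eq_inv_of_mem_normOne, ha, hb, hc, hd]
    at sum_inv_eq_one ⊢
  have := ne_zero_of_mem_normOne ha
  have := ne_zero_of_mem_normOne hb
  have := ne_zero_of_mem_normOne hc
  have := ne_zero_of_mem_normOne hd
  field_simp at sum_inv_eq_one ⊢
  linear_combination (a * b + c * d) * sum_eq_one - sum_inv_eq_one -
    a * b * (c * d) * CharTwo.two_eq_zero (R := K)

theorem collisionScale_mem_normOne [DecidableEq K] {v : (K × K) × (K × K)}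
    (hv : v ∈ normOneQuads F K) : collisionScale v ∈ normOne F K := by
  obtain ⟨⟨a, b⟩, c, d⟩ := v
  obtain ⟨⟨⟨ha, hb⟩, hc, hd⟩, -⟩ := mem_normOneQuads.1 hv
  have hab := mul_mem_normOne ha hb
  have hcd := mul_mem_normOne hc hd
  have num_ne_zero := add_add_ne_zero_of_mem_normOne hw one_mem_normOne hab hcd
  have conj_num_ne_zero := (_root_.map_ne_zero (conj F K)).2 num_ne_zero
  have hab0 := ne_zero_of_mem_normOne hab
  have hcd0 := ne_zero_of_mem_normOne hcd
  rw [mem_normOne_iff_mul_conj_eq_one, collisionScale, collisionScale_denom_eq hv, map_div₀,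
    map_mul, map_mul (conj F K) (a * b), conj_eq_inv_of_mem_normOne hab,
    conj_eq_inv_of_mem_normOne hcd, conj_conj]
  field_simp
  exact div_self (by simpa only [mul_assoc] using mul_ne_zero hab0 hcd0)

theorem pairValue_smul_eq_iff_eq_collisionScale [DecidableEq K] {s : K} (hs : s ≠ 0)
    {v : (K × K) × (K × K)} (hv : v ∈ normOneQuads F K) :
    pairValue (s • v.1) = pairValue (s • v.2) ↔ s = collisionScale v := by
  have sum_eq_one : quadSum v = 1 := (mem_filter.1 hv).2
  obtain ⟨⟨a, b⟩, c, d⟩ := v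
  obtain ⟨⟨⟨ha, hb⟩, hc, hd⟩, -⟩ := mem_normOneQuads.1 hv
  have hab := mul_mem_normOne ha hb
  have hcd := mul_mem_normOne hc hd
  have denom_ne_zero : a * b * (a + b) + c * d * (c + d) ≠ 0 := by
    rw [collisionScale_denom_eq hv]
    exact mul_ne_zero (ne_zero_of_mem_normOne (mul_mem_normOne hab hcd)) ((_root_.map_ne_zero _).2
      (add_add_ne_zero_of_mem_normOne hw one_mem_normOne hab hcd))
  rw [pairValue_smul_eq_pairValue_smul_iff hs sum_eq_one, collisionScale,
    eq_div_iff denom_ne_zero, eq_comm]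

end NormOne

variable [DecidableEq K]

variable (F K) in
/-- The ordered pairs of distinct norm one elements other than `1`. They parametrize the points of
`K` outside `F`. -/
noncomputable def normOnePairs : Finset (K × K) := ((normOne F K).erase 1).offDiag

theorem mem_normOnePairs {a b : K} : (a, b) ∈ normOnePairs F K ↔
    (a ≠ 1 ∧ a ∈ normOne F K) ∧ (b ≠ 1 ∧ b ∈ normOne F K) ∧ a ≠ b := by
  rw [normOnePairs, mem_offDiag, mem_erase, mem_erase]

theorem swap_mem_normOnePairs {p : K × K} (hp : p ∈ normOnePairs F K) :
    p.swap ∈ normOnePairs F K := by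
  obtain ⟨a, b⟩ := p
  obtain ⟨ha, hb, hab⟩ := mem_normOnePairs.1 hp
  exact mem_normOnePairs.2 ⟨hb, ha, hab.symm⟩

theorem swap_ne_of_mem_normOnePairs {p : K × K} (hp : p ∈ normOnePairs F K) : p.swap ≠ p := by
  obtain ⟨a, b⟩ := p
  exact fun h ↦ (mem_normOnePairs.1 hp).2.2 (Prod.ext_iff.1 h).2

variable (F K) in
/-- The pairs of elements of `normOnePairs F K` with the same `pairValue` that do not agree up to
order. -/
noncomputable def collisions : Finset ((K × K) × (K × K)) :=
  {v ∈ normOnePairs F K ×ˢ normOnePairs F K |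
    pairValue v.1 = pairValue v.2 ∧ v.2 ∉ ({v.1, v.1.swap} : Finset (K × K))}

theorem mem_collisions {p r : K × K} : (p, r) ∈ collisions F K ↔
    (p ∈ normOnePairs F K ∧ r ∈ normOnePairs F K) ∧
      pairValue p = pairValue r ∧ r ∉ ({p, p.swap} : Finset (K × K)) := by
  rw [collisions, mem_filter, mem_product]

variable [CharP K 2] [Finite F] [Algebra.IsQuadraticExtension F K] {w : F}
  (hw : w ^ 2 + w + 1 = 0)
include hw

theorem ne_of_mem_collisions {a b c d : K} (h : ((a, b), (c, d)) ∈ collisions F K) :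
    (a ≠ c ∧ a ≠ d) ∧ b ≠ c ∧ b ≠ d := by
  obtain ⟨⟨hab, hcd⟩, value_eq, h⟩ := mem_collisions.1 h
  obtain ⟨⟨ha1, ha⟩, ⟨hb1, hb⟩, -⟩ := mem_normOnePairs.1 hab
  obtain ⟨⟨-, hc⟩, ⟨-, hd⟩, -⟩ := mem_normOnePairs.1 hcd
  have value_swap (x y : K) : pairValue (x, y) = pairValue (y, x) := pairValue_swap (y, x)
  simp only [mem_insert, mem_singleton, Prod.swap_prod_mk, Prod.mk.injEq, not_or, not_and] at h
  refine ⟨⟨?_, ?_⟩, ?_, ?_⟩ <;> rintro rfl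
  · exact h.1 rfl (eq_of_pairValue_eq hw ha hb hd ha1 value_eq).symm
  · rw [value_swap c a] at value_eq
    exact h.2 (eq_of_pairValue_eq hw ha hb hc ha1 value_eq).symm rfl
  · rw [value_swap a b] at value_eq
    exact h.2 rfl (eq_of_pairValue_eq hw hb ha hd hb1 value_eq).symm
  · rw [value_swap a b, value_swap c b] at value_eq
    exact h.1 (eq_of_pairValue_eq hw hb ha hc hb1 value_eq).symm rfl

theorem quadSum_mem_normOne_of_mem_collisions {v : (K × K) × (K × K)} (hv : v ∈ collisions F K) :
    quadSum v ∈ normOne F K := by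
  obtain ⟨⟨a, b⟩, c, d⟩ := v
  obtain ⟨⟨hac, had⟩, hbc, hbd⟩ := ne_of_mem_collisions hw hv
  obtain ⟨⟨hab, hcd⟩, value_eq, -⟩ := mem_collisions.1 hv
  obtain ⟨⟨-, ha⟩, ⟨-, hb⟩, -⟩ := mem_normOnePairs.1 hab
  obtain ⟨⟨-, hc⟩, ⟨-, hd⟩, -⟩ := mem_normOnePairs.1 hcd
  have value_inv_eq : pairValue (a⁻¹, b⁻¹) = pairValue (c⁻¹, d⁻¹) := by
    have := congrArg (conj F K) value_eq
    simpa only [pairValue, map_mul, map_add, map_one, conj_eq_inv_of_mem_normOne, ha, hb, hc, hd]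
      using this
  rw [mem_normOne_iff_mul_conj_eq_one, ← quadSum_mul_quadSum_inv_eq_one (ne_zero_of_mem_normOne ha)
    (ne_zero_of_mem_normOne hb) (ne_zero_of_mem_normOne hc) (ne_zero_of_mem_normOne hd) value_eq
    value_inv_eq hac had hbc hbd]
  simp only [quadSum, map_add, conj_eq_inv_of_mem_normOne, ha, hb, hc, hd]

/-- Three pairs with the same value would have pairwise sums of norm one, and these three sums add
up to zero. -/
theorem card_pairFiber_eq (b : K) : #{p ∈ normOnePairs F K | pairValue p = b} = 0 ∨
    #{p ∈ normOnePairs F K | pairValue p = b} = 2 ∨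
    #{p ∈ normOnePairs F K | pairValue p = b} = 4 := by
  refine card_eq_of_involution_of_orbits_le_two (ι := Prod.swap) ?_ (fun p _ ↦ p.swap_swap)
    (fun p hp ↦ swap_ne_of_mem_normOnePairs (mem_filter.1 hp).1) ?_
  · intro p hp
    rw [mem_filter] at hp ⊢
    exact ⟨swap_mem_normOnePairs hp.1, (pairValue_swap p).trans hp.2⟩
  intro p hp r hr t ht r_notMem t_notMem
  rw [mem_filter] at hp hr ht
  by_contra t_notMem'
  have sum_mem {p r : K × K} (hp : p ∈ normOnePairs F K ∧ pairValue p = b)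
      (hr : r ∈ normOnePairs F K ∧ pairValue r = b) (h : r ∉ ({p, p.swap} : Finset (K × K))) :
      quadSum (p, r) ∈ normOne F K :=
    quadSum_mem_normOne_of_mem_collisions hw
      (mem_collisions.2 ⟨⟨hp.1, hr.1⟩, hp.2.trans hr.2.symm, h⟩)
  refine add_add_ne_zero_of_mem_normOne hw (sum_mem hp hr r_notMem) (sum_mem hp ht t_notMem)
    (sum_mem hr ht t_notMem') ?_
  simp only [quadSum]
  linear_combination (p.1 + p.2 + (r.1 + r.2) + (t.1 + t.2)) * CharTwo.two_eq_zero (R := K)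

theorem inv_quadSum_smul_mem_normOneQuads {v : (K × K) × (K × K)} (hv : v ∈ collisions F K) :
    (quadSum v)⁻¹ • v ∈ normOneQuads F K := by
  have hX := quadSum_mem_normOne_of_mem_collisions hw hv
  have hX0 := ne_zero_of_mem_normOne hX
  have sum_eq_one : quadSum ((quadSum v)⁻¹ • v) = 1 := by rw [quadSum_smul, inv_mul_cancel₀ hX0]
  obtain ⟨⟨a, b⟩, c, d⟩ := v
  obtain ⟨⟨hab, hcd⟩, -⟩ := mem_collisions.1 hv
  obtain ⟨⟨-, ha⟩, ⟨-, hb⟩, -⟩ := mem_normOnePairs.1 hab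
  obtain ⟨⟨-, hc⟩, ⟨-, hd⟩, -⟩ := mem_normOnePairs.1 hcd
  have smul_mem {x : K} := mul_mem_normOne (v := x) (inv_mem_normOne hX)
  exact mem_normOneQuads.2
    ⟨⟨⟨smul_mem ha, smul_mem hb⟩, smul_mem hc, smul_mem hd⟩, sum_eq_one⟩

theorem mem_collisions_of_pairValue_eq {a b c d : K}
    (h_mem : (a ∈ normOne F K ∧ b ∈ normOne F K) ∧ c ∈ normOne F K ∧ d ∈ normOne F K)
    (h_ne : (a ≠ b ∧ c ≠ d) ∧ (a ≠ c ∧ a ≠ d) ∧ b ≠ c ∧ b ≠ d)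
    (h_value : pairValue (a, b) = pairValue (c, d)) : ((a, b), (c, d)) ∈ collisions F K := by
  obtain ⟨⟨ha, hb⟩, hc, hd⟩ := h_mem
  obtain ⟨⟨hab, hcd⟩, ⟨hac, had⟩, hbc, hbd⟩ := h_ne
  have one_iff : a = 1 ∨ b = 1 ↔ c = 1 ∨ d = 1 := by
    rw [← pairValue_eq_zero_iff hw ha hb, ← pairValue_eq_zero_iff hw hc hd, h_value]
  have ne_one : (a ≠ 1 ∧ b ≠ 1) ∧ c ≠ 1 ∧ d ≠ 1 := by grind
  rw [mem_collisions, mem_normOnePairs, mem_normOnePairs]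
  refine ⟨⟨⟨⟨ne_one.1.1, ha⟩, ⟨ne_one.1.2, hb⟩, hab⟩, ⟨ne_one.2.1, hc⟩, ⟨ne_one.2.2, hd⟩, hcd⟩,
    h_value, ?_⟩
  simp only [mem_insert, mem_singleton, Prod.swap_prod_mk, Prod.mk.injEq, not_or]
  exact ⟨fun h ↦ hac h.1.symm, fun h ↦ hbc h.1.symm⟩

theorem collisionScale_smul_mem_collisions {v : (K × K) × (K × K)} (hv : v ∈ normOneQuads F K) :
    collisionScale v • v ∈ collisions F K := by
  have hs := collisionScale_mem_normOne hw hv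
  have hs0 := ne_zero_of_mem_normOne hs
  have value_eq := (pairValue_smul_eq_iff_eq_collisionScale hw hs0 hv).2 rfl
  obtain ⟨⟨a, b⟩, c, d⟩ := v
  obtain ⟨⟨⟨ha, hb⟩, hc, hd⟩, -⟩ := mem_normOneQuads.1 hv
  obtain ⟨⟨hab, hcd⟩, ⟨hac, had⟩, hbc, hbd⟩ := ne_of_mem_normOneQuads hw hv
  have smul_mem {x : K} := mul_mem_normOne (v := x) hs
  have smul_ne {x y : K} (h : x ≠ y) := (mul_right_injective₀ hs0).ne h
  exact mem_collisions_of_pairValue_eq hw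
    ⟨⟨smul_mem ha, smul_mem hb⟩, smul_mem hc, smul_mem hd⟩
    ⟨⟨smul_ne hab, smul_ne hcd⟩, ⟨smul_ne hac, smul_ne had⟩, smul_ne hbc, smul_ne hbd⟩ value_eq

theorem card_collisions : #(collisions F K) = #(normOneQuads F K) := by
  refine card_nbij' (fun v ↦ (quadSum v)⁻¹ • v) (fun v ↦ collisionScale v • v)
    (fun v hv ↦ inv_quadSum_smul_mem_normOneQuads hw hv)
    (fun v hv ↦ collisionScale_smul_mem_collisions hw hv) (fun v hv ↦ ?_) (fun v hv ↦ ?_)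
  · have hX0 := ne_zero_of_mem_normOne (quadSum_mem_normOne_of_mem_collisions hw hv)
    have smul_smul_eq : quadSum v • (quadSum v)⁻¹ • v = v := smul_inv_smul₀ hX0 v
    have scale_eq := pairValue_smul_eq_iff_eq_collisionScale hw hX0
      (inv_quadSum_smul_mem_normOneQuads hw hv)
    rw [← Prod.smul_fst, ← Prod.smul_snd, smul_smul_eq] at scale_eq
    simp only
    rw [← scale_eq.1 (mem_collisions.1 hv).2.1, smul_smul_eq]
  · have hs0 := ne_zero_of_mem_normOne (collisionScale_mem_normOne hw hv)
    have sum_eq_one : quadSum v = 1 := (mem_filter.1 hv).2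
    simp only [quadSum_smul, sum_eq_one, mul_one]
    exact inv_smul_smul₀ hs0 v

theorem sum_card_pairFiber_mul : ∑ b : K, (#{p ∈ normOnePairs F K | pairValue p = b} : ℤ) *
    (#{p ∈ normOnePairs F K | pairValue p = b} - 2) = #(normOneQuads F K) := by
  rw [← card_collisions hw, collisions, card_eq_outside_orbit (fun p ↦ swap_mem_normOnePairs)
    (fun p ↦ swap_ne_of_mem_normOnePairs) (fun p _ ↦ pairValue_swap p) (fun p _ ↦ mem_univ _)]

end Collisions

/-! ### The differential spectrum -/

section ConjQuotients

variable {F K : Type*} [Field F] [Field K] [Algebra F K]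

variable (F) in
/-- The norm one elements `x̄ / x` and `(x̄ + 1) / (x + 1)` attached to the points `x` and `x + 1`
of `K` outside `F`. -/
noncomputable def conjQuotients [Finite F] (x : K) : K × K :=
  (conj F K x / x, (conj F K x + 1) / (x + 1))

/-- The point `x` of `K` with given `conjQuotients`: the solution of `x̄ = a x`,
`x̄ + 1 = b (x + 1)`. -/
def pointOfQuotients (p : K × K) : K := (1 + p.2) / (p.1 + p.2)

theorem pointOfQuotients_ne_zero [CharP K 2] [DecidableEq F] [Fintype K] [DecidableEq K]
    {p : K × K} (hp : p ∈ normOnePairs F K) : pointOfQuotients p ≠ 0 := by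
  obtain ⟨-, ⟨hb1, -⟩, hab⟩ := mem_normOnePairs.1 hp
  exact div_ne_zero (CharTwo.add_eq_zero.not.2 hb1.symm) (CharTwo.add_eq_zero.not.2 hab)

theorem pow_three_mul_card_sub_two [Fintype F] (x : K) :
    x ^ (3 * Fintype.card F - 2) = conj F K x ^ 3 / x ^ 2 := by
  have one_lt := Fintype.one_lt_card (α := F)
  rcases eq_or_ne x 0 with rfl | hx
  · rw [map_zero, zero_pow (by omega), zero_pow three_ne_zero, zero_div]
  · rw [eq_div_iff (pow_ne_zero 2 hx), ← pow_add, Nat.sub_add_cancel (by omega), conj_apply,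
      Nat.card_eq_fintype_card, ← pow_mul, mul_comm]

theorem derivative_eq_one_of_conj_eq [CharP K 2] [Fintype F] {x : K} (hx : conj F K x = x) :
    (x + 1) ^ (3 * Fintype.card F - 2) + x ^ (3 * Fintype.card F - 2) = 1 := by
  have cube_div_sq (y : K) : y ^ 3 / y ^ 2 = y := by
    rcases eq_or_ne y 0 with rfl | hy
    · simp
    · field_simp
  rw [pow_three_mul_card_sub_two, pow_three_mul_card_sub_two, map_add, map_one, hx, cube_div_sq,
    cube_div_sq, add_right_comm, CharTwo.add_self_eq_zero, zero_add]

variable [Finite F]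

theorem ne_zero_of_conj_ne {x : K} (hx : conj F K x ≠ x) : x ≠ 0 := by
  rintro rfl
  exact hx (map_zero _)

theorem conj_div_self_mem_normOne [Algebra.IsQuadraticExtension F K] [DecidableEq F] [Fintype K]
    {x : K} (hx : x ≠ 0) : conj F K x / x ∈ normOne F K := by
  have := (_root_.map_ne_zero (conj F K)).2 hx
  rw [mem_normOne_iff_mul_conj_eq_one, map_div₀, conj_conj]
  field_simp

variable [CharP K 2]

theorem add_one_ne_zero_of_conj_ne {x : K} (hx : conj F K x ≠ x) : x + 1 ≠ 0 := by
  rw [Ne, CharTwo.add_eq_zero]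
  rintro rfl
  exact hx (map_one _)

theorem pointOfQuotients_conjQuotients {x : K} (hx : conj F K x ≠ x) :
    pointOfQuotients (conjQuotients F x) = x := by
  have hx0 := ne_zero_of_conj_ne hx
  have hx1 := add_one_ne_zero_of_conj_ne hx
  have sum_ne_zero : conj F K x + x ≠ 0 := CharTwo.add_eq_zero.not.2 hx
  have denom_eq : conj F K x / x + (conj F K x + 1) / (x + 1) =
      (conj F K x + x) / (x * (x + 1)) := by
    field_simp
    linear_combination (conj F K x * x) * CharTwo.two_eq_zero (R := K)
  have num_eq : 1 + (conj F K x + 1) / (x + 1) = (conj F K x + x) / (x + 1) := by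
    field_simp
    linear_combination CharTwo.two_eq_zero (R := K)
  rw [pointOfQuotients, conjQuotients, denom_eq, num_eq]
  field_simp

theorem derivative_eq_one_add_pairValue {x : K} (hx : conj F K x ≠ x) :
    conj F K (x + 1) ^ 3 / (x + 1) ^ 2 + conj F K x ^ 3 / x ^ 2 =
      1 + pairValue (conjQuotients F x) := by
  have hx0 := ne_zero_of_conj_ne hx
  have hx1 := add_one_ne_zero_of_conj_ne hx
  rw [map_add, map_one, conjQuotients, pairValue]
  field_simp
  grind [CharTwo.two_eq_zero (R := K)]

variable [Algebra.IsQuadraticExtension F K] [DecidableEq F] [Fintype K] [DecidableEq K]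

theorem conjQuotients_mem_normOnePairs {x : K} (hx : conj F K x ≠ x) :
    conjQuotients F x ∈ normOnePairs F K := by
  have hx0 := ne_zero_of_conj_ne hx
  have hx1 := add_one_ne_zero_of_conj_ne hx
  have second_mem := conj_div_self_mem_normOne (F := F) hx1
  rw [map_add, map_one] at second_mem
  refine mem_normOnePairs.2 ⟨⟨?_, conj_div_self_mem_normOne hx0⟩, ⟨?_, second_mem⟩, ?_⟩
  · rwa [Ne, div_eq_one_iff_eq hx0]
  · rwa [Ne, div_eq_one_iff_eq hx1, add_left_inj]
  · rw [Ne, div_eq_div_iff hx0 hx1]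
    intro h
    exact hx (by linear_combination h)

theorem conj_pointOfQuotients {p : K × K} (hp : p ∈ normOnePairs F K) :
    conj F K (pointOfQuotients p) = p.1 * pointOfQuotients p := by
  obtain ⟨a, b⟩ := p
  obtain ⟨⟨-, ha⟩, ⟨-, hb⟩, hab⟩ := mem_normOnePairs.1 hp
  have ha0 := ne_zero_of_mem_normOne ha
  have hb0 := ne_zero_of_mem_normOne hb
  have sum_ne_zero : a + b ≠ 0 := CharTwo.add_eq_zero.not.2 hab
  have sum_inv : a⁻¹ + b⁻¹ = (a + b) / (a * b) := by
    field_simp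
    ring
  rw [pointOfQuotients, map_div₀, map_add, map_add, map_one, conj_eq_inv_of_mem_normOne ha,
    conj_eq_inv_of_mem_normOne hb, sum_inv]
  field_simp
  ring

theorem conj_pointOfQuotients_ne {p : K × K} (hp : p ∈ normOnePairs F K) :
    conj F K (pointOfQuotients p) ≠ pointOfQuotients p := by
  rw [conj_pointOfQuotients hp, Ne, mul_eq_right₀ (pointOfQuotients_ne_zero hp)]
  exact (mem_normOnePairs.1 hp).1.1

theorem conjQuotients_pointOfQuotients {p : K × K} (hp : p ∈ normOnePairs F K) :
    conjQuotients F (pointOfQuotients p) = p := by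
  have hx := pointOfQuotients_ne_zero hp
  have hx1 := add_one_ne_zero_of_conj_ne (conj_pointOfQuotients_ne hp)
  rw [conjQuotients, conj_pointOfQuotients hp, mul_div_cancel_right₀ _ hx]
  refine Prod.ext rfl ((div_eq_iff hx1).2 ?_)
  have sum_ne_zero : p.1 + p.2 ≠ 0 := CharTwo.add_eq_zero.not.2 (mem_normOnePairs.1 hp).2.2
  have point_mul : pointOfQuotients p * (p.1 + p.2) = 1 + p.2 := div_mul_cancel₀ _ sum_ne_zero
  linear_combination point_mul - (p.2 * pointOfQuotients p - 1) * CharTwo.two_eq_zero (R := K)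

end ConjQuotients

section DiffCount

/-- The number `δ(1, b)` of solutions of `(x + 1) ^ d + x ^ d = b`. -/
noncomputable def diffCount {K : Type*} [Semiring K] (d : ℕ) (b : K) : ℕ :=
  {x : K | (x + 1) ^ d + x ^ d = b}.ncard

/-- The number `ω_i` of `b` with `δ(1, b) = i` for the power function `x ^ d`. -/
noncomputable def diffSpectrum (K : Type*) [Semiring K] (d i : ℕ) : ℕ :=
  {b : K | diffCount d b = i}.ncard

theorem sum_diffCount (K : Type*) [Semiring K] [Fintype K] (d : ℕ) :
    ∑ b : K, diffCount d b = Fintype.card K := by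
  classical
  rw [← card_univ, card_eq_sum_card_fiberwise (f := fun x : K ↦ (x + 1) ^ d + x ^ d) (t := univ)
    (by simp)]
  simp only [diffCount, Set.ncard_eq_toFinset_card', Set.toFinset_ofPred]

variable {F K : Type*} [Field F] [Fintype F] [Field K] [Algebra F K]
  [Algebra.IsQuadraticExtension F K] [CharP K 2]

theorem diffCount_eq_card_pairFiber [DecidableEq F] [Fintype K] [DecidableEq K] {b : K}
    (hb : b ≠ 1) :
    diffCount (3 * Fintype.card F - 2) b =
      #{p ∈ normOnePairs F K | pairValue p = b + 1} := by
  have conj_ne {x : K} (hx : (x + 1) ^ (3 * Fintype.card F - 2) +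
      x ^ (3 * Fintype.card F - 2) = b) : conj F K x ≠ x := fun h ↦
    hb (hx.symm.trans (derivative_eq_one_of_conj_eq h))
  have value_iff {x : K} (hx : conj F K x ≠ x) : (x + 1) ^ (3 * Fintype.card F - 2) +
      x ^ (3 * Fintype.card F - 2) = b ↔ pairValue (conjQuotients F x) = b + 1 := by
    rw [pow_three_mul_card_sub_two, pow_three_mul_card_sub_two,
      derivative_eq_one_add_pairValue hx, ← CharTwo.sub_eq_add b, eq_sub_iff_add_eq']
  rw [diffCount, Set.ncard_eq_toFinset_card', Set.toFinset_ofPred]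
  refine card_nbij' (conjQuotients F) pointOfQuotients (fun x hx ↦ ?_) (fun p hp ↦ ?_)
    (fun x hx ↦ ?_) (fun p hp ↦ ?_)
  · have hx := (mem_filter.1 hx).2
    exact mem_filter.2 ⟨conjQuotients_mem_normOnePairs (conj_ne hx), (value_iff (conj_ne hx)).1 hx⟩
  · obtain ⟨hp, value_eq⟩ := mem_filter.1 hp
    refine mem_filter.2 ⟨mem_univ _, (value_iff (conj_pointOfQuotients_ne hp)).2 ?_⟩
    rwa [conjQuotients_pointOfQuotients hp]
  · exact pointOfQuotients_conjQuotients (conj_ne (mem_filter.1 hx).2)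
  · exact conjQuotients_pointOfQuotients (mem_filter.1 hp).1

variable [Finite K] {w : F} (hw : w ^ 2 + w + 1 = 0)
include hw

theorem derivative_eq_one_iff (x : K) :
    (x + 1) ^ (3 * Fintype.card F - 2) + x ^ (3 * Fintype.card F - 2) = 1 ↔
      x ∈ Set.range (algebraMap F K) := by
  classical
  have := Fintype.ofFinite K
  rw [← conj_eq_self_iff]
  refine ⟨fun h ↦ by_contra fun hx ↦ ?_, derivative_eq_one_of_conj_eq⟩
  rw [pow_three_mul_card_sub_two, pow_three_mul_card_sub_two, derivative_eq_one_add_pairValue hx,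
    add_eq_left] at h
  obtain ⟨⟨ha1, ha⟩, ⟨hb1, hb⟩, -⟩ := mem_normOnePairs.1 (conjQuotients_mem_normOnePairs hx)
  exact ((pairValue_eq_zero_iff hw ha hb).1 h).elim ha1 hb1

theorem diffCount_one : diffCount (3 * Fintype.card F - 2) (1 : K) = Fintype.card F := by
  simp_rw [diffCount, derivative_eq_one_iff hw, Set.ofPred_mem_eq, ← Set.image_univ]
  rw [Set.ncard_image_of_injective _ (algebraMap F K).injective, Set.ncard_univ,
    Nat.card_eq_fintype_card]

theorem diffCount_of_ne_one {b : K} (hb : b ≠ 1) : diffCount (3 * Fintype.card F - 2) b = 0 ∨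
    diffCount (3 * Fintype.card F - 2) b = 2 ∨ diffCount (3 * Fintype.card F - 2) b = 4 := by
  classical
  have := Fintype.ofFinite K
  rw [diffCount_eq_card_pairFiber hb]
  exact card_pairFiber_eq hw (b + 1)

omit [Finite K] in
theorem sum_diffCount_mul_sub_two [CharP F 2] [DecidableEq F] [Fintype K] [DecidableEq K] :
    ∑ b ∈ univ.erase (1 : K),
      (diffCount (3 * Fintype.card F - 2) b : ℤ) * (diffCount (3 * Fintype.card F - 2) b - 2) =
        ((Fintype.card F : ℤ) + 1) ^ 2 - kloostermanSum (artinSchreierChar F) w ^ 2 := by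
  have fiber_zero : #{p ∈ normOnePairs F K | pairValue p = 0} = 0 := by
    rw [card_eq_zero, filter_eq_empty_iff]
    rintro ⟨a, b⟩ hp h
    obtain ⟨⟨ha1, ha⟩, ⟨hb1, hb⟩, -⟩ := mem_normOnePairs.1 hp
    exact ((pairValue_eq_zero_iff hw ha hb).1 h).elim ha1 hb1
  have sum_fiber := sum_card_pairFiber_mul (K := K) hw
  rw [← add_sum_erase univ _ (mem_univ (0 : K)), fiber_zero, Nat.cast_zero, zero_mul, zero_add]
    at sum_fiber
  rw [← card_normOneQuads (K := K) hw, ← sum_fiber]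
  refine sum_equiv (Equiv.addRight (1 : K)) (fun b ↦ ?_) fun b hb ↦ ?_
  · simp [CharTwo.add_eq_zero]
  · rw [diffCount_eq_card_pairFiber (ne_of_mem_erase hb), Equiv.coe_addRight]

end DiffCount

section Spectrum

variable {F K : Type*} [Field F] [Fintype F] [Field K] [Algebra F K]
  [Algebra.IsQuadraticExtension F K] [CharP K 2] [Finite K] {w : F}
  (hw : w ^ 2 + w + 1 = 0)
include hw

theorem diffSpectrum_eq_card_filter_erase [Fintype K] [DecidableEq K] {i : ℕ}
    (hi : i ≠ Fintype.card F) :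
    diffSpectrum K (3 * Fintype.card F - 2) i =
      #{b ∈ univ.erase (1 : K) | diffCount (3 * Fintype.card F - 2) b = i} := by
  rw [diffSpectrum, Set.ncard_eq_toFinset_card', Set.toFinset_ofPred, filter_erase,
    erase_eq_of_notMem]
  simpa [diffCount_one hw] using hi.symm

theorem sum_erase_one_diffCount [Fintype K] [DecidableEq K] (card_gt : 4 < Fintype.card F)
    (G : ℕ → ℤ) :
    ∑ b ∈ univ.erase (1 : K), G (diffCount (3 * Fintype.card F - 2) b) =
      diffSpectrum K (3 * Fintype.card F - 2) 0 * G 0 +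
        diffSpectrum K (3 * Fintype.card F - 2) 2 * G 2 +
          diffSpectrum K (3 * Fintype.card F - 2) 4 * G 4 := by
  have mem_values (b : K) (hb : b ∈ univ.erase 1) :
      diffCount (3 * Fintype.card F - 2) b ∈ ({0, 2, 4} : Finset ℕ) := by
    simpa using diffCount_of_ne_one hw (ne_of_mem_erase hb)
  rw [← sum_fiberwise_of_maps_to' mem_values, sum_insert (by simp), sum_pair (by simp)]
  simp only [sum_const, nsmul_eq_mul]
  rw [diffSpectrum_eq_card_filter_erase hw (by omega),
    diffSpectrum_eq_card_filter_erase hw (by omega),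
    diffSpectrum_eq_card_filter_erase hw (by omega), add_assoc]

theorem diffSpectrum_card (card_gt : 4 < Fintype.card F) :
    diffSpectrum K (3 * Fintype.card F - 2) (Fintype.card F) = 1 := by
  refine Set.ncard_eq_one.2 ⟨1, Set.ext fun b ↦ ⟨fun hb ↦ by_contra fun hb1 ↦ ?_, ?_⟩⟩
  · have count_eq : diffCount (3 * Fintype.card F - 2) b = Fintype.card F := hb
    have := diffCount_of_ne_one hw hb1
    omega
  · rintro rfl
    exact diffCount_one hw

theorem diffSpectrum_eq_zero {i : ℕ} (h0 : i ≠ 0) (h2 : i ≠ 2) (h4 : i ≠ 4)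
    (hi : i ≠ Fintype.card F) : diffSpectrum K (3 * Fintype.card F - 2) i = 0 := by
  have := Fintype.ofFinite K
  classical
  rw [diffSpectrum_eq_card_filter_erase hw hi, card_eq_zero, filter_eq_empty_iff]
  rintro b hb rfl
  have := diffCount_of_ne_one hw (ne_of_mem_erase hb)
  omega

theorem sum_diffSpectrum (card_gt : 4 < Fintype.card F) :
    (diffSpectrum K (3 * Fintype.card F - 2) 0 : ℤ) +
      diffSpectrum K (3 * Fintype.card F - 2) 2 + diffSpectrum K (3 * Fintype.card F - 2) 4 + 1 =
        (Fintype.card F : ℤ) ^ 2 := by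
  have := Fintype.ofFinite K
  classical
  have sum_one := sum_erase_one_diffCount (K := K) hw card_gt fun _ ↦ 1
  rw [sum_const, card_erase_of_mem (mem_univ _), card_univ, nsmul_eq_mul,
    Nat.cast_sub Fintype.card_pos, Module.card_eq_pow_finrank (K := F) (V := K),
    Algebra.IsQuadraticExtension.finrank_eq_two] at sum_one
  push_cast at sum_one
  linarith

theorem sum_mul_diffSpectrum (card_gt : 4 < Fintype.card F) :
    2 * (diffSpectrum K (3 * Fintype.card F - 2) 2 : ℤ) +
      4 * diffSpectrum K (3 * Fintype.card F - 2) 4 =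
        (Fintype.card F : ℤ) ^ 2 - Fintype.card F := by
  have := Fintype.ofFinite K
  classical
  have sum_count := sum_erase_one_diffCount (K := K) hw card_gt fun i ↦ i
  have sum_univ := congrArg (Nat.cast : ℕ → ℤ) (sum_diffCount K (3 * Fintype.card F - 2))
  rw [← add_sum_erase univ _ (mem_univ (1 : K)), diffCount_one hw,
    Module.card_eq_pow_finrank (K := F) (V := K),
    Algebra.IsQuadraticExtension.finrank_eq_two] at sum_univ
  push_cast at sum_count sum_univ
  linarith

theorem eight_mul_diffSpectrum_four [CharP F 2] [DecidableEq F] (card_gt : 4 < Fintype.card F) :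
    8 * (diffSpectrum K (3 * Fintype.card F - 2) 4 : ℤ) =
      ((Fintype.card F : ℤ) + 1) ^ 2 - kloostermanSum (artinSchreierChar F) w ^ 2 := by
  have := Fintype.ofFinite K
  classical
  have sum_mul := sum_erase_one_diffCount (K := K) hw card_gt fun i ↦ (i : ℤ) * (i - 2)
  rw [sum_diffCount_mul_sub_two hw] at sum_mul
  push_cast at sum_mul
  linarith

end Spectrum

/-! ### The Kloosterman sum at a primitive cube root of unity -/

section Dickson

variable {R : Type*} [CommRing R]

theorem eval_dickson_one_sq (r x : R) :
    ∀ n : ℕ, (dickson 1 (r ^ 2) n).eval (r * x) = r ^ n * (Chebyshev.C R n).eval x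
  | 0 => by norm_num
  | 1 => by simp
  | n + 2 => by
    rw [dickson_add_two, eval_sub, eval_mul, eval_mul, eval_X, eval_C, Nat.cast_add, Nat.cast_two,
      Chebyshev.C_add_two, eval_sub, eval_mul, eval_X, eval_dickson_one_sq r x n,
      eval_dickson_one_sq r x (n + 1), Nat.cast_add_one]
    ring

theorem eval_C_two_mul (n : ℤ) (x : R) :
    (Chebyshev.C R (2 * n)).eval x = (Chebyshev.C R n).eval x ^ 2 - 2 := by
  simp [Chebyshev.C_mul, Chebyshev.C_two]

theorem eq_eval_C {τ : ℕ → R} {x : R} (τ_one : τ 1 = x) (τ_two : τ 2 = x ^ 2 - 2)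
    (τ_add_three : ∀ n, τ (n + 3) = x * τ (n + 2) - τ (n + 1)) :
    ∀ {n : ℕ}, n ≠ 0 → τ n = (Chebyshev.C R n).eval x
  | 1, _ => by simp [τ_one]
  | 2, _ => by simp [τ_two, Chebyshev.C_two]
  | n + 3, _ => by
    have C_add_three := Chebyshev.C_add_two R (n + 1)
    rw [τ_add_three, eq_eval_C τ_one τ_two τ_add_three n.succ_ne_zero,
      eq_eval_C τ_one τ_two τ_add_three (n + 1).succ_ne_zero]
    push_cast
    rw [show (n + 3 : ℤ) = n + 1 + 2 by ring, C_add_three, eval_sub, eval_mul, eval_X,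
      add_assoc (n : ℤ) 1 1, one_add_one_eq_two]

end Dickson

section FourElements

variable {k : Type*} [Field k] [Fintype k]

theorem exists_sq_add_self_add_one_eq_zero (hk : Fintype.card k = 4) :
    ∃ w : k, w ^ 2 + w + 1 = 0 := by
  classical
  obtain ⟨w, hw⟩ : ∃ w, w ∉ ({0, 1} : Finset k) := by
    by_contra! h
    have card_le : #(univ : Finset k) ≤ 2 := (card_le_card fun x _ ↦ h x).trans card_le_two
    rw [card_univ, hk] at card_le
    omega
  rw [mem_insert, mem_singleton, not_or] at hw
  have pow_four : w ^ 4 = w := hk ▸ FiniteField.pow_card w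
  have mul_eq_zero : w * (w - 1) * (w ^ 2 + w + 1) = 0 := by linear_combination pow_four
  exact ⟨w, (_root_.mul_eq_zero.1 mul_eq_zero).resolve_left
    (mul_ne_zero hw.1 (sub_ne_zero.2 hw.2))⟩

variable [CharP k 2] [DecidableEq k] {w : k} (hk : Fintype.card k = 4) (hw : w ^ 2 + w + 1 = 0)
include hk hw

omit [DecidableEq k] in
theorem artinSchreierChar_eq_neg_one_of_card_eq_four : artinSchreierChar k w = -1 := by
  refine (artinSchreierChar_eq_one_or w).resolve_left fun h ↦ ?_
  obtain ⟨y, rfl⟩ := artinSchreierChar_eq_one_iff.1 h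
  have pow_four : y ^ 4 = y := hk ▸ FiniteField.pow_card y
  refine one_ne_zero (α := k) ?_
  linear_combination hw - pow_four - (y ^ 3 + y ^ 2 + y) * CharTwo.two_eq_zero (R := k)

theorem kloostermanSum_eq_neg_one_of_card_eq_four :
    kloostermanSum (artinSchreierChar k) w = -1 := by
  have hw0 := ne_zero_of_sq_add_self_add_one_eq_zero hw
  have hw1 : w ≠ 1 := by
    rintro rfl
    exact one_ne_zero (α := k) (by linear_combination hw - CharTwo.two_eq_zero (R := k))
  have sq_eq : w ^ 2 = w + 1 := by
    linear_combination hw - (w + 1) * CharTwo.two_eq_zero (R := k)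
  have w_add_one_ne_zero : w + 1 ≠ 0 := sq_eq ▸ pow_ne_zero 2 hw0
  have zero_notMem : (0 : k) ∉ ({1, w, w + 1} : Finset k) := by
    simp [hw0.symm, w_add_one_ne_zero.symm]
  have one_notMem : (1 : k) ∉ ({w, w + 1} : Finset k) := by simp [hw0, hw1.symm]
  have w_notMem : w ∉ ({w + 1} : Finset k) := by simp
  have univ_eq : (univ : Finset k) = {0, 1, w, w + 1} := by
    refine ((card_eq_iff_eq_univ _).1 ?_).symm
    rw [hk, card_insert_of_notMem zero_notMem, card_insert_of_notMem one_notMem,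
      card_insert_of_notMem w_notMem, card_singleton]
  have χw := artinSchreierChar_eq_neg_one_of_card_eq_four hk hw
  have χw1 : artinSchreierChar k (w + 1) = -1 := by rw [← sq_eq, artinSchreierChar_sq, χw]
  have inv_eq : (w + 1)⁻¹ = w := inv_eq_of_mul_eq_one_left (by
    linear_combination hw - CharTwo.two_eq_zero (R := k))
  have sum_eq := sum_eq_add_sum_units fun x : k ↦ artinSchreierChar k (x + w * x⁻¹)
  rw [univ_eq, sum_insert zero_notMem, add_right_inj, sum_insert one_notMem,
    sum_insert w_notMem, sum_singleton, inv_one, mul_one, mul_inv_cancel₀ hw0, inv_eq,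
    add_comm 1 w, χw1, ← sq, add_right_comm, add_comm w, hw, AddChar.map_zero_eq_one] at sum_eq
  exact sum_eq.symm

end FourElements

section Value

variable {k F : Type*} [Field k] [Fintype k] [CharP k 2] [Field F] [Fintype F] [DecidableEq F]
  [CharP F 2] [Algebra k F] {w : k}

theorem sq_kloostermanSum_algebraMap (hk : Fintype.card k = 4) (hw : w ^ 2 + w + 1 = 0) :
    ((kloostermanSum (artinSchreierChar F) (algebraMap k F w) : ℤ) : ℚ) ^ 2 =
      Fintype.card F * ((Chebyshev.C ℚ (2 * Module.finrank k F)).eval (1 / 2) + 2) := by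
  classical
  have hw0 := ne_zero_of_sq_add_self_add_one_eq_zero hw
  have lift := kloostermanSum_compTrace (F := F) (artinSchreierChar_ne_one (F := k)) hw0
  rw [artinSchreierChar_compTrace, kloostermanSum_eq_neg_one_of_card_eq_four hk hw, neg_neg,
    hk] at lift
  have scaled := eval_dickson_one_sq (2 : ℚ) (1 / 2) (Module.finrank k F)
  have cast_eval : (((dickson 1 ((4 : ℕ) : ℤ) (Module.finrank k F)).eval 1 : ℤ) : ℚ) =
      (dickson 1 ((2 : ℚ) ^ 2) (Module.finrank k F)).eval (2 * (1 / 2)) := by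
    have := eval_intCast_map (Int.castRingHom ℚ) (dickson 1 ((4 : ℕ) : ℤ) (Module.finrank k F)) 1
    rw [map_dickson] at this
    norm_num at this ⊢
    exact this.symm
  rw [lift, Int.cast_neg, neg_sq, cast_eval, scaled, eval_C_two_mul, sub_add_cancel,
    Module.card_eq_pow_finrank (K := k) (V := F), hk, mul_pow, ← pow_mul, mul_comm _ 2, pow_mul]
  norm_num

end Value

section Existence

theorem nonempty_galoisField_ringHom {p : ℕ} [Fact p.Prime] {K : Type*} [Field K] [Finite K]
    [CharP K p] {m n : ℕ} (hm : m ≠ 0) (hmn : m ∣ n) (hK : Nat.card K = p ^ n) :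
    Nonempty (GaloisField p m →+* K) := by
  let _ := ZMod.algebra K p
  have finrank_eq : Module.finrank (ZMod p) K = n :=
    Nat.pow_right_injective (Fact.out : p.Prime).two_le
      ((FiniteField.pow_finrank_eq_natCard p K).trans hK)
  obtain ⟨f⟩ := FiniteField.nonempty_algHom_of_finrank_dvd (F := ZMod p) (K := GaloisField p m)
    (L := K) (by rwa [GaloisField.finrank p hm, finrank_eq])
  exact ⟨f.toRingHom⟩

theorem exists_quadratic_subfield {p : ℕ} [Fact p.Prime] {K : Type*} [Field K] [Finite K]
    [CharP K p] {m : ℕ} (hm : m ≠ 0) (hK : Nat.card K = (p ^ m) ^ 2) :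
    ∃ (F : Type) (_ : Field F) (_ : Fintype F) (_ : CharP F p) (_ : Algebra F K),
      Algebra.IsQuadraticExtension F K ∧ Fintype.card F = p ^ m := by
  have := Fintype.ofFinite (GaloisField p m)
  have card_eq : Fintype.card (GaloisField p m) = p ^ m :=
    Nat.card_eq_fintype_card.symm.trans (GaloisField.card p m hm)
  obtain ⟨f⟩ := nonempty_galoisField_ringHom hm (dvd_mul_right m 2) (hK.trans (pow_mul p m 2).symm)
  algebraize [f]
  refine ⟨GaloisField p m, _, _, inferInstance, f.toAlgebra, ⟨?_⟩, card_eq⟩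
  have card_eq_pow := Module.natCard_eq_pow_finrank (K := GaloisField p m) (V := K)
  rw [hK, GaloisField.card p m hm] at card_eq_pow
  exact (Nat.pow_right_injective (Nat.one_lt_pow hm (Fact.out : p.Prime).one_lt) card_eq_pow).symm

theorem exists_sq_kloostermanSum_eq {F : Type*} [Field F] [Fintype F] [DecidableEq F] [CharP F 2]
    {m : ℕ} (hm : Even m) (hF : Fintype.card F = 2 ^ m) :
    ∃ w : F, w ^ 2 + w + 1 = 0 ∧ ((kloostermanSum (artinSchreierChar F) w : ℤ) : ℚ) ^ 2 =
      Fintype.card F * ((Chebyshev.C ℚ m).eval (1 / 2) + 2) := by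
  obtain ⟨n, rfl⟩ := even_iff_exists_two_mul.1 hm
  have := Fintype.ofFinite (GaloisField 2 2)
  have card_four : Fintype.card (GaloisField 2 2) = 4 := by
    rw [← Nat.card_eq_fintype_card, GaloisField.card 2 2 two_ne_zero]
    norm_num
  obtain ⟨f⟩ := nonempty_galoisField_ringHom two_ne_zero ⟨n, rfl⟩
    (Nat.card_eq_fintype_card.trans hF)
  algebraize [f]
  have finrank_eq : Module.finrank (GaloisField 2 2) F = n := by
    have card_eq := Module.card_eq_pow_finrank (K := GaloisField 2 2) (V := F)
    rw [hF, card_four, pow_mul] at card_eq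
    exact (Nat.pow_right_injective (by norm_num) card_eq).symm
  obtain ⟨w, hw⟩ := exists_sq_add_self_add_one_eq_zero card_four
  refine ⟨f w, ?_, by exact_mod_cast finrank_eq ▸ sq_kloostermanSum_algebraMap card_four hw⟩
  rw [← map_pow, ← map_add, ← map_one f, ← map_add, hw, map_zero]

end Existence

end Niho

/-- The differential spectrum of F(x) = x^{3q-2} over F_{q^2},
q = 2^m, m ≥ 4 even: ω_0 = (5q² + (4-τ_m)q - 7)/8, ω_2 = (q² + (τ_m-2)q - 1)/4,
ω_4 = (q² - τ_m q + 1)/8, ω_q = 1, and all other ω_i vanish. -/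
theorem stmt_15 (m : ℕ) (hm : 4 ≤ m) (hme : Even m) (q : ℕ) (hq : q = 2 ^ m)
    (K : Type*) [Field K] [Fintype K] [CharP K 2] (hK : Fintype.card K = q ^ 2)
    (τ : ℕ → ℚ) (hτ1 : τ 1 = 1 / 2) (hτ2 : τ 2 = -7 / 4)
    (hτr : ∀ k, 3 ≤ k → τ k = τ (k - 1) / 2 - τ (k - 2))
    (δ : K → ℕ)
    (hδ : ∀ b : K, δ b = {x : K | (x + 1) ^ (3 * q - 2) + x ^ (3 * q - 2) = b}.ncard)
    (ω : ℕ → ℕ) (hω : ∀ i : ℕ, ω i = {b : K | δ b = i}.ncard) :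
    (ω 0 : ℚ) = (5 * (q : ℚ) ^ 2 + (4 - τ m) * (q : ℚ) - 7) / 8 ∧
    (ω 2 : ℚ) = ((q : ℚ) ^ 2 + (τ m - 2) * (q : ℚ) - 1) / 4 ∧
    (ω 4 : ℚ) = ((q : ℚ) ^ 2 - τ m * (q : ℚ) + 1) / 8 ∧
    ω q = 1 ∧
    (∀ i : ℕ, i ≠ 0 → i ≠ 2 → i ≠ 4 → i ≠ q → ω i = 0) := by
  classical
  obtain rfl : δ = Niho.diffCount (3 * q - 2) := funext hδ
  obtain rfl : ω = Niho.diffSpectrum K (3 * q - 2) := funext hω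
  have hτm : τ m = (Polynomial.Chebyshev.C ℚ m).eval (1 / 2) :=
    Niho.eq_eval_C hτ1 (by rw [hτ2]; norm_num)
      (fun n ↦ by rw [hτr (n + 3) (by omega), one_div_mul_eq_div]; rfl) (by omega)
  obtain ⟨F, _, _, _, _, _, hF⟩ := Niho.exists_quadratic_subfield (p := 2) (K := K) (m := m)
    (by omega) (by rw [Nat.card_eq_fintype_card, hK, hq])
  obtain ⟨w, hw, sq_kloosterman⟩ := Niho.exists_sq_kloostermanSum_eq hme hF
  obtain rfl : q = Fintype.card F := hq.trans hF.symm
  have card_gt : 4 < Fintype.card F := hF ▸ Nat.pow_lt_pow_right one_lt_two (by omega : 2 < m)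
  have total := congrArg (Int.cast : ℤ → ℚ) (Niho.sum_diffSpectrum (K := K) hw card_gt)
  have weighted := congrArg (Int.cast : ℤ → ℚ) (Niho.sum_mul_diffSpectrum (K := K) hw card_gt)
  have four := congrArg (Int.cast : ℤ → ℚ) (Niho.eight_mul_diffSpectrum_four (K := K) hw card_gt)
  push_cast at total weighted four
  rw [sq_kloosterman, ← hτm] at four
  exact ⟨by linarith, by linarith, by linarith, Niho.diffSpectrum_card hw card_gt,
    fun i h0 h2 h4 hi ↦ Niho.diffSpectrum_eq_zero hw h0 h2 h4 hi⟩
end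

section
/- Let q = 2^m where m ≥ 4 is an even integer, and let F(x) = x^{3q-2} be the power function over F_{q^2}. Then F is locally differentially 4-uniform: for every b ∈ F_{q^2} \ F_2 the number δ(1, b) of x ∈ F_{q^2} with F(x + 1) + F(x) = b satisfies δ(1, b) ≤ 4, and moreover there exists b ∈ F_{q^2} \ F_2 with δ(1, b) = 4. -/
/-!
Write `σ x = x ^ q`, an involution of `K` fixing the cube roots of unity since `m` is even. Away
from `x = 0, 1`, the equation `F (x + 1) + F x = b` becomes
`c * (x ^ 2 + x) ^ 2 = (x + σ x) ^ 2 * (x ^ 2 + σ x)` with `c = b + 1`.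

For the upper bound, put `r = (x ^ 2 + σ x) / (x ^ 2 + x)`. Since
`(x ^ 2 + x) * r * (r + 1) ^ 2 = c`, the ratio `r` determines `x` up to `x ↦ x + 1`, and it suffices
that at most two values of `r` occur. They satisfy `σ r * (r ^ 2 + c) = r + c`; eliminating `σ r`
with the conjugate equation gives the quartic `σ c * r ^ 4 + c * r = c ^ 2 * (σ c + 1)`, so the
difference `d` of two values has `σ c * d ^ 3 = c`. Three values are therefore `r`, `r + d`,
`r + w * d` with `w ^ 2 + w + 1 = 0`. As `σ w = w`, this forces `r = w ^ 2 * d`, hence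
`σ c * r ^ 3 = c`, and the quartic yields `σ c = 1`, i.e. `b = 0`.

The value 4 is attained by solutions with `σ z = z + 1`. For these the equation is quadratic in
`v = z ^ 2 + z`, and `v` ranges over the elements of the fixed field of `σ` that are not of the form
`l ^ 2 + l` with `l` in that field. The roots `v = e + 1` and `v = e⁻¹ + 1` share the same `c`.
As `1 = w ^ 2 + w` is of the form `l ^ 2 + l`, it remains to find `e` outside `𝔽₄` such that neither
`e` nor `e⁻¹` is of this form; that such an `e` exists follows by counting.
-/

section ArtinSchreier

variable {F : Type*} [Field F] [CharP F 2]

variable (F) in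
/-- The Artin–Schreier map of a field of characteristic two, written with `+` instead of `-`. -/
def artinSchreier : F →+ F where
  toFun x := x ^ 2 + x
  map_zero' := by ring
  map_add' x y := by grind

@[simp]
lemma artinSchreier_apply (x : F) : artinSchreier F x = x ^ 2 + x := rfl

lemma artinSchreier_eq_iff {x y : F} :
    artinSchreier F x = artinSchreier F y ↔ x = y ∨ x = y + 1 := by
  have factored : artinSchreier F x - artinSchreier F y = (x - y) * (x - (y + 1)) := by
    simp only [artinSchreier_apply]
    grind
  rw [← sub_eq_zero, factored, mul_eq_zero, sub_eq_zero, sub_eq_zero]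

lemma inv_artinSchreier {x : F} (h0 : x ≠ 0) (h1 : x ≠ 1) :
    (artinSchreier F x)⁻¹ = x⁻¹ + (x + 1)⁻¹ := by
  have : x + 1 ≠ 0 := by grind
  rw [artinSchreier_apply]
  grind

lemma index_range_artinSchreier [Finite F] : (artinSchreier F).range.index = 2 := by
  have ker_eq : ((artinSchreier F).ker : Set F) = {0, 1} := by
    ext x
    simpa using artinSchreier_eq_iff (x := x) (y := 0)
  rw [AddSubgroup.index_range, ← SetLike.coe_sort_coe, ker_eq, Nat.card_coe_set_eq,
    Set.ncard_pair zero_ne_one]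

lemma add_mem_range_artinSchreier_iff [Finite F] {x y : F} :
    x + y ∈ (artinSchreier F).range ↔
      (x ∈ (artinSchreier F).range ↔ y ∈ (artinSchreier F).range) :=
  AddSubgroup.add_mem_iff_of_index_two index_range_artinSchreier

lemma ncard_range_artinSchreier_mul_two [Finite F] :
    ((artinSchreier F).range : Set F).ncard * 2 = Nat.card F := by
  rw [← AddSubgroup.card_mul_index (artinSchreier F).range, index_range_artinSchreier,
    ← Nat.card_coe_set_eq, SetLike.coe_sort_coe]

lemma ncard_range_artinSchreier_le_ncard_add_two [Finite F] (w : F) :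
    ((artinSchreier F).range : Set F).ncard ≤
      {e | e ∉ (artinSchreier F).range ∧ artinSchreier F e ≠ artinSchreier F w}.ncard + 2 := by
  have set_eq : {e | e ∉ (artinSchreier F).range ∧ artinSchreier F e ≠ artinSchreier F w} =
      ((artinSchreier F).range : Set F)ᶜ \ {w, w + 1} := by
    ext e
    simp only [ne_eq, artinSchreier_eq_iff]
    rfl
  have card_compl := Set.ncard_add_ncard_compl ((artinSchreier F).range : Set F)
  have card_pair := Set.ncard_pair (a := w) (b := w + 1) (by simp)
  have card_sdiff := Set.le_ncard_sdiff {w, w + 1} ((artinSchreier F).range : Set F)ᶜ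
  have card_range := ncard_range_artinSchreier_mul_two (F := F)
  rw [set_eq]
  omega

lemma inv_artinSchreier_mem_range [Finite F] (one_mem : 1 ∈ (artinSchreier F).range)
    (inv_mem : ∀ e ∉ (artinSchreier F).range, artinSchreier F e ≠ 1 →
      e⁻¹ ∈ (artinSchreier F).range)
    {s : F} (hs : s ∉ (artinSchreier F).range) (hs1 : artinSchreier F s ≠ 1) :
    (artinSchreier F s)⁻¹ ∈ (artinSchreier F).range := by
  have hs' : s + 1 ∉ (artinSchreier F).range := fun h =>
    hs ((add_mem_range_artinSchreier_iff.mp h).mpr one_mem)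
  have hs1' : artinSchreier F (s + 1) ≠ 1 := by
    rwa [artinSchreier_eq_iff.mpr (Or.inr rfl)]
  rw [inv_artinSchreier (ne_of_mem_of_not_mem (zero_mem _) hs).symm
    (ne_of_mem_of_not_mem one_mem hs).symm]
  exact add_mem (inv_mem s hs hs1) (inv_mem (s + 1) hs' hs1')

/- If the claim fails, inversion maps the set `B` of all `e` outside both the range `H` and `𝔽₄`
into `H \ {0, 1}`, which is no larger. But for `s ∈ B` the point `s ^ 2 + s` of `H \ {0, 1}` is
missed, its inverse `s⁻¹ + (s + 1)⁻¹` being in `H`. -/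
lemma exists_notMem_range_artinSchreier_inv_notMem [Finite F] (hF : 4 < Nat.card F)
    (one_mem : 1 ∈ (artinSchreier F).range) :
    ∃ e, e ∉ (artinSchreier F).range ∧ e⁻¹ ∉ (artinSchreier F).range ∧ artinSchreier F e ≠ 1 := by
  by_contra! no_pair
  have inv_mem : ∀ e ∉ (artinSchreier F).range, artinSchreier F e ≠ 1 →
      e⁻¹ ∈ (artinSchreier F).range := fun e he he1 => by_contra fun h => he1 (no_pair e he h)
  set H := (artinSchreier F).range
  let B : Set F := {e | e ∉ H ∧ artinSchreier F e ≠ 1}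
  have ne_zero {e : F} (he : e ∉ H) : e ≠ 0 := (ne_of_mem_of_not_mem H.zero_mem he).symm
  have ne_one {e : F} (he : e ∉ H) : e ≠ 1 := (ne_of_mem_of_not_mem one_mem he).symm
  have card_H : (H : Set F).ncard * 2 = Nat.card F := ncard_range_artinSchreier_mul_two
  have card_B : (H : Set F).ncard ≤ B.ncard + 2 := by
    obtain ⟨w, hw⟩ := one_mem
    simpa only [hw] using ncard_range_artinSchreier_le_ncard_add_two w
  obtain ⟨s, hs, hs1⟩ : B.Nonempty := by
    rw [← Set.ncard_pos]
    omega
  have subset : insert (artinSchreier F s) (Inv.inv '' B) ⊆ (H : Set F) \ {0, 1} := by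
    rintro _ (rfl | ⟨e, ⟨he, he1⟩, rfl⟩)
    · have artinSchreier_ne_zero : artinSchreier F s ≠ 0 := by
        rw [← map_zero (artinSchreier F), Ne, artinSchreier_eq_iff]
        simp [ne_zero hs, ne_one hs]
      exact ⟨⟨s, rfl⟩, by simp only [Set.mem_insert_iff, Set.mem_singleton_iff]; tauto⟩
    · exact ⟨inv_mem e he he1, by simp [ne_zero he, ne_one he]⟩
  have notMem : artinSchreier F s ∉ Inv.inv '' B := by
    rintro ⟨e, he, h⟩
    have := inv_artinSchreier_mem_range one_mem inv_mem hs hs1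
    rw [← h, inv_inv] at this
    exact he.1 this
  have card_le := Set.ncard_le_ncard subset
  rw [Set.ncard_insert_of_notMem notMem, Set.ncard_image_of_injective _ inv_injective,
    Set.ncard_sdiff (by simp [Set.insert_subset_iff, H.zero_mem, one_mem]),
    Set.ncard_pair zero_ne_one] at card_le
  omega

end ArtinSchreier

section Involution

variable {K : Type*} [Field K] [CharP K 2] {σ : K →+* K}

/-- The subfield of elements fixed by `σ`. -/
abbrev fixedSubfield (σ : K →+* K) : Subfield K := σ.eqLocusField (RingHom.id K)

lemma exists_map_eq_add_one (hσ : Function.Involutive σ) (hne : σ ≠ RingHom.id K) :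
    ∃ x, σ x = x + 1 := by
  obtain ⟨y, hy⟩ : ∃ y, σ y ≠ y := by
    simpa [RingHom.ext_iff] using hne
  have trace_ne_zero : y + σ y ≠ 0 := by grind
  have map_trace : σ (y + σ y) = y + σ y := by rw [map_add, hσ y, add_comm]
  refine ⟨y / (y + σ y), ?_⟩
  rw [map_div₀, map_trace, div_add_one trace_ne_zero]
  congr 1
  grind

lemma card_le_sq_card_fixedSubfield [Finite K] (hσ : Function.Involutive σ) :
    Nat.card K ≤ Nat.card (fixedSubfield σ) ^ 2 := by
  let trace : K →+ K := AddMonoidHom.id K + σ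
  have ker_subset : (trace.ker : Set K) ⊆ fixedSubfield σ := by
    intro x (hx : x + σ x = 0)
    exact (CharTwo.add_eq_zero.mp hx).symm
  have range_subset : (trace.range : Set K) ⊆ fixedSubfield σ := by
    rintro _ ⟨x, rfl⟩
    change σ (x + σ x) = x + σ x
    rw [map_add, hσ x, add_comm]
  calc Nat.card K = Nat.card trace.ker * Nat.card trace.range := by
        rw [← AddSubgroup.index_ker, AddSubgroup.card_mul_index]
    _ ≤ Nat.card (fixedSubfield σ) * Nat.card (fixedSubfield σ) := Nat.mul_le_mul
        (Nat.card_mono (Set.toFinite _) ker_subset) (Nat.card_mono (Set.toFinite _) range_subset)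
    _ = Nat.card (fixedSubfield σ) ^ 2 := (sq _).symm

/- For one `x` with `σ x = x + 1`, both `e` and `x ^ 2 + x` lie outside the index-two range, so they
differ by some `l ^ 2 + l`, and `z = x + l` works. -/
lemma exists_artinSchreier_eq_of_notMem_range [Finite K] (hσ : Function.Involutive σ)
    (hne : σ ≠ RingHom.id K) {e : fixedSubfield σ}
    (he : e ∉ (artinSchreier (fixedSubfield σ)).range) :
    ∃ z, σ z = z + 1 ∧ artinSchreier K z = e := by
  obtain ⟨x, hx⟩ := exists_map_eq_add_one hσ hne
  let a : fixedSubfield σ := ⟨artinSchreier K x, by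
    rw [RingHom.mem_eqLocusField, RingHom.id_apply]
    simp only [artinSchreier_apply, map_add, map_pow, hx]
    grind⟩
  have ha : a ∉ (artinSchreier (fixedSubfield σ)).range := by
    rintro ⟨l, hl⟩
    have hlx : artinSchreier K x = artinSchreier K l := congrArg Subtype.val hl.symm
    have hl' : σ l = l := l.2
    rcases artinSchreier_eq_iff.mp hlx with rfl | rfl
    · simp [hl'] at hx
    · simp [hl'] at hx
  obtain ⟨l, hl⟩ : e + a ∈ (artinSchreier (fixedSubfield σ)).range :=
    add_mem_range_artinSchreier_iff.mpr (iff_of_false he ha)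
  have hl' : σ l = l := l.2
  have hlK : artinSchreier K l = e + artinSchreier K x := congrArg Subtype.val hl
  refine ⟨x + l, by rw [map_add, hx, hl']; ring, ?_⟩
  rw [map_add, hlK]
  grind

lemma one_mem_range_artinSchreier_fixedSubfield [Finite K] (hσ : Function.Involutive σ)
    (hne : σ ≠ RingHom.id K) (hσω : ∀ w, w ^ 2 + w + 1 = 0 → σ w = w) :
    1 ∈ (artinSchreier (fixedSubfield σ)).range := by
  by_contra h
  obtain ⟨z, hz, hz1⟩ := exists_artinSchreier_eq_of_notMem_range hσ hne h
  have := hσω z (by rwa [artinSchreier_apply, Subfield.coe_one, ← CharTwo.add_eq_zero] at hz1)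
  simp [hz] at this

/-- The solutions `x ≠ 0, 1` of `F (x + 1) + F x = c + 1` for `F x = σ x ^ 3 / x ^ 2`, with cleared
denominators. If `σ x = x ^ q`, then `F x = x ^ (3 * q - 2)`. -/
def derivativeSolutions (σ : K →+* K) (c : K) : Set K :=
  {x | x ^ 2 + x ≠ 0 ∧ c * (x ^ 2 + x) ^ 2 = (x + σ x) ^ 2 * (x ^ 2 + σ x)}

/-- The invariant that separates the solutions of `derivativeSolutions` up to `x ↦ x + 1`. -/
def solutionRatio (σ : K →+* K) (x : K) : K := (x ^ 2 + σ x) / (x ^ 2 + x)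

/-- The possible values of `solutionRatio` on `derivativeSolutions σ c`, cut out by an equation that
no longer involves the solution itself. -/
def derivativeRatios (σ : K →+* K) (c : K) : Set K :=
  {r | r ≠ 1 ∧ σ r * (r ^ 2 + c) = r + c}

lemma add_one_mem_derivativeSolutions {c x : K} (hx : x ∈ derivativeSolutions σ c) :
    x + 1 ∈ derivativeSolutions σ c := by
  obtain ⟨hne, heq⟩ := hx
  refine ⟨by grind, ?_⟩
  rw [map_add, map_one]
  grind

section Ratio

variable {c x : K}

lemma mul_solutionRatio_add_one (hx : x ^ 2 + x ≠ 0) :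
    (x ^ 2 + x) * (solutionRatio σ x + 1) = x + σ x := by
  rw [mul_add, solutionRatio, mul_div_cancel₀ _ hx]
  grind

lemma mul_solutionRatio_mul_sq (hx : x ∈ derivativeSolutions σ c) :
    (x ^ 2 + x) * (solutionRatio σ x * (solutionRatio σ x + 1) ^ 2) = c := by
  obtain ⟨hne, heq⟩ := hx
  have := mul_solutionRatio_add_one (σ := σ) hne
  grind

lemma add_map_ne_zero (hc : c ≠ 0) (hx : x ∈ derivativeSolutions σ c) : x + σ x ≠ 0 := by
  intro h
  obtain ⟨hne, heq⟩ := hx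
  rw [h] at heq
  grind

/- With `t = x + σ x`, the two quotients `t / (r + 1)` and `t / (σ r + 1)` are `x ^ 2 + x` and its
conjugate, so their sum is `t ^ 2 + t`. -/
lemma add_map_mul_solutionRatio (hσ : Function.Involutive σ) (hc : c ≠ 0)
    (hx : x ∈ derivativeSolutions σ c) :
    (x + σ x) * (solutionRatio σ x + 1) * (σ (solutionRatio σ x) + 1) =
      1 + solutionRatio σ x * σ (solutionRatio σ x) := by
  have htr := add_map_ne_zero hc hx
  have hr := mul_solutionRatio_add_one (σ := σ) hx.1
  have hr' : (σ x ^ 2 + σ x) * (σ (solutionRatio σ x) + 1) = x + σ x := by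
    simpa [hσ x, add_comm] using congrArg σ hr
  refine mul_left_cancel₀ htr ?_
  grind

lemma solutionRatio_mem_derivativeRatios (hσ : Function.Involutive σ) (hc : c ≠ 0)
    (hx : x ∈ derivativeSolutions σ c) : solutionRatio σ x ∈ derivativeRatios σ c := by
  have hr := mul_solutionRatio_add_one (σ := σ) hx.1
  have hcr := mul_solutionRatio_mul_sq hx
  have hrr := add_map_mul_solutionRatio hσ hc hx
  constructor
  · intro h
    rw [h] at hcr
    grind
  · have : c * (σ (solutionRatio σ x) + 1) =
        solutionRatio σ x * (1 + solutionRatio σ x * σ (solutionRatio σ x)) := by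
      rw [← hrr, ← hr, ← hcr]
      ring
    grind

lemma eq_or_eq_add_one_of_solutionRatio_eq {y : K} (hc : c ≠ 0) (hx : x ∈ derivativeSolutions σ c)
    (hy : y ∈ derivativeSolutions σ c) (h : solutionRatio σ x = solutionRatio σ y) :
    x = y ∨ x = y + 1 := by
  have hcx := mul_solutionRatio_mul_sq hx
  have hcy := mul_solutionRatio_mul_sq hy
  rw [← artinSchreier_eq_iff]
  rw [h, ← hcy] at hcx
  refine mul_right_cancel₀ (fun h0 => hc ?_) hcx
  rw [← hcy, h0, mul_zero]

end Ratio

section AtMostTwo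

variable {c r r₁ r₂ : K}

/- Eliminating `σ r` yields a quintic with the spurious root `1`. -/
lemma quartic_of_mem_derivativeRatios (hσ : Function.Involutive σ)
    (hr : r ∈ derivativeRatios σ c) : σ c * r ^ 4 + c * r = c ^ 2 * (σ c + 1) := by
  obtain ⟨hne, heq⟩ := hr
  have conj : r * (σ r ^ 2 + σ c) = σ r + σ c := by simpa [hσ r] using congrArg σ heq
  have quintic : (r + 1) * (σ c * r ^ 4 + c * r + c ^ 2 * (σ c + 1)) = 0 := by grind
  rw [← CharTwo.add_eq_zero]
  exact (mul_eq_zero.mp quintic).resolve_left (by rwa [CharTwo.add_eq_zero])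

lemma mul_add_cube_of_mem_derivativeRatios (hσ : Function.Involutive σ)
    (h₁ : r₁ ∈ derivativeRatios σ c) (h₂ : r₂ ∈ derivativeRatios σ c) (hne : r₁ ≠ r₂) :
    σ c * (r₁ + r₂) ^ 3 = c := by
  have q₁ := quartic_of_mem_derivativeRatios hσ h₁
  have q₂ := quartic_of_mem_derivativeRatios hσ h₂
  have hd : r₁ + r₂ ≠ 0 := by rwa [Ne, CharTwo.add_eq_zero]
  refine mul_left_cancel₀ hd ?_
  grind

lemma exists_eq_mul_of_mul_cube_eq {a c d d' : K} (hc : c ≠ 0) (h : a * d ^ 3 = c)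
    (h' : a * d' ^ 3 = c) (hadd : a * (d + d') ^ 3 = c) :
    ∃ w, w ^ 2 + w + 1 = 0 ∧ d' = w * d := by
  have hd : d ≠ 0 := by grind
  have had : a * d ≠ 0 := by grind
  have quadratic : d' ^ 2 + d' * d + d ^ 2 = 0 := by
    refine (mul_eq_zero.mp ?_).resolve_left had
    grind
  refine ⟨d' / d, ?_, (div_mul_cancel₀ _ hd).symm⟩
  field_simp
  linear_combination quadratic

lemma map_mul_sq_of_mem_derivativeRatios {d : K} (hr : r ∈ derivativeRatios σ c)
    (hrd : r + d ∈ derivativeRatios σ c) :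
    σ r * d ^ 2 + σ d * (r ^ 2 + c) + σ d * d ^ 2 = d := by
  have e₁ := hr.2
  have e₂ := hrd.2
  rw [map_add] at e₂
  grind

lemma eq_sq_mul_of_mem_derivativeRatios {d w : K} (hσ : Function.Involutive σ) (hd : d ≠ 0)
    (hw : w ^ 2 + w + 1 = 0) (hσw : σ w = w) (hr : r ∈ derivativeRatios σ c)
    (hrd : r + d ∈ derivativeRatios σ c) (hrwd : r + w * d ∈ derivativeRatios σ c) :
    r = w ^ 2 * d := by
  have e₁ := map_mul_sq_of_mem_derivativeRatios hr hrd
  have e₂ := map_mul_sq_of_mem_derivativeRatios hr hrwd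
  rw [map_mul, hσw] at e₂
  have hσr : σ r = w ^ 2 * σ d := by
    have : d ^ 2 * (σ r + w ^ 2 * σ d) = 0 := by grind
    rw [← CharTwo.add_eq_zero]
    exact (mul_eq_zero.mp this).resolve_left (pow_ne_zero 2 hd)
  simpa [hσ r, hσ d, hσw] using congrArg σ hσr

/- Three ratios would be `r`, `r + d` and `r + w * d` with `w` a primitive cube root of unity. -/
lemma eq_or_eq_of_mem_derivativeRatios (hσ : Function.Involutive σ)
    (hσω : ∀ w, w ^ 2 + w + 1 = 0 → σ w = w) (hc0 : c ≠ 0) (hc1 : c ≠ 1)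
    (h₁ : r₁ ∈ derivativeRatios σ c) (h₂ : r₂ ∈ derivativeRatios σ c) (h₁₂ : r₁ ≠ r₂)
    (hr : r ∈ derivativeRatios σ c) : r = r₁ ∨ r = r₂ := by
  by_contra! hne
  have cube : σ c * (r + r₁) ^ 3 = c := mul_add_cube_of_mem_derivativeRatios hσ hr h₁ hne.1
  have cube₂ : σ c * (r + r₂) ^ 3 = c := mul_add_cube_of_mem_derivativeRatios hσ hr h₂ hne.2
  have cube₁₂ : σ c * (r₁ + r₂) ^ 3 = c := mul_add_cube_of_mem_derivativeRatios hσ h₁ h₂ h₁₂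
  obtain ⟨w, hw, hwd⟩ := exists_eq_mul_of_mul_cube_eq hc0 cube cube₂ (by grind)
  have hd : r + r₁ ≠ 0 := by rw [Ne, CharTwo.add_eq_zero]; exact hne.1
  have r_eq : r = w ^ 2 * (r + r₁) :=
    eq_sq_mul_of_mem_derivativeRatios hσ hd hw (hσω w hw) hr (by convert h₁; grind)
      (by convert h₂; grind)
  have quartic := quartic_of_mem_derivativeRatios hσ hr
  have r_cube : r ^ 3 = (r + r₁) ^ 3 := by grind
  rw [← r_cube] at cube
  have hσc : σ c = 1 := by grind
  exact hc1 (by simpa [hσ c] using congrArg σ hσc)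

end AtMostTwo

lemma exists_derivativeSolutions_subset (hσ : Function.Involutive σ)
    (hσω : ∀ w, w ^ 2 + w + 1 = 0 → σ w = w) {c : K} (hc0 : c ≠ 0) (hc1 : c ≠ 1) :
    ∃ x y, derivativeSolutions σ c ⊆ {x, x + 1, y, y + 1} := by
  have ratio_mem {z : K} (hz : z ∈ derivativeSolutions σ c) :=
    solutionRatio_mem_derivativeRatios hσ hc0 hz
  by_cases! h : ∃ x ∈ derivativeSolutions σ c, ∃ y ∈ derivativeSolutions σ c,
      solutionRatio σ x ≠ solutionRatio σ y
  · obtain ⟨x, hx, y, hy, hxy⟩ := h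
    refine ⟨x, y, fun z hz => ?_⟩
    rcases eq_or_eq_of_mem_derivativeRatios hσ hσω hc0 hc1 (ratio_mem hx) (ratio_mem hy) hxy
      (ratio_mem hz) with hzx | hzy
    · rcases eq_or_eq_add_one_of_solutionRatio_eq hc0 hz hx hzx with rfl | rfl <;> simp
    · rcases eq_or_eq_add_one_of_solutionRatio_eq hc0 hz hy hzy with rfl | rfl <;> simp
  · obtain hS | ⟨x, hx⟩ := (derivativeSolutions σ c).eq_empty_or_nonempty
    · exact ⟨0, 0, hS ▸ Set.empty_subset _⟩
    · refine ⟨x, x, fun z hz => ?_⟩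
      rcases eq_or_eq_add_one_of_solutionRatio_eq hc0 hz hx (h z hz x hx) with rfl | rfl <;> simp

lemma ncard_derivativeSolutions_le (hσ : Function.Involutive σ)
    (hσω : ∀ w, w ^ 2 + w + 1 = 0 → σ w = w) {c : K} (hc0 : c ≠ 0) (hc1 : c ≠ 1) :
    (derivativeSolutions σ c).ncard ≤ 4 := by
  classical
  obtain ⟨x, y, subset⟩ := exists_derivativeSolutions_subset hσ hσω hc0 hc1
  calc (derivativeSolutions σ c).ncard
      ≤ (({x, x + 1, y, y + 1} : Finset K) : Set K).ncard :=
        Set.ncard_le_ncard (by simpa using subset)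
    _ ≤ 4 := by
        rw [Set.ncard_coe_finset]
        exact Finset.card_le_four

lemma four_le_ncard_derivativeSolutions [Finite K] {c x y : K} (hx : x ∈ derivativeSolutions σ c)
    (hy : y ∈ derivativeSolutions σ c) (hxy : artinSchreier K x ≠ artinSchreier K y) :
    4 ≤ (derivativeSolutions σ c).ncard := by
  have fibre_subset {z : K} (hz : z ∈ derivativeSolutions σ c) :
      {z, z + 1} ⊆ derivativeSolutions σ c :=
    Set.pair_subset hz (add_one_mem_derivativeSolutions hz)
  have fibre_card (z : K) : ({z, z + 1} : Set K).ncard = 2 := Set.ncard_pair (by simp)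
  have disjoint : Disjoint {x, x + 1} ({y, y + 1} : Set K) := by
    rw [Ne, artinSchreier_eq_iff] at hxy
    simp only [Set.disjoint_insert_left, Set.disjoint_singleton_left, Set.mem_insert_iff,
      Set.mem_singleton_iff]
    grind
  calc 4 = ({x, x + 1} ∪ {y, y + 1} : Set K).ncard := by
        rw [Set.ncard_union_eq disjoint, fibre_card, fibre_card]
    _ ≤ (derivativeSolutions σ c).ncard :=
        Set.ncard_le_ncard (Set.union_subset (fibre_subset hx) (fibre_subset hy))

lemma mem_derivativeSolutions_of_map_eq_add_one {e z : K} (he : e ≠ 1) (hz : σ z = z + 1)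
    (hze : artinSchreier K z = e + 1) : z ∈ derivativeSolutions σ (e / (e + 1) ^ 2) := by
  rw [artinSchreier_apply] at hze
  have e_add_one : e + 1 ≠ 0 := by rwa [Ne, CharTwo.add_eq_zero]
  refine ⟨hze ▸ e_add_one, ?_⟩
  rw [hze, hz, div_mul_cancel₀ _ (pow_ne_zero 2 e_add_one)]
  grind

lemma exists_map_eq_add_one_artinSchreier_eq_inv [Finite K] (hσ : Function.Involutive σ)
    (hσω : ∀ w, w ^ 2 + w + 1 = 0 → σ w = w) (hne : σ ≠ RingHom.id K) (hK : 16 < Nat.card K) :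
    ∃ e x y : K, e ≠ 0 ∧ e ≠ 1 ∧ e ^ 2 + e ≠ 1 ∧ (σ x = x + 1 ∧ artinSchreier K x = e + 1) ∧
      (σ y = y + 1 ∧ artinSchreier K y = e⁻¹ + 1) := by
  have card_fixed : 4 < Nat.card (fixedSubfield σ) := by
    have := card_le_sq_card_fixedSubfield hσ
    nlinarith
  have one_mem := one_mem_range_artinSchreier_fixedSubfield hσ hne hσω
  obtain ⟨e, he, he_inv, he1⟩ := exists_notMem_range_artinSchreier_inv_notMem card_fixed one_mem
  have add_one_notMem {f : fixedSubfield σ} (hf : f ∉ (artinSchreier (fixedSubfield σ)).range) :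
      f + 1 ∉ (artinSchreier (fixedSubfield σ)).range := fun h =>
    hf ((add_mem_range_artinSchreier_iff.mp h).mpr one_mem)
  obtain ⟨x, hx⟩ := exists_artinSchreier_eq_of_notMem_range hσ hne (add_one_notMem he)
  obtain ⟨y, hy⟩ := exists_artinSchreier_eq_of_notMem_range hσ hne (add_one_notMem he_inv)
  have e_ne_zero : e ≠ 0 := (ne_of_mem_of_not_mem (zero_mem _) he).symm
  have e_ne_one : e ≠ 1 := (ne_of_mem_of_not_mem one_mem he).symm
  rw [artinSchreier_apply] at he1
  push_cast at hx hy
  exact ⟨e, x, y, mod_cast e_ne_zero, mod_cast e_ne_one, mod_cast he1, hx, hy⟩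

/- On `{z | σ z = z + 1}` the equation only involves `v = z ^ 2 + z`: it reads
`c * v ^ 2 = v + 1`, and `c = e / (e + 1) ^ 2` makes its roots `e + 1` and `e⁻¹ + 1`. -/
lemma exists_ncard_derivativeSolutions_eq_four [Finite K] (hσ : Function.Involutive σ)
    (hσω : ∀ w, w ^ 2 + w + 1 = 0 → σ w = w) (hne : σ ≠ RingHom.id K) (hK : 16 < Nat.card K) :
    ∃ c, c ≠ 0 ∧ c ≠ 1 ∧ (derivativeSolutions σ c).ncard = 4 := by
  obtain ⟨e, x, y, he0, he1, heω, ⟨hx, hxe⟩, hy, hye⟩ :=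
    exists_map_eq_add_one_artinSchreier_eq_inv hσ hσω hne hK
  have e_add_one : e + 1 ≠ 0 := by rwa [Ne, CharTwo.add_eq_zero]
  have hc0 : e / (e + 1) ^ 2 ≠ 0 := div_ne_zero he0 (pow_ne_zero 2 e_add_one)
  have hc1 : e / (e + 1) ^ 2 ≠ 1 := by
    rw [Ne, div_eq_one_iff_eq (pow_ne_zero 2 e_add_one)]
    grind
  have hc_inv : e⁻¹ / (e⁻¹ + 1) ^ 2 = e / (e + 1) ^ 2 := by
    have inv_add_one : e⁻¹ + 1 = (e + 1) / e := by rw [add_div, div_self he0, one_div, add_comm]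
    rw [inv_add_one]
    field_simp
  have x_mem := mem_derivativeSolutions_of_map_eq_add_one he1 hx hxe
  have y_mem := mem_derivativeSolutions_of_map_eq_add_one (inv_ne_one.mpr he1) hy hye
  rw [hc_inv] at y_mem
  have x_ne_y : artinSchreier K x ≠ artinSchreier K y := by
    rw [hxe, hye, Ne, add_left_inj]
    grind
  exact ⟨_, hc0, hc1, (ncard_derivativeSolutions_le hσ hσω hc0 hc1).antisymm
    (four_le_ncard_derivativeSolutions x_mem y_mem x_ne_y)⟩

end Involution

section Frobenius

variable {K : Type*} [Field K]

lemma involutive_iterateFrobenius [Fintype K] {p m : ℕ} [ExpChar K p]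
    (hK : Fintype.card K = (p ^ m) ^ 2) : Function.Involutive (iterateFrobenius K p m) := by
  intro x
  rw [iterateFrobenius_def, iterateFrobenius_def, ← pow_mul, ← sq, ← hK, FiniteField.pow_card]

lemma iterateFrobenius_ne_id [Fintype K] {p m : ℕ} [ExpChar K p]
    (hK : Fintype.card K = (p ^ m) ^ 2) : iterateFrobenius K p m ≠ RingHom.id K := by
  intro h
  have one_lt : 1 < p ^ m := by
    have := hK ▸ Fintype.one_lt_card (α := K)
    exact (one_lt_pow_iff two_ne_zero).mp this
  have : Fintype.card K - 1 ∣ p ^ m - 1 := by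
    rw [← FiniteField.forall_pow_eq_one_iff]
    intro u
    rw [← mul_right_inj u, mul_one, mul_pow_sub_one (by lia), Units.ext_iff,
      Units.val_pow_eq_pow_val, ← iterateFrobenius_def, h, RingHom.id_apply]
  have := Nat.le_of_dvd (by lia) this
  rw [hK] at this
  have := lt_self_pow₀ one_lt one_lt_two
  lia

lemma iterateFrobenius_apply_of_sq_add_self_add_one_eq_zero [CharP K 2] {m : ℕ} (hm : Even m)
    {w : K} (hw : w ^ 2 + w + 1 = 0) : iterateFrobenius K 2 m w = w := by
  have w_cube : w ^ 3 = 1 := by linear_combination (w - 1) * hw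
  have two_pow_mod : 2 ^ m % 3 = 1 := by
    obtain ⟨k, rfl⟩ := hm
    rw [← two_mul, pow_mul, Nat.pow_mod]
    norm_num
  rw [iterateFrobenius_def, pow_eq_pow_mod _ w_cube, two_pow_mod, pow_one]

lemma pow_mul_sq_eq_iterateFrobenius_cube [CharP K 2] (m : ℕ) (x : K) :
    x ^ (3 * 2 ^ m - 2) * x ^ 2 = iterateFrobenius K 2 m x ^ 3 := by
  have : 0 < 2 ^ m := by positivity
  rw [iterateFrobenius_def, ← pow_add, ← pow_mul]
  congr 1
  lia

lemma add_eq_iff_of_mul_sq_eq_cube [CharP K 2] {b u v x y : K} (hx : x ^ 2 + x ≠ 0)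
    (hu : u * x ^ 2 = y ^ 3) (hv : v * (x + 1) ^ 2 = (y + 1) ^ 3) :
    v + u = b ↔ (b + 1) * (x ^ 2 + x) ^ 2 = (x + y) ^ 2 * (x ^ 2 + y) := by
  have sum_eq : (v + u + 1) * (x ^ 2 + x) ^ 2 = (x + y) ^ 2 * (x ^ 2 + y) := by grind
  rw [← sum_eq, mul_left_inj' (pow_ne_zero 2 hx), add_left_inj, eq_comm]

lemma setOf_pow_add_pow_eq [CharP K 2] (m : ℕ) {b : K} (hb : b ≠ 1) :
    {x : K | (x + 1) ^ (3 * 2 ^ m - 2) + x ^ (3 * 2 ^ m - 2) = b} =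
      derivativeSolutions (iterateFrobenius K 2 m) (b + 1) := by
  have exponent_ne_zero : 3 * 2 ^ m - 2 ≠ 0 := by
    have : 0 < 2 ^ m := by positivity
    lia
  ext x
  simp only [derivativeSolutions, Set.mem_ofPred_eq]
  have h := pow_mul_sq_eq_iterateFrobenius_cube m x
  have h' := pow_mul_sq_eq_iterateFrobenius_cube m (x + 1)
  rw [map_add, map_one] at h'
  generalize iterateFrobenius K 2 m x = y at *
  by_cases hx : x ^ 2 + x = 0
  · obtain rfl | rfl : x = 0 ∨ x = 1 := by grind
    · simp [exponent_ne_zero, hb.symm]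
    · simp [exponent_ne_zero, hb.symm, CharTwo.add_self_eq_zero]
  · rw [add_eq_iff_of_mul_sq_eq_cube hx h h']
    exact (and_iff_right hx).symm

end Frobenius

/-- F(x) = x^{3q-2} over F_{q^2} (q = 2^m, m ≥ 4 even) is locally
differentially 4-uniform: δ(1,b) ≤ 4 for all b ∉ F_2, and the value 4 is attained. -/
theorem stmt_16 (m : ℕ) (hm : 4 ≤ m) (hme : Even m) (q : ℕ) (hq : q = 2 ^ m)
    (K : Type*) [Field K] [Fintype K] [CharP K 2] (hK : Fintype.card K = q ^ 2) :
    (∀ b : K, b ≠ 0 → b ≠ 1 →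
        {x : K | (x + 1) ^ (3 * q - 2) + x ^ (3 * q - 2) = b}.ncard ≤ 4) ∧
    (∃ b : K, b ≠ 0 ∧ b ≠ 1 ∧
        {x : K | (x + 1) ^ (3 * q - 2) + x ^ (3 * q - 2) = b}.ncard = 4) := by
  subst hq
  have hσ := involutive_iterateFrobenius hK
  have hσω (w : K) (hw : w ^ 2 + w + 1 = 0) : iterateFrobenius K 2 m w = w :=
    iterateFrobenius_apply_of_sq_add_self_add_one_eq_zero hme hw
  constructor
  · intro b hb0 hb1
    rw [setOf_pow_add_pow_eq m hb1]
    exact ncard_derivativeSolutions_le hσ hσω (by rwa [Ne, CharTwo.add_eq_zero])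
      (by simpa using hb0)
  · have hcard : 16 < Nat.card K := by
      have : 2 ^ 4 ≤ 2 ^ m := Nat.pow_le_pow_right two_pos hm
      rw [Nat.card_eq_fintype_card, hK]
      nlinarith
    obtain ⟨c, hc0, hc1, hc⟩ := exists_ncard_derivativeSolutions_eq_four hσ hσω
      (iterateFrobenius_ne_id hK) hcard
    have hb1 : c + 1 ≠ 1 := by simpa using hc0
    refine ⟨c + 1, by rwa [Ne, CharTwo.add_eq_zero], hb1, ?_⟩
    rwa [setOf_pow_add_pow_eq m hb1, add_assoc, CharTwo.add_self_eq_zero, add_zero]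
end

section
/- Let F(x) = x^{10} be the power function over the finite field F_16 with 16 elements, and for b ∈ F_16 let δ(1, b) denote the number of x ∈ F_16 with F(x + 1) + F(x) = b. Then exactly 12 elements b ∈ F_16 satisfy δ(1, b) = 0, exactly 4 elements b ∈ F_16 satisfy δ(1, b) = 4, and no b ∈ F_16 has δ(1, b) equal to any other nonzero value. -/
/-!
Let `q` be a power of `p` and `K` a field of order `q ^ 2`. The relative trace `T x = x ^ q + x` and
the relative norm `N x = x ^ (q + 1)` satisfy `N (x + 1) - N x = T x + 1`, so the power map
`F = N ^ (p ^ j)` has derivative `F (x + 1) - F x = (T x + 1) ^ (p ^ j)`, an additive map followed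
by an injective one. Its nonempty fibres are thus cosets of the kernel of `T`. Both this kernel and
the range of `T` (which consists of roots of `y ^ q - y`) have at most `q` elements, while their
orders multiply to `q ^ 2`; so both have exactly `q`.

The exponent `10` over the field with `16` elements is the case `p = 2`, `q = 4`, `j = 1`.
-/

section AdditiveFibres

variable {A B C : Type*} [AddGroup A] [AddGroup B] (f : A →+ B) {g : B → C}

lemma ncard_preimage_comp_singleton_of_mem_range (hg : Function.Injective g) {c : C}
    (hc : c ∈ Set.range (g ∘ f)) : ((g ∘ f) ⁻¹' {c}).ncard = Nat.card f.ker := by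
  obtain ⟨a, rfl⟩ := hc
  have hfibre : (g ∘ f) ⁻¹' {(g ∘ f) a} = f ⁻¹' {f a} := Set.ext fun _ => hg.eq_iff
  rw [hfibre, ← Nat.card_coe_set_eq]
  exact Nat.card_congr (f.fiberEquivKer a)

lemma ncard_range_comp_of_injective (hg : Function.Injective g) :
    (Set.range (g ∘ f)).ncard = Nat.card f.range := by
  rw [Set.range_comp, Set.ncard_image_of_injective _ hg, ← AddMonoidHom.coe_range]
  rfl

lemma card_ker_mul_card_range : Nat.card f.ker * Nat.card f.range = Nat.card A := by
  rw [← AddSubgroup.index_ker, AddSubgroup.card_mul_index]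

end AdditiveFibres

open Polynomial in
lemma ncard_pow_add_mul_eq_zero_le {R : Type*} [CommRing R] [IsDomain R] {n : ℕ} (hn : 1 < n)
    (a : R) : {x : R | x ^ n + a * x = 0}.ncard ≤ n := by
  have hlt : (C a * X).natDegree < (X ^ n : R[X]).natDegree := by
    rw [natDegree_X_pow]
    exact ((natDegree_C_mul_le a X).trans natDegree_X_le).trans_lt hn
  have hdeg : (X ^ n + C a * X).natDegree = n := by
    rw [natDegree_add_eq_left_of_natDegree_lt hlt, natDegree_X_pow]
  have hne : X ^ n + C a * X ≠ 0 := ne_zero_of_natDegree_gt (hn.trans_eq hdeg.symm)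
  have hroots : {x : R | x ^ n + a * x = 0} = (X ^ n + C a * X).rootSet R := by
    ext x
    simp [mem_rootSet_of_ne hne]
  rw [hroots]
  exact (ncard_rootSet_le _ R).trans_eq hdeg

section RelativeTrace

/-- The additive map `x ↦ x ^ q + x` with `q = p ^ m`. When `K` is a field of order `q ^ 2`, it is
the trace of `K` over its subfield of order `q`, regarded as a map into `K`. -/
def relativeTrace (K : Type*) [CommRing K] (p m : ℕ) [ExpChar K p] : K →+ K :=
  (iterateFrobenius K p m).toAddMonoidHom + AddMonoidHom.id K

lemma relativeTrace_apply {K : Type*} [CommRing K] (p m : ℕ) [ExpChar K p] (x : K) :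
    relativeTrace K p m x = x ^ p ^ m + x := rfl

lemma add_one_pow_sub_pow_eq_relativeTrace {K : Type*} [CommRing K] (p m j : ℕ) [ExpChar K p]
    (x : K) :
    (x + 1) ^ (p ^ j * (p ^ m + 1)) - x ^ (p ^ j * (p ^ m + 1)) =
      (relativeTrace K p m x + 1) ^ p ^ j := by
  have hnorm : (x + 1) ^ (p ^ m + 1) - x ^ (p ^ m + 1) = relativeTrace K p m x + 1 := by
    rw [pow_succ, add_pow_expChar_pow, one_pow, relativeTrace_apply]
    ring
  rw [← hnorm, sub_pow_expChar_pow]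
  simp only [← pow_mul, mul_comm]

variable {K : Type*} [Field K] [Fintype K] {p m : ℕ} [ExpChar K p]

lemma relativeTrace_pow_eq_self (hK : Fintype.card K = (p ^ m) ^ 2) (x : K) :
    relativeTrace K p m x ^ p ^ m = relativeTrace K p m x := by
  have hx : (x ^ p ^ m) ^ p ^ m = x := by
    rw [← pow_mul, ← sq, ← hK, FiniteField.pow_card]
  rw [relativeTrace_apply, add_pow_expChar_pow, hx, add_comm]

lemma card_ker_and_card_range_relativeTrace (hK : Fintype.card K = (p ^ m) ^ 2) :
    Nat.card (relativeTrace K p m).ker = p ^ m ∧ Nat.card (relativeTrace K p m).range = p ^ m := by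
  have hq : 1 < p ^ m := (one_lt_sq_iff₀ (Nat.zero_le _)).1 (hK ▸ Fintype.one_lt_card)
  have hker : Nat.card (relativeTrace K p m).ker ≤ p ^ m := by
    refine (Set.ncard_le_ncard fun x hx => ?_).trans (ncard_pow_add_mul_eq_zero_le hq (1 : K))
    simpa [relativeTrace_apply] using hx
  have hrange : Nat.card (relativeTrace K p m).range ≤ p ^ m := by
    refine (Set.ncard_le_ncard ?_).trans (ncard_pow_add_mul_eq_zero_le hq (-1 : K))
    rintro _ ⟨x, rfl⟩
    simp [relativeTrace_pow_eq_self hK]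
  rw [← mul_eq_mul_iff_eq_and_eq_of_pos hker hrange Nat.card_pos (by positivity),
    card_ker_mul_card_range, Nat.card_eq_fintype_card, hK, sq]

end RelativeTrace

theorem stmt_17_general (K : Type*) [Field K] [Fintype K] (p m j : ℕ) [ExpChar K p]
    (hK : Fintype.card K = (p ^ m) ^ 2) (δ : K → ℕ)
    (hδ : ∀ b : K,
      δ b = {x : K | (x + 1) ^ (p ^ j * (p ^ m + 1)) - x ^ (p ^ j * (p ^ m + 1)) = b}.ncard) :
    {b : K | δ b = 0}.ncard = (p ^ m) ^ 2 - p ^ m ∧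
    {b : K | δ b = p ^ m}.ncard = p ^ m ∧
    (∀ b : K, δ b = 0 ∨ δ b = p ^ m) := by
  obtain ⟨hker, hrange⟩ := card_ker_and_card_range_relativeTrace hK
  let g : K → K := fun y => (y + 1) ^ p ^ j
  have hg : Function.Injective g := (iterateFrobenius_inj K p j).comp (add_left_injective 1)
  let D : K → K := g ∘ relativeTrace K p m
  have hδD (b : K) : δ b = (D ⁻¹' {b}).ncard := by
    simp only [hδ, add_one_pow_sub_pow_eq_relativeTrace]
    rfl
  have hq : p ^ m ≠ 0 := hker ▸ Nat.card_pos.ne'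
  have hmem {b : K} (hb : b ∈ Set.range D) : δ b = p ^ m := by
    rw [hδD, ncard_preimage_comp_singleton_of_mem_range _ hg hb, hker]
  have hnotMem {b : K} (hb : b ∉ Set.range D) : δ b = 0 := by
    rw [hδD, Set.preimage_singleton_eq_empty.2 hb, Set.ncard_empty]
  have hfull : {b : K | δ b = p ^ m} = Set.range D :=
    Set.ext fun b => ⟨fun h => by_contra fun hb => hq (h.symm.trans (hnotMem hb)), hmem⟩
  have hempty : {b : K | δ b = 0} = (Set.range D)ᶜ :=
    Set.ext fun b => ⟨fun h hb => hq ((hmem hb).symm.trans h), hnotMem⟩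
  have hcard : (Set.range D).ncard = p ^ m := (ncard_range_comp_of_injective _ hg).trans hrange
  refine ⟨?_, hfull ▸ hcard, fun b => (em (b ∈ Set.range D)).elim (.inr ∘ hmem) (.inl ∘ hnotMem)⟩
  rw [hempty, Set.ncard_compl, hcard, Nat.card_eq_fintype_card, hK]

/-- For F(x) = x^{10} over F_16, exactly 12 elements b have
δ(1,b) = 0, exactly 4 elements have δ(1,b) = 4, and no other value occurs. -/
theorem stmt_17 (K : Type*) [Field K] [Fintype K] (hK : Fintype.card K = 16)
    (δ : K → ℕ) (hδ : ∀ b : K, δ b = {x : K | (x + 1) ^ 10 + x ^ 10 = b}.ncard) :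
    {b : K | δ b = 0}.ncard = 12 ∧
    {b : K | δ b = 4}.ncard = 4 ∧
    (∀ b : K, δ b = 0 ∨ δ b = 4) := by
  have : CharP K 2 := charP_of_card_eq_prime_pow (f := 4) hK
  exact stmt_17_general K 2 2 1 hK δ (by simpa [CharTwo.sub_eq_add] using hδ)
end

section
/- Let q = 2^m where m is a positive even integer, and let d = 3q - 2. Suppose b ∈ F_{q^2} with b ≠ 1, and suppose x ∈ F_{q^2} \ F_2 satisfies (x + 1)^d + x^d = b. Then there exist u_1, u_2 ∈ U_{q+1} = {z ∈ F_{q^2} : z^{q+1} = 1} with u_1 ≠ u_2 such that, setting t = u_1 + u_2, one has b = (t^2 + t·(t^q)^{-1} + t^2·(t^q)^{-1})^2 and x = ((u_1 + 1)/(u_1 + u_2))^2. -/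
/-!
Put `u = (x + 1) ^ (q - 1)` and `v = x ^ (q - 1)`, both of norm one. Since `a ↦ a ^ q` is additive,
`u * (x + 1) = v * x + 1`, which in characteristic two says `(u + v) * x = u + 1`. If `u = v`, then
`u = v = 1` and `(x + 1) ^ (3 * q - 2) + x ^ (3 * q - 2) = (x + 1) + x = 1`. Otherwise
`x = (u + 1) / (u + v)`, and substituting this into `u ^ 3 * (x + 1) + v ^ 3 * x` gives
`t ^ 2 + u * v + t * (u * v)` with `t = u + v`, where `u * v = t / t ^ q`. The outer squares in the
theorem come from applying this to the square root of `x`.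
-/

lemma pow_three_mul_sub_two {M : Type*} [Monoid M] {q : ℕ} (hq : 0 < q) (a : M) :
    a ^ (3 * q - 2) = (a ^ (q - 1)) ^ 3 * a := by
  rw [← pow_mul, ← pow_succ]
  congr 1
  omega

lemma pow_sub_one_pow_add_one_eq_one {G : Type*} [GroupWithZero G] {q : ℕ} (hq : 0 < q) {a : G}
    (ha : a ≠ 0) (haq : a ^ q ^ 2 = a) : (a ^ (q - 1)) ^ (q + 1) = 1 := by
  have hexp : (q - 1) * (q + 1) + 1 = q ^ 2 := by
    obtain ⟨k, rfl⟩ := Nat.exists_eq_add_one.mpr hq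
    rw [Nat.add_sub_cancel]
    ring
  rw [← mul_eq_right₀ ha, ← pow_mul, ← pow_succ, hexp, haq]

lemma add_mul_inv_add_pow_expChar_pow {K : Type*} [Field K] (p n : ℕ) [ExpChar K p] {u v : K}
    (hu : u ^ (p ^ n + 1) = 1) (hv : v ^ (p ^ n + 1) = 1) (huv : u + v ≠ 0) :
    (u + v) * ((u + v) ^ p ^ n)⁻¹ = u * v := by
  rw [← div_eq_mul_inv, div_eq_iff (pow_ne_zero _ huv), add_pow_expChar_pow]
  linear_combination -v * hu - u * hv

section CharTwo

variable {R : Type*} [CommRing R] [CharP R 2] {u v x : R}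

lemma add_mul_eq_add_one (h : u * (x + 1) = v * x + 1) : (u + v) * x = u + 1 := by
  linear_combination h + (v * x - u) * CharTwo.two_eq_zero (R := R)

lemma add_ne_zero_of_cube_mul_add_one_add_cube_mul_ne_one (hx : (u + v) * x = u + 1)
    (hne : u ^ 3 * (x + 1) + v ^ 3 * x ≠ 1) : u + v ≠ 0 := by
  intro huv
  have hu : u = 1 := CharTwo.add_eq_zero.mp (by rw [← hx, huv, zero_mul])
  have hv : v = 1 := (CharTwo.add_eq_zero.mp huv).symm.trans hu
  apply hne
  rw [hu, hv, one_pow, one_mul, one_mul, add_right_comm, CharTwo.add_self_eq_zero, zero_add]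

lemma cube_mul_add_one_add_cube_mul [IsDomain R] (huv : u + v ≠ 0) (hx : (u + v) * x = u + 1) :
    u ^ 3 * (x + 1) + v ^ 3 * x = (u + v) ^ 2 + u * v + (u + v) * (u * v) := by
  have hx1 : (u + v) * (x + 1) = v + 1 := by
    linear_combination hx + u * CharTwo.two_eq_zero (R := R)
  apply mul_left_cancel₀ huv
  calc (u + v) * (u ^ 3 * (x + 1) + v ^ 3 * x)
      = u ^ 3 * (v + 1) + v ^ 3 * (u + 1) := by rw [← hx1, ← hx]; ring
    _ = (u + v) * ((u + v) ^ 2 + u * v + (u + v) * (u * v)) := by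
      linear_combination -(2 * u * v * (u + v) + (u * v) ^ 2) * CharTwo.two_eq_zero (R := R)

end CharTwo

section FixedByPowSq

variable {K : Type*} [Field K] [CharP K 2]

lemma exists_norm_one_parametrization {m q : ℕ} (hq : q = 2 ^ m) {x : K}
    (hxq : x ^ q ^ 2 = x) (hx0 : x ≠ 0) (hx1 : x ≠ 1)
    (hne : (x + 1) ^ (3 * q - 2) + x ^ (3 * q - 2) ≠ 1) :
    ∃ u v : K, u ^ (q + 1) = 1 ∧ v ^ (q + 1) = 1 ∧ u ≠ v ∧
      (x + 1) ^ (3 * q - 2) + x ^ (3 * q - 2) =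
        (u + v) ^ 2 + (u + v) * ((u + v) ^ q)⁻¹ + (u + v) ^ 2 * ((u + v) ^ q)⁻¹ ∧
      x = (u + 1) / (u + v) := by
  have hqpos : 0 < q := hq ▸ Nat.two_pow_pos m
  have hadd (a : K) : (a + 1) ^ q = a ^ q + 1 := by
    rw [hq, add_pow_char_pow, one_pow]
  have hx1' : x + 1 ≠ 0 := mt CharTwo.add_eq_zero.mp hx1
  have hx1q : (x + 1) ^ q ^ 2 = x + 1 := by rw [sq, pow_mul, hadd, hadd, ← pow_mul, ← sq, hxq]
  simp only [pow_three_mul_sub_two hqpos] at hne ⊢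
  have hu : ((x + 1) ^ (q - 1)) ^ (q + 1) = 1 :=
    pow_sub_one_pow_add_one_eq_one hqpos hx1' hx1q
  have hv : (x ^ (q - 1)) ^ (q + 1) = 1 := pow_sub_one_pow_add_one_eq_one hqpos hx0 hxq
  have hrel : (x + 1) ^ (q - 1) * (x + 1) = x ^ (q - 1) * x + 1 := by
    rw [pow_sub_one_mul hqpos.ne', pow_sub_one_mul hqpos.ne', hadd]
  generalize (x + 1) ^ (q - 1) = u at hne hu hrel ⊢
  generalize x ^ (q - 1) = v at hne hv hrel ⊢
  have hx : (u + v) * x = u + 1 := add_mul_eq_add_one hrel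
  have huv : u + v ≠ 0 := add_ne_zero_of_cube_mul_add_one_add_cube_mul_ne_one hx hne
  refine ⟨u, v, hu, hv, mt CharTwo.add_eq_zero.mpr huv, ?_, ?_⟩
  · subst hq
    rw [cube_mul_add_one_add_cube_mul huv hx, sq (u + v), mul_assoc,
      add_mul_inv_add_pow_expChar_pow 2 m hu hv huv]
  · rw [eq_div_iff huv, mul_comm, hx]

theorem stmt_19_general {m : ℕ} (hm : 0 < m) {q : ℕ} (hq : q = 2 ^ m) {b x : K} (hb : b ≠ 1)
    (hxq : x ^ q ^ 2 = x) (hx0 : x ≠ 0) (hx1 : x ≠ 1)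
    (hxb : (x + 1) ^ (3 * q - 2) + x ^ (3 * q - 2) = b) :
    ∃ u₁ u₂ : K, u₁ ^ (q + 1) = 1 ∧ u₂ ^ (q + 1) = 1 ∧ u₁ ≠ u₂ ∧
      (∀ t : K, t = u₁ + u₂ →
        b = (t ^ 2 + t * (t ^ q)⁻¹ + t ^ 2 * (t ^ q)⁻¹) ^ 2) ∧
      x = ((u₁ + 1) / (u₁ + u₂)) ^ 2 := by
  obtain ⟨y, rfl⟩ : ∃ y, x = y ^ 2 := by
    have hqe : Even (q ^ 2) := by simp [hq, hm.ne', parity_simps]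
    exact (isSquare_iff_exists_sq x).mp (hxq ▸ hqe.isSquare_pow x)
  have hyq : y ^ q ^ 2 = y := CharTwo.sq_inj.mp (by rw [pow_right_comm, hxq])
  have hyb : ((y + 1) ^ (3 * q - 2) + y ^ (3 * q - 2)) ^ 2 = b := by
    rw [← hxb, CharTwo.add_sq, pow_right_comm, pow_right_comm y, CharTwo.add_sq, one_pow]
  have hy1 : (y + 1) ^ (3 * q - 2) + y ^ (3 * q - 2) ≠ 1 := by
    intro h
    exact hb (by rw [← hyb, h, one_pow])
  obtain ⟨u₁, u₂, hu₁, hu₂, hne, hform, hy⟩ := exists_norm_one_parametrization hq hyq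
    (by rintro rfl; simp at hx0) (by rintro rfl; simp at hx1) hy1
  refine ⟨u₁, u₂, hu₁, hu₂, hne, ?_, congrArg (· ^ 2) hy⟩
  rintro t rfl
  rw [← hyb, hform]

end FixedByPowSq

/-- For q = 2^m (m positive even), d = 3q-2, b ≠ 1, and a solution
x ∉ F_2 of (x+1)^d + x^d = b, there are distinct u₁, u₂ ∈ U_{q+1} such that with
t = u₁ + u₂ one has b = (t² + t·(t^q)⁻¹ + t²·(t^q)⁻¹)² and x = ((u₁+1)/(u₁+u₂))². -/
theorem stmt_19 (m : ℕ) (hm : 0 < m) (hme : Even m) (q : ℕ) (hq : q = 2 ^ m)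
    (K : Type*) [Field K] [Fintype K] [CharP K 2] (hK : Fintype.card K = q ^ 2)
    (b : K) (hb : b ≠ 1) (x : K) (hx0 : x ≠ 0) (hx1 : x ≠ 1)
    (hxb : (x + 1) ^ (3 * q - 2) + x ^ (3 * q - 2) = b) :
    ∃ u₁ u₂ : K, u₁ ^ (q + 1) = 1 ∧ u₂ ^ (q + 1) = 1 ∧ u₁ ≠ u₂ ∧
      (∀ t : K, t = u₁ + u₂ →
        b = (t ^ 2 + t * (t ^ q)⁻¹ + t ^ 2 * (t ^ q)⁻¹) ^ 2) ∧
      x = ((u₁ + 1) / (u₁ + u₂)) ^ 2 :=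
  stmt_19_general hm hq hb (hK ▸ FiniteField.pow_card x) hx0 hx1 hxb
end
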